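/- Let G and G' be two finitely generated co-Hopfian virtually free groups whose outer automorphism groups Out(G) and Out(G') are finite. Then the following are equivalent: (1) G and G' are ∃-equivalent; (2) G and G' are elementarily equivalent; (3) G and G' are isomorphic. -/

import Mathlib

open FirstOrder Language

/-- Function symbols of the first-order language of groups:
a binary multiplication, a unary inverse and a constant for the identity. -/
inductive GroupFunc : ℕ → Type
  | mul : GroupFunc 2
  | inv : GroupFunc 1
  | one : GroupFunc 0

/-- The first-order language of groups. -/
def groupLang : FirstOrder.Language :=
  { Functions := GroupFunc
    Relations := fun _ => Empty }

/-- Every group is a structure for the language of groups in the natural way. -/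
instance groupLangStructure (G : Type*) [Group G] : groupLang.Structure G where
  funMap {n} f v :=
    match f with
    | .mul => v 0 * v 1
    | .inv => (v 0)⁻¹
    | .one => 1
  RelMap {n} r _ := r.elim

/-- Existential formulas: iterated existential quantifications of a
quantifier-free formula. -/
inductive IsExistentialQF {α : Type*} : ∀ {n : ℕ}, groupLang.BoundedFormula α n → Prop
  | of_isQF {n : ℕ} {φ : groupLang.BoundedFormula α n} (h : φ.IsQF) : IsExistentialQF φ
  | ex {n : ℕ} {φ : groupLang.BoundedFormula α (n + 1)} (h : IsExistentialQF φ) :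
      IsExistentialQF φ.ex

/-- Universal formulas: iterated universal quantifications of a
quantifier-free formula. -/
inductive IsUniversalQF {α : Type*} : ∀ {n : ℕ}, groupLang.BoundedFormula α n → Prop
  | of_isQF {n : ℕ} {φ : groupLang.BoundedFormula α n} (h : φ.IsQF) : IsUniversalQF φ
  | all {n : ℕ} {φ : groupLang.BoundedFormula α (n + 1)} (h : IsUniversalQF φ) :
      IsUniversalQF φ.all

/-- ∀∃-formulas: iterated universal quantifications of an existential formula. -/
inductive IsAE {α : Type*} : ∀ {n : ℕ}, groupLang.BoundedFormula α n → Prop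
  | of_existential {n : ℕ} {φ : groupLang.BoundedFormula α n} (h : IsExistentialQF φ) : IsAE φ
  | all {n : ℕ} {φ : groupLang.BoundedFormula α (n + 1)} (h : IsAE φ) : IsAE φ.all

/-- A group is virtually free if it has a free subgroup of finite index. -/
def VirtuallyFree (G : Type*) [Group G] : Prop :=
  ∃ H : Subgroup G, H.FiniteIndex ∧ Nonempty (IsFreeGroup H)

/-- A group is co-Hopfian if every injective endomorphism is surjective. -/
def CoHopfian (G : Type*) [Group G] : Prop :=
  ∀ φ : G →* G, Function.Injective φ → Function.Surjective φ

/-- Two homomorphisms `φ, φ' : G → G'` are equivalent if they coincide up to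
conjugation on every finite subgroup of `G`. -/
def HomEquiv {G G' : Type*} [Group G] [Group G'] (φ φ' : G →* G') : Prop :=
  ∀ H : Subgroup G, (H : Set G).Finite →
    ∃ g' : G', ∀ h ∈ H, φ' h = g' * φ h * g'⁻¹

/-- Two groups are ∀∃-equivalent if they satisfy the same ∀∃-sentences. -/
def AEEquivalent (G : Type*) (G' : Type*) [Group G] [Group G'] : Prop :=
  ∀ φ : groupLang.Sentence, IsAE φ → (G ⊨ φ ↔ G' ⊨ φ)

/-- Two groups are ∃-equivalent if they satisfy the same existential sentences. -/
def ExistentiallyEquivalent (G : Type*) (G' : Type*) [Group G] [Group G'] : Prop :=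
  ∀ φ : groupLang.Sentence, IsExistentialQF φ → (G ⊨ φ ↔ G' ⊨ φ)

/-- An endomorphism is rigid-testing: `G` is rigid if every endomorphism
equivalent to the identity is an automorphism. -/
def Rigid (G : Type*) [Group G] : Prop :=
  ∀ φ : G →* G, HomEquiv φ (MonoidHom.id G) → Function.Bijective φ

/-- `Out G` is finite, expressed as: the inner automorphisms form a finite index
subgroup of `Aut G`. -/
def OutFinite (G : Type*) [Group G] : Prop :=
  (MulAut.conj : G →* MulAut G).range.FiniteIndex

/-- Iterated composition of an endomorphism. -/
def homPow {G : Type*} [Group G] (φ : G →* G) : ℕ → (G →* G)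
  | 0 => MonoidHom.id G
  | n + 1 => φ.comp (homPow φ n)

/-- An endomorphism `φ` of `G` is class-permuting if some positive power of `φ`
is equivalent to the identity of `G`. -/
def ClassPermuting {G : Type*} [Group G] (φ : G →* G) : Prop :=
  ∃ n : ℕ, 1 ≤ n ∧ HomEquiv (homPow φ n) (MonoidHom.id G)

/-- A maximal finite subgroup: a finite subgroup maximal with respect to
inclusion among finite subgroups. -/
def MaximalFiniteSubgroup {G : Type*} [Group G] (A : Subgroup G) : Prop :=
  (A : Set G).Finite ∧ ∀ B : Subgroup G, (B : Set G).Finite → A ≤ B → A = B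

/-- Two subgroups are conjugate. -/
def SubgroupConj {G : Type*} [Group G] (A B : Subgroup G) : Prop :=
  ∃ g : G, B = A.map (MulAut.conj g).toMonoidHom

/-- A group is strongly co-Hopfian if there is a finite subset `F` of
`G \ {1}` such that every endomorphism whose kernel misses `F` is an
automorphism. -/
def StronglyCoHopfian (G : Type*) [Group G] : Prop :=
  ∃ F : Finset G, (1 : G) ∉ F ∧
    ∀ φ : G →* G, (∀ f ∈ F, φ f ≠ 1) → Function.Bijective φ

/-- A group is finitely presented. -/
def GroupFinitelyPresented (G : Type*) [Group G] : Prop :=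
  ∃ (n : ℕ) (rels : Finset (FreeGroup (Fin n))),
    Nonempty (PresentedGroup (rels : Set (FreeGroup (Fin n))) ≃* G)


namespace VF
open Set

/-- Edge boundary. -/
def bd {V : Type*} (Γ : SimpleGraph V) (C : Set V) : Set (Sym2 V) :=
  {e | ∃ x y, Γ.Adj x y ∧ x ∈ C ∧ y ∉ C ∧ e = s(x, y)}

/-- Connected set of vertices (or empty). -/
def CC {V : Type*} (Γ : SimpleGraph V) (C : Set V) : Prop :=
  ∀ A ⊆ C, A.Nonempty → (∀ x ∈ A, ∀ y ∈ C, Γ.Adj x y → y ∈ A) → A = C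

theorem mem_bd {V : Type*} {Γ : SimpleGraph V} {C : Set V} {x y : V} :
    s(x, y) ∈ bd Γ C ↔ Γ.Adj x y ∧ ¬ (x ∈ C ↔ y ∈ C) := by
  constructor
  · rintro ⟨a, b, hab, ha, hb, he⟩
    rw [Sym2.eq_iff] at he
    rcases he with ⟨rfl, rfl⟩ | ⟨rfl, rfl⟩
    · exact ⟨hab, by tauto⟩
    · exact ⟨hab.symm, by tauto⟩
  · rintro ⟨h, hn⟩
    by_cases hx : x ∈ C
    · exact ⟨x, y, h, hx, by tauto, rfl⟩
    · exact ⟨y, x, h.symm, by tauto, hx, Sym2.eq_swap⟩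

theorem bd_compl {V : Type*} (Γ : SimpleGraph V) (C : Set V) : bd Γ Cᶜ = bd Γ C := by
  ext e
  induction e with | _ x y => 
  simp only [mem_bd, mem_compl_iff]; tauto

theorem CC.subset_reach {V : Type*} {Γ : SimpleGraph V} {C : Set V} (h : CC Γ C)
    {E0 : Set (Sym2 V)} (hE : E0 ⊆ bd Γ C) {x : V} (hx : x ∈ C) :
    C ⊆ {z | (Γ.deleteEdges E0).Reachable x z} := by
  have := h {z | z ∈ C ∧ (Γ.deleteEdges E0).Reachable x z} (fun z hz => hz.1)
    ⟨x, hx, SimpleGraph.Reachable.refl _⟩ (by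
      rintro u ⟨hu, hr⟩ w hw hadj
      refine ⟨hw, hr.trans (SimpleGraph.Adj.reachable ?_)⟩
      rw [SimpleGraph.deleteEdges_adj]
      refine ⟨hadj, fun hmem => ?_⟩
      have := (mem_bd.1 (hE hmem)).2
      tauto)
  intro z hz
  rw [← this] at hz
  exact hz.2

theorem finite_cuts_aux {V : Type*} (Γ : SimpleGraph V) (x y : V) (j : ℕ) :
    ∀ E0 : Set (Sym2 V), {C : Set V | CC Γ C ∧ CC Γ Cᶜ ∧ x ∈ C ∧ y ∉ C ∧ E0 ⊆ bd Γ C ∧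
      (bd Γ C).Finite ∧ (bd Γ C \ E0).ncard ≤ j}.Finite := by
  induction j with
  | zero =>
    intro E0
    by_cases hr : (Γ.deleteEdges E0).Reachable x y
    · obtain ⟨p⟩ := hr
      convert Set.finite_empty
      rw [Set.eq_empty_iff_forall_notMem]
      rintro C ⟨h1, h2, hx, hy, hE, hf, hc⟩
      obtain ⟨d, hd, hd1, hd2⟩ := p.exists_boundary_dart C hx hy
      have had := d.adj
      rw [SimpleGraph.deleteEdges_adj] at had
      have : s(d.fst, d.snd) ∈ bd Γ C \ E0 := ⟨mem_bd.2 ⟨had.1, by tauto⟩, had.2⟩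
      have h0 : bd Γ C \ E0 = ∅ := by
        rw [← Set.ncard_eq_zero (hf.subset sdiff_subset)]; omega
      rw [h0] at this
      exact this
    · refine (Set.finite_singleton {z | (Γ.deleteEdges E0).Reachable x z}).subset ?_
      rintro C ⟨h1, h2, hx, hy, hE, hf, hc⟩
      refine Subset.antisymm (h1.subset_reach hE hx) ?_
      intro z hz
      by_contra hzC
      exact hr (hz.trans (h2.subset_reach (by rwa [bd_compl]) (x := y) hy hzC).symm)
  | succ j ih =>
    intro E0
    by_cases hr : (Γ.deleteEdges E0).Reachable x y
    · obtain ⟨p⟩ := hr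
      refine ((p.edges.finite_toSet).biUnion
        (t := fun e => _) (fun e _ => ih (insert e E0))).subset ?_
      rintro C ⟨h1, h2, hx, hy, hE, hf, hc⟩
      obtain ⟨d, hd, hd1, hd2⟩ := p.exists_boundary_dart C hx hy
      have had := d.adj
      rw [SimpleGraph.deleteEdges_adj] at had
      have hmem : s(d.fst, d.snd) ∈ bd Γ C \ E0 := ⟨mem_bd.2 ⟨had.1, by tauto⟩, had.2⟩
      simp only [Set.mem_iUnion]
      refine ⟨s(d.fst, d.snd), ?_, h1, h2, hx, hy, ?_, hf, ?_⟩
      · exact List.mem_map_of_mem (f := SimpleGraph.Dart.edge) hd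
      · exact Set.insert_subset hmem.1 hE
      · have : bd Γ C \ insert s(d.fst, d.snd) E0 = (bd Γ C \ E0) \ {s(d.fst, d.snd)} := by
          ext e; simp only [mem_sdiff, mem_insert_iff, mem_singleton_iff]; tauto
        rw [this]
        have := Set.ncard_sdiff_singleton_lt_of_mem hmem (hf.subset sdiff_subset)
        omega
    · refine (Set.finite_singleton {z | (Γ.deleteEdges E0).Reachable x z}).subset ?_
      rintro C ⟨h1, h2, hx, hy, hE, hf, hc⟩
      refine Subset.antisymm (h1.subset_reach hE hx) ?_
      intro z hz
      by_contra hzC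
      exact hr (hz.trans (h2.subset_reach (by rwa [bd_compl]) (x := y) hy hzC).symm)

theorem finite_cuts {V : Type*} (Γ : SimpleGraph V) (x y : V) (k : ℕ) :
    {C : Set V | CC Γ C ∧ CC Γ Cᶜ ∧ x ∈ C ∧ y ∉ C ∧
      (bd Γ C).Finite ∧ (bd Γ C).ncard ≤ k}.Finite := by
  refine (finite_cuts_aux Γ x y k ∅).subset ?_
  rintro C ⟨h1, h2, hx, hy, hf, hc⟩
  exact ⟨h1, h2, hx, hy, Set.empty_subset _, hf, by simpa using hc⟩

/-- Two-set counting inequality. -/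
theorem ncard_corner {α : Type*} {A B P Q : Set α} (hP : P.Finite) (hQ : Q.Finite)
    (h1 : A ∪ B ⊆ P ∪ Q) (h2 : A ∩ B ⊆ P ∩ Q) : A.ncard + B.ncard ≤ P.ncard + Q.ncard := by
  have hfin : (A ∪ B).Finite := (hP.union hQ).subset h1
  have hA : A.Finite := hfin.subset subset_union_left
  have hB : B.Finite := hfin.subset subset_union_right
  rw [← Set.ncard_union_add_ncard_inter A B hA hB, ← Set.ncard_union_add_ncard_inter P Q hP hQ]
  exact Nat.add_le_add (Set.ncard_le_ncard h1 (hP.union hQ))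
    (Set.ncard_le_ncard h2 (hP.subset inter_subset_left))

theorem ncard_corner_lt {α : Type*} {A B P Q : Set α} (hP : P.Finite) (hQ : Q.Finite)
    (h1 : A ∪ B ⊆ P ∪ Q) (h2 : A ∩ B ⊆ P ∩ Q) {z : α} (hz : z ∈ P ∪ Q) (hz' : z ∉ A ∪ B) :
    A.ncard + B.ncard < P.ncard + Q.ncard := by
  have hfin : (A ∪ B).Finite := (hP.union hQ).subset h1
  have hA : A.Finite := hfin.subset subset_union_left
  have hB : B.Finite := hfin.subset subset_union_right
  rw [← Set.ncard_union_add_ncard_inter A B hA hB, ← Set.ncard_union_add_ncard_inter P Q hP hQ]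
  refine Nat.add_lt_add_of_lt_of_le (Set.ncard_lt_ncard ⟨h1, fun h => hz' (h hz)⟩ (hP.union hQ))
    (Set.ncard_le_ncard h2 (hP.subset inter_subset_left))

theorem bd_corner {V : Type*} (Γ : SimpleGraph V) {C D : Set V} (hC : (bd Γ C).Finite)
    (hD : (bd Γ D).Finite) :
    (bd Γ (C ∩ D)).ncard + (bd Γ (Cᶜ ∩ Dᶜ)).ncard ≤ (bd Γ C).ncard + (bd Γ D).ncard := by
  apply ncard_corner hC hD
  · intro e
    induction e with | _ x y =>
    simp only [mem_union, mem_bd, mem_inter_iff, mem_compl_iff]; tauto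
  · intro e
    induction e with | _ x y =>
    simp only [mem_bd, mem_inter_iff, mem_compl_iff]; tauto

theorem bd_inter_finite {V : Type*} (Γ : SimpleGraph V) {C D : Set V} (hC : (bd Γ C).Finite)
    (hD : (bd Γ D).Finite) : (bd Γ (C ∩ D)).Finite := by
  refine (hC.union hD).subset ?_
  intro e
  induction e with | _ x y =>
  simp only [mem_union, mem_bd, mem_inter_iff]; tauto

end VF


namespace VF
open Set Filter

variable {V : Type*}

/-- A set splits a pair of filters. -/
def Spl (C : Set V) (α : Filter V × Filter V) : Prop :=
  (C ∈ α.1 ∧ Cᶜ ∈ α.2) ∨ (Cᶜ ∈ α.1 ∧ C ∈ α.2)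

theorem Spl.compl {C : Set V} {α : Filter V × Filter V} (h : Spl C α) : Spl Cᶜ α := by
  rcases h with h | h
  · exact Or.inr ⟨by simpa using h.1, h.2⟩
  · exact Or.inl ⟨h.1, by simpa using h.2⟩

/-- Deciding filter. -/
def Dec (Γ : SimpleGraph V) (p : Filter V) : Prop :=
  p.NeBot ∧ ∀ C : Set V, (bd Γ C).Finite → C ∈ p ∨ Cᶜ ∈ p

def Cmin (Γ : SimpleGraph V) (α : Filter V × Filter V) : Set (Set V) :=
  {C | (bd Γ C).Finite ∧ Spl C α ∧
    ∀ D, (bd Γ D).Finite → Spl D α → (bd Γ C).ncard ≤ (bd Γ D).ncard}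

theorem Cmin_compl {Γ : SimpleGraph V} {α : Filter V × Filter V} {C : Set V}
    (h : C ∈ Cmin Γ α) : Cᶜ ∈ Cmin Γ α := by
  refine ⟨by rw [bd_compl]; exact h.1, h.2.1.compl, ?_⟩
  rw [bd_compl]; exact h.2.2

theorem bd_nonempty {Γ : SimpleGraph V} (hΓ : Γ.Preconnected) {S : Set V} {x y : V}
    (hx : x ∈ S) (hy : y ∉ S) : ∃ u v, Γ.Adj u v ∧ u ∈ S ∧ v ∉ S := by
  obtain ⟨p⟩ := hΓ x y
  obtain ⟨d, _, h1, h2⟩ := p.exists_boundary_dart S hx hy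
  exact ⟨d.fst, d.snd, d.adj, h1, h2⟩

theorem Cmin_CC_aux {Γ : SimpleGraph V} (hΓ : Γ.Preconnected) {p q : Filter V}
    {C A : Set V} (hCf : (bd Γ C).Finite)
    (hmin : ∀ D, (bd Γ D).Finite → Spl D (p, q) → (bd Γ C).ncard ≤ (bd Γ D).ncard)
    (hA : A ⊆ C) (hAne : A.Nonempty) (hcl : ∀ x ∈ A, ∀ y ∈ C, Γ.Adj x y → y ∈ A)
    (hne : A ≠ C) (hs : Spl A (p, q)) : False := by
  have hsub : bd Γ A ⊆ bd Γ C := by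
    rintro _ ⟨x, y, hxy, hx, hy, rfl⟩
    exact ⟨x, y, hxy, hA hx, fun h => hy (hcl x hx y h hxy), rfl⟩
  obtain ⟨z, hz⟩ : ∃ z, z ∈ C \ A := by
    by_contra hcon
    push Not at hcon
    apply hne
    apply Subset.antisymm hA
    intro z hz
    by_contra hzA
    exact hcon z ⟨hz, hzA⟩
  obtain ⟨a, ha⟩ := hAne
  obtain ⟨u, v, huv, hu, hv⟩ := bd_nonempty hΓ (S := C \ A) hz (fun h => h.2 ha)
  have hvA : v ∉ A := fun h => hu.2 (hcl v h u hu.1 huv.symm)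
  have hvC : v ∉ C := fun h => hv ⟨h, hvA⟩
  have h1 : s(u, v) ∈ bd Γ C := mem_bd.2 ⟨huv, fun h => hvC (h.1 hu.1)⟩
  have h2 : s(u, v) ∉ bd Γ A := fun h => (mem_bd.1 h).2 (by have := hu.2; tauto)
  have := Set.ncard_lt_ncard (s := bd Γ A) ⟨hsub, fun h => h2 (h h1)⟩ hCf
  have := hmin A (hCf.subset hsub) hs
  omega

theorem Cmin_CC {Γ : SimpleGraph V} (hΓ : Γ.Preconnected) {α : Filter V × Filter V}
    (h1 : Dec Γ α.1) (h2 : Dec Γ α.2) {C : Set V} (h : C ∈ Cmin Γ α) : CC Γ C := by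
  obtain ⟨p, q⟩ := α
  intro A hA hAne hcl
  by_contra hne
  obtain ⟨hf, hs, hm⟩ := h
  have hsubA : bd Γ A ⊆ bd Γ C := by
    rintro _ ⟨x, y, hxy, hx, hy, rfl⟩
    exact ⟨x, y, hxy, hA hx, fun h => hy (hcl x hx y h hxy), rfl⟩
  have hAf := hf.subset hsubA
  have hAc : Cᶜ ⊆ Aᶜ := compl_subset_compl.2 hA
  have hBc : Cᶜ ⊆ (C \ A)ᶜ := compl_subset_compl.2 sdiff_subset
  have hBeq : C ∩ Aᶜ = C \ A := rfl
  have key : Spl A (p, q) ∨ Spl (C \ A) (p, q) := by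
    rcases hs with ⟨a, b⟩ | ⟨a, b⟩
    · rcases h1.2 A hAf with h | h
      · exact Or.inl (Or.inl ⟨h, mem_of_superset b hAc⟩)
      · exact Or.inr (Or.inl ⟨inter_mem a h, mem_of_superset b hBc⟩)
    · rcases h2.2 A hAf with h | h
      · exact Or.inl (Or.inr ⟨mem_of_superset a hAc, h⟩)
      · exact Or.inr (Or.inr ⟨mem_of_superset a hBc, inter_mem b h⟩)
  rcases key with hk | hk
  · exact Cmin_CC_aux hΓ hf hm hA hAne hcl hne hk
  · refine Cmin_CC_aux hΓ hf hm (A := C \ A) sdiff_subset ?_ ?_ ?_ hk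
    · by_contra hcon
      rw [Set.not_nonempty_iff_eq_empty, sdiff_eq_empty] at hcon
      exact hne (Subset.antisymm hA hcon)
    · intro x hx y hy hxy
      exact ⟨hy, fun h => hx.2 (hcl y h x hx.1 hxy.symm)⟩
    · intro heq
      obtain ⟨a, ha⟩ := hAne
      have h3 := hA ha
      rw [← heq] at h3
      exact h3.2 ha

/-- The two sets cross. -/
def Crs (F C : Set V) : Prop :=
  (F ∩ C).Nonempty ∧ (F ∩ Cᶜ).Nonempty ∧ (Fᶜ ∩ C).Nonempty ∧ (Fᶜ ∩ Cᶜ).Nonempty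

theorem Crs.symm {F C : Set V} (h : Crs F C) : Crs C F := by
  unfold Crs at *; simp only [inter_comm C, inter_comm Cᶜ]; tauto

theorem Crs.compl_right {F C : Set V} (h : Crs F C) : Crs F Cᶜ := by
  unfold Crs at *; simp only [_root_.compl_compl]; tauto

theorem Crs.compl_left {F C : Set V} (h : Crs F C) : Crs Fᶜ C := by
  unfold Crs at *; simp only [_root_.compl_compl]; tauto

/-- Union of all minimal cuts. -/
def CU (Γ : SimpleGraph V) (𝒜 : Set (Filter V × Filter V)) : Set (Set V) :=
  {C | ∃ α ∈ 𝒜, C ∈ Cmin Γ α}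

def XC (Γ : SimpleGraph V) (𝒜 : Set (Filter V × Filter V)) (C : Set V) : Set (Set V) :=
  {F | F ∈ CU Γ 𝒜 ∧ Crs F C}

/-- Standing hypotheses. -/
structure Std (Γ : SimpleGraph V) (𝒜 : Set (Filter V × Filter V)) (k : ℕ) : Prop where
  conn : Γ.Preconnected
  dec1 : ∀ α ∈ 𝒜, Dec Γ α.1
  dec2 : ∀ α ∈ 𝒜, Dec Γ α.2
  bound : ∀ α ∈ 𝒜, ∃ C : Set V, (bd Γ C).Finite ∧ (bd Γ C).ncard ≤ k ∧ Spl C α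

theorem CU_prop {Γ : SimpleGraph V} {𝒜 : Set (Filter V × Filter V)} {k : ℕ}
    (h : Std Γ 𝒜 k) {C : Set V} (hC : C ∈ CU Γ 𝒜) :
    CC Γ C ∧ CC Γ Cᶜ ∧ (bd Γ C).Finite ∧ (bd Γ C).ncard ≤ k := by
  obtain ⟨α, hα, hC⟩ := hC
  refine ⟨Cmin_CC h.conn (h.dec1 α hα) (h.dec2 α hα) hC,
    Cmin_CC h.conn (h.dec1 α hα) (h.dec2 α hα) (Cmin_compl hC), hC.1, ?_⟩
  obtain ⟨D, h1, h2, h3⟩ := h.bound α hα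
  exact (hC.2.2 D h1 h3).trans h2

theorem CU_finite {Γ : SimpleGraph V} {𝒜 : Set (Filter V × Filter V)} {k : ℕ}
    (h : Std Γ 𝒜 k) (x y : V) : {C | C ∈ CU Γ 𝒜 ∧ x ∈ C ∧ y ∉ C}.Finite := by
  refine (finite_cuts Γ x y k).subset ?_
  rintro C ⟨hC, hx, hy⟩
  obtain ⟨h1, h2, h3, h4⟩ := CU_prop h hC
  exact ⟨h1, h2, hx, hy, h3, h4⟩

theorem CC.exists_bd {Γ : SimpleGraph V} {F C : Set V} (h : CC Γ F) (h1 : (F ∩ C).Nonempty)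
    (h2 : (F ∩ Cᶜ).Nonempty) : ∃ x y, x ∈ F ∧ s(x, y) ∈ bd Γ C := by
  by_contra hcon
  push Not at hcon
  have := h (F ∩ C) inter_subset_left h1 (by
    rintro x ⟨hxF, hxC⟩ y hy hxy
    refine ⟨hy, ?_⟩
    by_contra hyC
    exact hcon x y hxF (mem_bd.2 ⟨hxy, by tauto⟩))
  obtain ⟨z, hz, hz'⟩ := h2
  rw [← this] at hz
  exact hz' hz.2

theorem XC_finite {Γ : SimpleGraph V} {𝒜 : Set (Filter V × Filter V)} {k : ℕ}
    (h : Std Γ 𝒜 k) {C : Set V} (hC : (bd Γ C).Finite) : (XC Γ 𝒜 C).Finite := by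
  have hE : {x : V | ∃ y, s(x, y) ∈ bd Γ C}.Finite := by
    refine (hC.biUnion (t := fun e => {x | x ∈ e}) ?_).subset ?_
    · intro e _
      induction e with | _ a b =>
      refine ((Set.finite_singleton b).insert a).subset ?_
      intro x hx
      simpa using hx
    · rintro x ⟨y, hy⟩
      simp only [mem_iUnion]
      exact ⟨_, hy, by simp⟩
  refine ((hE.prod hE).biUnion (t := fun xy => {F | F ∈ CU Γ 𝒜 ∧ xy.1 ∈ F ∧ xy.2 ∉ F})
    (fun xy _ => CU_finite h xy.1 xy.2)).subset ?_
  rintro F ⟨hF, hc⟩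
  obtain ⟨h1, h2, -, -⟩ := CU_prop h hF
  obtain ⟨x, x', hx, hxx⟩ := h1.exists_bd hc.1 hc.2.1
  obtain ⟨y, y', hy, hyy⟩ := h2.exists_bd hc.2.2.1 hc.2.2.2
  simp only [mem_iUnion]
  exact ⟨(x, y), ⟨⟨x', hxx⟩, ⟨y', hyy⟩⟩, hF, hx, hy⟩

theorem XC_compl {Γ : SimpleGraph V} {𝒜 : Set (Filter V × Filter V)} (C : Set V) :
    XC Γ 𝒜 Cᶜ = XC Γ 𝒜 C := by
  ext F
  constructor
  · rintro ⟨h1, h2⟩; exact ⟨h1, by simpa using h2.compl_right⟩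
  · rintro ⟨h1, h2⟩; exact ⟨h1, h2.compl_right⟩

theorem XC_corner {Γ : SimpleGraph V} {𝒜 : Set (Filter V × Filter V)} {k : ℕ}
    (h : Std Γ 𝒜 k) {C D : Set V} (hC : C ∈ CU Γ 𝒜) (hD : D ∈ CU Γ 𝒜) (hCD : Crs C D) :
    (XC Γ 𝒜 (C ∩ D)).ncard + (XC Γ 𝒜 (Cᶜ ∩ Dᶜ)).ncard <
      (XC Γ 𝒜 C).ncard + (XC Γ 𝒜 D).ncard := by
  have aux : ∀ C D : Set V, (Cᶜ ∩ Dᶜ).Nonempty → XC Γ 𝒜 (C ∩ D) ⊆ XC Γ 𝒜 C ∪ XC Γ 𝒜 D := by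
    rintro C D ⟨w, hwC, hwD⟩ F ⟨hF, ⟨a, ha, haC, haD⟩, ⟨b, hb, hb'⟩, ⟨c, hc, hcC, hcD⟩, ⟨d, hd, hd'⟩⟩
    by_cases h1 : (F ∩ Cᶜ).Nonempty ∧ (Fᶜ ∩ Cᶜ).Nonempty
    · exact Or.inl ⟨hF, ⟨a, ha, haC⟩, h1.1, ⟨c, hc, hcC⟩, h1.2⟩
    by_cases h2 : (F ∩ Dᶜ).Nonempty ∧ (Fᶜ ∩ Dᶜ).Nonempty
    · exact Or.inr ⟨hF, ⟨a, ha, haD⟩, h2.1, ⟨c, hc, hcD⟩, h2.2⟩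
    exfalso
    simp only [Set.Nonempty, mem_inter_iff, mem_compl_iff] at *
    grind
  apply ncard_corner_lt (XC_finite h (CU_prop h hC).2.2.1) (XC_finite h (CU_prop h hD).2.2.1)
    (z := C)
  · apply union_subset
    · exact aux C D hCD.2.2.2
    · have := aux Cᶜ Dᶜ (by simpa using hCD.1)
      rwa [XC_compl, XC_compl] at this
  · rintro F ⟨⟨hF, ⟨a, ha, haC, haD⟩, _, ⟨c, hc, hcC, hcD⟩, _⟩,
      ⟨_, ⟨b, hb, hbC, hbD⟩, _, ⟨d, hd, hdC, hdD⟩, _⟩⟩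
    exact ⟨⟨hF, ⟨a, ha, haC⟩, ⟨b, hb, hbC⟩, ⟨c, hc, hcC⟩, ⟨d, hd, hdC⟩⟩,
      ⟨hF, ⟨a, ha, haD⟩, ⟨b, hb, hbD⟩, ⟨c, hc, hcD⟩, ⟨d, hd, hdD⟩⟩⟩
  · exact Or.inr ⟨hC, hCD⟩
  · rintro (⟨_, _, _, ⟨a, ha⟩, _⟩ | ⟨_, ⟨a, ha⟩, _⟩)
    · exact ha.1 ha.2.1
    · exact ha.2.1 ha.1

/-- Optimal cuts. -/
def OC (Γ : SimpleGraph V) (𝒜 : Set (Filter V × Filter V)) (α : Filter V × Filter V) :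
    Set (Set V) :=
  {C | C ∈ Cmin Γ α ∧ ∀ D ∈ Cmin Γ α, (XC Γ 𝒜 C).ncard ≤ (XC Γ 𝒜 D).ncard}

theorem OC_compl {Γ : SimpleGraph V} {𝒜 : Set (Filter V × Filter V)} {α : Filter V × Filter V}
    {C : Set V} (h : C ∈ OC Γ 𝒜 α) : Cᶜ ∈ OC Γ 𝒜 α :=
  ⟨Cmin_compl h.1, by rw [XC_compl]; exact h.2⟩

theorem good_corner {Γ : SimpleGraph V} {𝒜 : Set (Filter V × Filter V)} {k : ℕ}
    (h : Std Γ 𝒜 k) {C D : Set V} {α β : Filter V × Filter V} (hα : α ∈ 𝒜) (hβ : β ∈ 𝒜)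
    (hC : C ∈ OC Γ 𝒜 α) (hD : D ∈ OC Γ 𝒜 β) (hCD : Crs C D)
    (h1 : Spl (C ∩ D) α) (h2 : Spl (Cᶜ ∩ Dᶜ) β) : False := by
  have b := bd_corner Γ hC.1.1 hD.1.1
  have m := XC_corner h ⟨α, hα, hC.1⟩ ⟨β, hβ, hD.1⟩ hCD
  have f1 := bd_inter_finite Γ hC.1.1 hD.1.1
  have f2 := bd_inter_finite Γ (Cmin_compl hC.1).1 (Cmin_compl hD.1).1
  have e1 := hC.1.2.2 _ f1 h1
  have e2 := hD.1.2.2 _ f2 h2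
  have := hC.2 _ ⟨f1, h1, fun E hE hs => le_trans (by omega) (hC.1.2.2 E hE hs)⟩
  have := hD.2 _ ⟨f2, h2, fun E hE hs => le_trans (by omega) (hD.1.2.2 E hE hs)⟩
  omega

theorem bad_corner {Γ : SimpleGraph V} {𝒜 : Set (Filter V × Filter V)} {k : ℕ}
    (h : Std Γ 𝒜 k) {C D : Set V} {α β : Filter V × Filter V} (hα : α ∈ 𝒜) (hβ : β ∈ 𝒜)
    (hC : C ∈ OC Γ 𝒜 α) (hD : D ∈ OC Γ 𝒜 β) (hCD : Crs C D)
    (h1 : Spl (C ∩ D) α) (h2 : Spl (Cᶜ ∩ Dᶜ) α) (h3 : Spl (C ∩ Dᶜ) β) (h4 : Spl (Cᶜ ∩ D) β) :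
    False := by
  have b := bd_corner Γ hC.1.1 hD.1.1
  have m := XC_corner h ⟨α, hα, hC.1⟩ ⟨β, hβ, hD.1⟩ hCD
  have b' := bd_corner Γ hC.1.1 (Cmin_compl hD.1).1
  have m' := XC_corner h ⟨α, hα, hC.1⟩ ⟨β, hβ, Cmin_compl hD.1⟩ hCD.compl_right
  rw [_root_.compl_compl] at b' m'
  rw [bd_compl] at b'
  rw [XC_compl D] at m'
  have f1 := bd_inter_finite Γ hC.1.1 hD.1.1
  have f2 := bd_inter_finite Γ (Cmin_compl hC.1).1 (Cmin_compl hD.1).1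
  have f3 := bd_inter_finite Γ hC.1.1 (Cmin_compl hD.1).1
  have f4 := bd_inter_finite Γ (Cmin_compl hC.1).1 hD.1.1
  have e1 := hC.1.2.2 _ f1 h1
  have e2 := hC.1.2.2 _ f2 h2
  have e3 := hD.1.2.2 _ f3 h3
  have e4 := hD.1.2.2 _ f4 h4
  have := hC.2 _ ⟨f1, h1, fun E hE hs => le_trans (by omega) (hC.1.2.2 E hE hs)⟩
  have := hC.2 _ ⟨f2, h2, fun E hE hs => le_trans (by omega) (hC.1.2.2 E hE hs)⟩
  have := hD.2 _ ⟨f3, h3, fun E hE hs => le_trans (by omega) (hD.1.2.2 E hE hs)⟩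
  have := hD.2 _ ⟨f4, h4, fun E hE hs => le_trans (by omega) (hD.1.2.2 E hE hs)⟩
  omega

theorem nested_aux {Γ : SimpleGraph V} {𝒜 : Set (Filter V × Filter V)} {k : ℕ}
    (h : Std Γ 𝒜 k) {C D : Set V} {α β : Filter V × Filter V} (hα : α ∈ 𝒜) (hβ : β ∈ 𝒜)
    (hC : C ∈ OC Γ 𝒜 α) (hD : D ∈ OC Γ 𝒜 β) (hCD : Crs C D)
    (hp : C ∈ α.1) (hq : Cᶜ ∈ α.2) (hr : D ∈ β.1) (hs : Dᶜ ∈ β.2) : False := by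
  have m1 : ∀ {A B : Set V} {p : Filter V}, Aᶜ ∈ p → (A ∩ B)ᶜ ∈ p := fun h =>
    mem_of_superset h (compl_subset_compl.2 inter_subset_left)
  have m2 : ∀ {A B : Set V} {p : Filter V}, Bᶜ ∈ p → (A ∩ B)ᶜ ∈ p := fun h =>
    mem_of_superset h (compl_subset_compl.2 inter_subset_right)
  have hp' : Cᶜᶜ ∈ α.1 := by simpa using hp
  have hr' : Dᶜᶜ ∈ β.1 := by simpa using hr
  have g1 := fun a b => good_corner h hα hβ hC hD hCD a b
  have g2 := fun a b => good_corner h hα hβ (OC_compl hC) (OC_compl hD)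
    hCD.compl_left.compl_right a b
  have g3 := fun a b => good_corner h hα hβ hC (OC_compl hD) hCD.compl_right a b
  have g4 := fun a b => good_corner h hα hβ (OC_compl hC) hD hCD.compl_left a b
  simp only [_root_.compl_compl] at g1 g2 g3 g4
  -- corner containing p, q
  rcases (h.dec1 α hα).2 D hD.1.1 with dp | dp <;> rcases (h.dec2 α hα).2 D hD.1.1 with dq | dq
  · -- p in CD, q in C'D
    have sa : Spl (C ∩ D) α := Or.inl ⟨inter_mem hp dp, m1 hq⟩
    have sb : Spl (Cᶜ ∩ D) α := Or.inr ⟨m1 hp', inter_mem hq dq⟩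
    rcases (h.dec2 β hβ).2 C hC.1.1 with cs | cs
    · exact g4 sb (Or.inr ⟨m2 hr', inter_mem cs hs⟩)
    · exact g1 sa (Or.inr ⟨m2 hr', inter_mem cs hs⟩)
  · -- p in CD, q in C'D'
    have sa : Spl (C ∩ D) α := Or.inl ⟨inter_mem hp dp, m1 hq⟩
    have sb : Spl (Cᶜ ∩ Dᶜ) α := Or.inr ⟨m1 hp', inter_mem hq dq⟩
    rcases (h.dec1 β hβ).2 C hC.1.1 with cr | cr
    · exact g2 sb (Or.inl ⟨inter_mem cr hr, m2 hs⟩)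
    · rcases (h.dec2 β hβ).2 C hC.1.1 with cs | cs
      · exact bad_corner h hα hβ hC hD hCD sa sb (Or.inr ⟨m2 hr', inter_mem cs hs⟩)
          (Or.inl ⟨inter_mem cr hr, m2 hs⟩)
      · exact g1 sa (Or.inr ⟨m2 hr', inter_mem cs hs⟩)
  · -- p in CD', q in C'D
    have sa : Spl (C ∩ Dᶜ) α := Or.inl ⟨inter_mem hp dp, m1 hq⟩
    have sb : Spl (Cᶜ ∩ D) α := Or.inr ⟨m1 hp', inter_mem hq dq⟩
    rcases (h.dec1 β hβ).2 C hC.1.1 with cr | cr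
    · rcases (h.dec2 β hβ).2 C hC.1.1 with cs | cs
      · exact g4 sb (Or.inr ⟨m2 hr', inter_mem cs hs⟩)
      · refine bad_corner h hα hβ hC (OC_compl hD) hCD.compl_right sa (by simpa using sb) ?_
          (Or.inr ⟨m2 hr', inter_mem cs hs⟩)
        rw [_root_.compl_compl]
        exact (Or.inl ⟨inter_mem cr hr, m2 hs⟩)
    · exact g3 sa (Or.inl ⟨inter_mem cr hr, m2 hs⟩)
  · -- p in CD', q in C'D'
    have sa : Spl (C ∩ Dᶜ) α := Or.inl ⟨inter_mem hp dp, m1 hq⟩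
    have sb : Spl (Cᶜ ∩ Dᶜ) α := Or.inr ⟨m1 hp', inter_mem hq dq⟩
    rcases (h.dec1 β hβ).2 C hC.1.1 with cr | cr
    · exact g2 sb (Or.inl ⟨inter_mem cr hr, m2 hs⟩)
    · exact g3 sa (Or.inl ⟨inter_mem cr hr, m2 hs⟩)

theorem nested {Γ : SimpleGraph V} {𝒜 : Set (Filter V × Filter V)} {k : ℕ}
    (h : Std Γ 𝒜 k) {C D : Set V} {α β : Filter V × Filter V} (hα : α ∈ 𝒜) (hβ : β ∈ 𝒜)
    (hC : C ∈ OC Γ 𝒜 α) (hD : D ∈ OC Γ 𝒜 β) : ¬ Crs C D := by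
  intro hCD
  rcases hC.1.2.1 with hp | hp <;> rcases hD.1.2.1 with hr | hr
  · exact nested_aux h hα hβ hC hD hCD hp.1 hp.2 hr.1 hr.2
  · exact nested_aux h hα hβ hC (OC_compl hD) hCD.compl_right hp.1 hp.2 hr.1 (by simpa using hr.2)
  · exact nested_aux h hα hβ (OC_compl hC) hD hCD.compl_left hp.1 (by simpa using hp.2) hr.1 hr.2
  · exact nested_aux h hα hβ (OC_compl hC) (OC_compl hD) hCD.compl_left.compl_right hp.1
      (by simpa using hp.2) hr.1 (by simpa using hr.2)

/-- The nested family. -/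
def EE (Γ : SimpleGraph V) (𝒜 : Set (Filter V × Filter V)) : Set (Set V) :=
  {C | ∃ α ∈ 𝒜, C ∈ OC Γ 𝒜 α}

theorem EE_compl {Γ : SimpleGraph V} {𝒜 : Set (Filter V × Filter V)}
    {C : Set V} (h : C ∈ EE Γ 𝒜) : Cᶜ ∈ EE Γ 𝒜 := by
  obtain ⟨α, hα, h⟩ := h
  exact ⟨α, hα, OC_compl h⟩

theorem EE_sub {Γ : SimpleGraph V} {𝒜 : Set (Filter V × Filter V)}
    {C : Set V} (h : C ∈ EE Γ 𝒜) : C ∈ CU Γ 𝒜 := by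
  obtain ⟨α, hα, h⟩ := h
  exact ⟨α, hα, h.1⟩

theorem EE_nonempty {Γ : SimpleGraph V} {𝒜 : Set (Filter V × Filter V)} {k : ℕ}
    (h : Std Γ 𝒜 k) {C : Set V} (hC : C ∈ EE Γ 𝒜) : C.Nonempty := by
  obtain ⟨α, hα, hC⟩ := hC
  have := (h.dec1 α hα).1
  have := (h.dec2 α hα).1
  rcases hC.1.2.1 with hp | hp
  · exact nonempty_of_mem hp.1
  · exact nonempty_of_mem hp.2

theorem EE_split {Γ : SimpleGraph V} {𝒜 : Set (Filter V × Filter V)} {k : ℕ}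
    (h : Std Γ 𝒜 k) {α : Filter V × Filter V} (hα : α ∈ 𝒜) : ∃ C ∈ EE Γ 𝒜, Spl C α := by
  obtain ⟨C0, h1, -, h2⟩ := h.bound α hα
  have hne : (Cmin Γ α).Nonempty := by
    obtain ⟨C, hC, hm⟩ := exists_minimalFor_of_wellFoundedLT
      (fun C => (bd Γ C).Finite ∧ Spl C α) (fun C => (bd Γ C).ncard) ⟨C0, h1, h2⟩
    refine ⟨C, hC.1, hC.2, fun D hD hD' => ?_⟩
    by_contra hlt
    have := hm ⟨hD, hD'⟩ (by simp only; omega)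
    exact hlt this
  obtain ⟨C, hC, hm⟩ := exists_minimalFor_of_wellFoundedLT
      (fun C => C ∈ Cmin Γ α) (fun C => (XC Γ 𝒜 C).ncard) hne
  refine ⟨C, ⟨α, hα, hC, fun D hD => ?_⟩, hC.2.1⟩
  by_contra hlt
  have := hm hD (by simp only; omega)
  exact hlt this

def s2E (e : V ≃ V) : Sym2 V ≃ Sym2 V where
  toFun := Sym2.map e
  invFun := Sym2.map e.symm
  left_inv s := by induction s with | _ x y => simp
  right_inv s := by induction s with | _ x y => simp

theorem bd_preimage {Γ : SimpleGraph V} (e : V ≃ V) (he : ∀ x y, Γ.Adj (e x) (e y) ↔ Γ.Adj x y)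
    (C : Set V) : bd Γ (e ⁻¹' C) = (s2E e) ⁻¹' (bd Γ C) := by
  ext s
  induction s with | _ x y =>
  show s(x, y) ∈ bd Γ (e ⁻¹' C) ↔ s(e x, e y) ∈ bd Γ C
  rw [mem_bd, mem_bd, he]; rfl

theorem EE_preimage {Γ : SimpleGraph V} {𝒜 : Set (Filter V × Filter V)} (e : V ≃ V)
    (he : ∀ x y, Γ.Adj (e x) (e y) ↔ Γ.Adj x y)
    (hA : ∀ α, (Filter.map e α.1, Filter.map e α.2) ∈ 𝒜 ↔ α ∈ 𝒜) {C : Set V} (hC : C ∈ EE Γ 𝒜) :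
    e ⁻¹' C ∈ EE Γ 𝒜 := by
  have hbf : ∀ C, (bd Γ (e ⁻¹' C)).Finite ↔ (bd Γ C).Finite := by
    intro C
    rw [bd_preimage e he]
    exact ⟨fun h => by
      have := h.image (s2E e)
      rwa [Equiv.image_preimage] at this, fun h => h.preimage (Equiv.injective _).injOn⟩
  have hbn : ∀ C, (bd Γ (e ⁻¹' C)).ncard = (bd Γ C).ncard := by
    intro C
    rw [bd_preimage e he]
    exact Set.ncard_preimage_of_injective_subset_range (Equiv.injective _) (by simp)
  have hsurj : ∀ D : Set V, ∃ D', e ⁻¹' D' = D := fun D => ⟨e '' D, by simp⟩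
  have hcm : ∀ α C, e ⁻¹' C ∈ Cmin Γ α ↔ C ∈ Cmin Γ (map e α.1, map e α.2) := by
    intro α C
    constructor
    · rintro ⟨h1, h2, h3⟩
      refine ⟨(hbf _).1 h1, h2, fun D hD hs => ?_⟩
      have := h3 (e ⁻¹' D) ((hbf D).2 hD) hs
      rwa [hbn, hbn] at this
    · rintro ⟨h1, h2, h3⟩
      refine ⟨(hbf _).2 h1, h2, fun D hD hs => ?_⟩
      obtain ⟨D, rfl⟩ := hsurj D
      rw [hbn, hbn]
      exact h3 D ((hbf D).1 hD) hs
  have hmapsurj : ∀ β : Filter V × Filter V, ∃ α : Filter V × Filter V,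
      (map e α.1, map e α.2) = β := fun β => ⟨(map e.symm β.1, map e.symm β.2), by simp⟩
  have hcu : ∀ C, e ⁻¹' C ∈ CU Γ 𝒜 ↔ C ∈ CU Γ 𝒜 := by
    intro C
    constructor
    · rintro ⟨α, h1, h2⟩
      exact ⟨_, (hA α).2 h1, (hcm _ _).1 h2⟩
    · rintro ⟨β, h1, h2⟩
      obtain ⟨α, rfl⟩ := hmapsurj β
      exact ⟨α, (hA α).1 h1, (hcm _ _).2 h2⟩
  have hcr : ∀ F C, Crs (e ⁻¹' F) (e ⁻¹' C) ↔ Crs F C := by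
    intro F C
    have : ∀ A : Set V, (e ⁻¹' A).Nonempty ↔ A.Nonempty := fun A =>
      ⟨fun ⟨x, hx⟩ => ⟨e x, hx⟩, fun ⟨x, hx⟩ => ⟨e.symm x, by simpa using hx⟩⟩
    unfold Crs
    simp only [← preimage_compl, ← preimage_inter, this]
  have hxc : ∀ C, (XC Γ 𝒜 (e ⁻¹' C)).ncard = (XC Γ 𝒜 C).ncard := by
    intro C
    have : XC Γ 𝒜 C = (fun F => e ⁻¹' F) ⁻¹' (XC Γ 𝒜 (e ⁻¹' C)) := by
      ext F
      simp only [XC, mem_preimage, mem_ofPred_eq, hcu, hcr]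
    rw [this]
    symm
    apply Set.ncard_preimage_of_injective_subset_range
    · exact e.surjective.preimage_injective
    · intro D _
      exact hsurj D
  obtain ⟨β, h1, h2, h3⟩ := hC
  obtain ⟨α, rfl⟩ := hmapsurj β
  refine ⟨α, (hA α).1 h1, (hcm _ _).2 h2, fun D hD => ?_⟩
  obtain ⟨D, rfl⟩ := hsurj D
  rw [hxc, hxc]
  exact h3 D ((hcm _ _).1 hD)

end VF


namespace VF
open Set Filter

section free
variable {ι : Type*} [DecidableEq ι]

/-- Inverse of first letter. -/
def lam (f : FreeGroup ι) : Option (ι × Bool) := (f⁻¹.toWord).getLast?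

theorem lam_letter (x : ι × Bool) : {f : FreeGroup ι | lam f ≠ lam (f * (FreeGroup.mk [x])⁻¹)}.Finite := by
  have : ({FreeGroup.mk [x], 1} : Set (FreeGroup ι)).Finite := by simp
  refine this.subset ?_
  intro f hf
  by_contra hcon
  apply hf
  simp only [mem_insert_iff, mem_singleton_iff, not_or] at hcon
  unfold lam
  have h1 : (f * (FreeGroup.mk [x])⁻¹)⁻¹ = FreeGroup.mk [x] * f⁻¹ := by group
  rw [h1, FreeGroup.toWord_mul]
  have h2 : (FreeGroup.mk [x]).toWord = [x] := by simp [FreeGroup.toWord_mk]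
  rw [h2, List.singleton_append, FreeGroup.reduce.cons, FreeGroup.reduce_toWord]
  rcases hL : f⁻¹.toWord with _ | ⟨hd, tl⟩
  · rw [FreeGroup.toWord_eq_nil_iff] at hL
    exact absurd (inv_eq_one.1 hL) hcon.2
  · simp only
    split_ifs with hc
    · rcases tl with _ | ⟨a, tl⟩
      · exfalso
        apply hcon.1
        have h3 : f⁻¹ = FreeGroup.mk [hd] := by
          rw [← FreeGroup.mk_toWord (x := f⁻¹), hL]
        rw [← inv_inv f, h3, FreeGroup.inv_mk]
        obtain ⟨a, b⟩ := x
        obtain ⟨a', b'⟩ := hd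
        simp only at hc
        simp [FreeGroup.invRev, hc.1, hc.2]
      · rw [List.getLast?_cons_cons]
    · rw [List.getLast?_cons_cons]

theorem lam_finite (c : FreeGroup ι) : {f : FreeGroup ι | lam f ≠ lam (f * c)}.Finite := by
  have step : ∀ c d : FreeGroup ι, {f : FreeGroup ι | lam f ≠ lam (f * c)}.Finite →
      {f : FreeGroup ι | lam f ≠ lam (f * d)}.Finite →
      {f : FreeGroup ι | lam f ≠ lam (f * (c * d))}.Finite := by
    intro c d hc hd
    refine (hc.union (hd.preimage (f := fun f => f * c) (mul_left_injective c).injOn)).subset ?_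
    intro f hf
    simp only [mem_union, mem_preimage, mem_ofPred_eq] at hf ⊢
    by_contra hcon
    push Not at hcon
    apply hf
    rw [hcon.1, hcon.2, mul_assoc]
  induction c using FreeGroup.induction_on with
  | C1 => simp
  | of a =>
    have := lam_letter (a, false)
    simpa [FreeGroup.inv_mk, FreeGroup.invRev, FreeGroup.of] using this
  | inv_of a _ =>
    exact lam_letter (a, true)
  | mul x y hx hy => exact step x y hx hy

theorem lam_split (h : FreeGroup ι) (hh : h ≠ 1) : ∃ u c : FreeGroup ι, ∃ b b', h = u * c * u⁻¹ ∧ b ≠ b' ∧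
    c ≠ 1 ∧
    (∀ i : ℕ, lam (c ^ (i + 1)) = b) ∧ (∀ i : ℕ, lam (c⁻¹ ^ (i + 1)) = b') := by
  set L := FreeGroup.reduceCyclically h.toWord with hLdef
  have hL : FreeGroup.IsCyclicallyReduced L :=
    FreeGroup.reduceCyclically.isCyclicallyReduced FreeGroup.isReduced_toWord
  have hconj := FreeGroup.reduceCyclically.conj_conjugator_reduceCyclically h.toWord
  set u := FreeGroup.mk (FreeGroup.reduceCyclically.conjugator h.toWord)
  have hc : h = u * FreeGroup.mk L * u⁻¹ := by
    conv_lhs => rw [← FreeGroup.mk_toWord (x := h), ← hconj]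
    simp only [← FreeGroup.mul_mk, ← FreeGroup.inv_mk]
    rfl
  have hne : L ≠ [] := by
    rintro h0
    rw [h0] at hc
    apply hh
    rw [hc, FreeGroup.one_eq_mk.symm]
    group
  have hpow : ∀ i : ℕ, (FreeGroup.mk L ^ (i + 1)).toWord = (List.replicate (i + 1) L).flatten := by
    intro i
    rw [FreeGroup.pow_mk, FreeGroup.toWord_mk]
    exact (hL.flatten_replicate _).isReduced.reduce_eq
  refine ⟨u, FreeGroup.mk L, (L.head?).map (fun x => (x.1, !x.2)), L.getLast?, hc, ?_, ?_, ?_, ?_⟩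
  · have h2 := hL.2
    obtain ⟨a, ha⟩ : ∃ a, L.head? = some a := by
      rw [← Option.isSome_iff_exists]; simpa using hne
    obtain ⟨b, hb⟩ : ∃ b, L.getLast? = some b := by
      rw [← Option.isSome_iff_exists]; simpa using hne
    have := h2 b hb a ha
    rw [ha, hb]
    intro heq
    simp only [Option.map_some, Option.some.injEq] at heq
    subst heq
    simp at this
  · intro h1
    apply hh
    rw [hc, h1]; group
  · intro i
    unfold lam
    rw [FreeGroup.toWord_inv, hpow]
    unfold FreeGroup.invRev
    rw [List.getLast?_reverse, List.head?_map, List.head?_flatten_replicate (by simp)]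
  · intro i
    unfold lam
    rw [← inv_pow, inv_inv, hpow, List.getLast?_flatten_replicate (by simp)]

end free

section cayley
variable {G : Type*} [Group G]

/-- Cayley graph (left invariant). -/
def cay (S : Set G) (hS : ∀ s ∈ S, s⁻¹ ∈ S) : SimpleGraph G where
  Adj x y := x ≠ y ∧ x⁻¹ * y ∈ S
  symm := ⟨fun x y h => ⟨h.1.symm, by simpa using hS _ h.2⟩⟩
  loopless := ⟨fun x h => h.1 rfl⟩

theorem cay_left (S : Set G) (hS : ∀ s ∈ S, s⁻¹ ∈ S) (g x y : G) :
    (cay S hS).Adj (g * x) (g * y) ↔ (cay S hS).Adj x y := by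
  simp [cay, mul_assoc]

theorem cay_conn (S : Set G) (hS : ∀ s ∈ S, s⁻¹ ∈ S) (hgen : Subgroup.closure S = ⊤) :
    (cay S hS).Preconnected := by
  have key : ∀ g x : G, (cay S hS).Reachable x (x * g) := by
    intro g
    have hg : g ∈ Subgroup.closure S := by rw [hgen]; trivial
    have hs : ∀ s ∈ S, ∀ x, (cay S hS).Reachable x (x * s) := by
      intro s hs x
      by_cases h : s = 1
      · subst h; simp
      · exact SimpleGraph.Adj.reachable ⟨by simpa using h, by simpa using hs⟩
    induction hg using Subgroup.closure_induction with
    | mem s h => exact hs s h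
    | one => intro x; simp
    | mul a b _ _ ha hb => intro x; rw [← mul_assoc]; exact (ha x).trans (hb _)
    | inv a _ ha => intro x; simpa using (ha (x * a⁻¹)).symm
  intro x y
  simpa using key (x⁻¹ * y) x

theorem ends_finite {V : Type*} {Γ : SimpleGraph V} {C : Set V} (hC : (bd Γ C).Finite) :
    {x : V | ∃ y, s(x, y) ∈ bd Γ C}.Finite := by
  refine (hC.biUnion (t := fun e => {x | x ∈ e}) ?_).subset ?_
  · intro e _
    induction e with | _ a b =>
    refine ((Set.finite_singleton b).insert a).subset ?_
    intro x hx
    simpa using hx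
  · rintro x ⟨y, hy⟩
    simp only [mem_iUnion]
    exact ⟨_, hy, by simp⟩

theorem cay_bd_right (S : Set G) (hS : ∀ s ∈ S, s⁻¹ ∈ S) (hgen : Subgroup.closure S = ⊤)
    {C : Set G} (hC : (bd (cay S hS) C).Finite) (h : G) :
    {x | ¬ (x ∈ C ↔ x * h ∈ C)}.Finite := by
  have hg : h ∈ Subgroup.closure S := by rw [hgen]; trivial
  induction hg using Subgroup.closure_induction with
  | mem s hs =>
    refine (ends_finite hC).subset ?_
    intro x hx
    refine ⟨x * s, mem_bd.2 ⟨⟨?_, by simpa using hs⟩, hx⟩⟩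
    intro h
    apply hx
    rw [← h]
  | one => simp
  | mul a b _ _ ha hb =>
    refine (ha.union (hb.preimage (f := fun f => f * a) (mul_left_injective a).injOn)).subset ?_
    intro x hx
    simp only [mem_union, mem_preimage, mem_ofPred_eq, ← mul_assoc] at hx ⊢
    tauto
  | inv a _ ha =>
    refine (ha.preimage (f := fun f => f * a⁻¹) (mul_left_injective a⁻¹).injOn).subset ?_
    intro x hx
    simp only [mem_preimage, mem_ofPred_eq, inv_mul_cancel_right] at hx ⊢
    tauto

theorem eventually_const {P : ℕ → Prop} (h : ∀ᶠ i in atTop, (P i ↔ P (i + 1))) :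
    (∀ᶠ i in atTop, P i) ∨ (∀ᶠ i in atTop, ¬ P i) := by
  rw [eventually_atTop] at h
  obtain ⟨N, hN⟩ := h
  have : ∀ j, (P (N + j) ↔ P N) := by
    intro j
    induction j with
    | zero => rfl
    | succ j ih => rw [← ih]; exact (hN (N + j) (by omega)).symm
  have h' : ∀ i ≥ N, (P i ↔ P N) := fun i hi => by
    have := this (i - N); rwa [Nat.add_sub_cancel' hi] at this
  by_cases hP : P N
  · exact Or.inl (eventually_atTop.2 ⟨N, fun i hi => (h' i hi).2 hP⟩)
  · exact Or.inr (eventually_atTop.2 ⟨N, fun i hi hh => hP ((h' i hi).1 hh)⟩)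

/-- End filter. -/
def pw (g h : G) : Filter G := map (fun i : ℕ => g * h ^ i) atTop

theorem pw_inj {h : G} (hh : ¬ IsOfFinOrder h) (g : G) : Function.Injective (fun i : ℕ => g * h ^ i) :=
  fun _ _ hij => injective_pow_iff_not_isOfFinOrder.2 hh (mul_left_cancel hij)

theorem pw_dec (S : Set G) (hS : ∀ s ∈ S, s⁻¹ ∈ S) (hgen : Subgroup.closure S = ⊤) (g h : G)
    (hh : ¬ IsOfFinOrder h) : Dec (cay S hS) (pw g h) := by
  refine ⟨by unfold pw; infer_instance, fun C hC => ?_⟩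
  have hf := (cay_bd_right S hS hgen hC h).preimage (pw_inj hh g).injOn
  have := hf.eventually_cofinite_notMem
  rw [Nat.cofinite_eq_atTop] at this
  refine eventually_const (P := fun i => g * h ^ i ∈ C) (this.mono fun i hi => ?_)
  simp only [mem_preimage, mem_ofPred_eq, not_not] at hi
  rw [hi, mul_assoc, pow_succ]

/-- Pairs of ends. -/
def AA (F : Subgroup G) : Set (Filter G × Filter G) :=
  {α | ∃ g h, h ∈ F ∧ h ≠ 1 ∧ α = (pw g h, pw g h⁻¹)}

theorem AA_left (F : Subgroup G) (g : G) (α : Filter G × Filter G) :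
    (map (Equiv.mulLeft g) α.1, map (Equiv.mulLeft g) α.2) ∈ AA F ↔ α ∈ AA F := by
  have key : ∀ g k h : G, map (Equiv.mulLeft g) (pw k h) = pw (g * k) h := by
    intro g k h
    unfold pw
    rw [Filter.map_map]
    congr 1
    funext i
    simp [mul_assoc]
  have inv : ∀ p : Filter G, map (Equiv.mulLeft g⁻¹) (map (Equiv.mulLeft g) p) = p := by
    intro p
    rw [Filter.map_map]
    convert Filter.map_id
    funext i
    simp
  constructor
  · rintro ⟨k, h, h1, h2, h3⟩
    refine ⟨g⁻¹ * k, h, h1, h2, ?_⟩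
    rw [← key, ← key]
    simp only [Prod.mk.injEq] at h3
    rw [← h3.1, ← h3.2, inv, inv]
  · rintro ⟨k, h, h1, h2, rfl⟩
    exact ⟨g * k, h, h1, h2, by simp only [key]⟩

end cayley

section bound
variable {G : Type*} [Group G] {ι : Type*} [DecidableEq ι]

noncomputable def kap (F : Subgroup G) (x : G) : F :=
  ⟨x * (Quotient.out ((x⁻¹ : G) : G ⧸ F)), by
    have : ((Quotient.out ((x⁻¹ : G) : G ⧸ F) : G) : G ⧸ F) = (x⁻¹ : G) := Quotient.out_eq' _
    rw [eq_comm, QuotientGroup.eq] at this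
    simpa using this⟩

theorem kap_left (F : Subgroup G) (f : F) (x : G) : kap F (f * x) = f * kap F x := by
  have : (((f * x : G)⁻¹ : G) : G ⧸ F) = (x⁻¹ : G) := by
    rw [eq_comm, QuotientGroup.eq]
    simp
  ext
  simp only [kap, Subgroup.coe_mul]
  rw [this, mul_assoc]

noncomputable def lab (F : Subgroup G) (e : F ≃* FreeGroup ι) (x : G) : Option (ι × Bool) :=
  lam (e (kap F x))

theorem lab_finite (F : Subgroup G) [F.FiniteIndex] (e : F ≃* FreeGroup ι) (s : G) :
    {x | lab F e x ≠ lab F e (x * s)}.Finite := by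
  have : Finite (G ⧸ F) := inferInstance
  refine (Set.finite_iUnion (f := fun q : G ⧸ F => (fun f : FreeGroup ι => (e.symm f : G) * (q.out)⁻¹) ''
    {f | lam f ≠ lam (f * e (kap F ((q.out)⁻¹ * s)))}) (fun q => (lam_finite _).image _)).subset ?_
  intro x hx
  simp only [mem_iUnion]
  refine ⟨(x⁻¹ : G), e (kap F x), ?_, ?_⟩
  · simp only [mem_ofPred_eq]
    rw [← map_mul, ← kap_left]
    have : (kap F x : G) * ((Quotient.out ((x⁻¹ : G) : G ⧸ F))⁻¹ * s) = x * s := by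
      simp only [kap]; group
    rw [this]
    exact hx
  · simp [kap]

theorem cut_bound (S : Set G) (hS : ∀ s ∈ S, s⁻¹ ∈ S) (hSf : S.Finite)
    (F : Subgroup G) [F.FiniteIndex] (e : F ≃* FreeGroup ι) :
    ∃ k : ℕ, ∀ α ∈ AA F, ∃ C : Set G, (bd (cay S hS) C).Finite ∧ (bd (cay S hS) C).ncard ≤ k ∧
      Spl C α := by
  set E : Set (Sym2 G) := ⋃ s ∈ S, (fun x => s(x, x * s)) '' {x | lab F e x ≠ lab F e (x * s)}
    with hE
  have hEf : E.Finite := hSf.biUnion (fun s _ => (lab_finite F e s).image _)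
  have hsub : ∀ b, bd (cay S hS) {x | lab F e x = b} ⊆ E := by
    rintro b _ ⟨x, y, hxy, hx, hy, rfl⟩
    simp only [mem_ofPred_eq] at hx hy
    simp only [hE, mem_iUnion]
    refine ⟨x⁻¹ * y, hxy.2, x, ?_, by simp⟩
    simp only [mem_ofPred_eq, mul_inv_cancel_left]
    rw [hx]; exact fun h => hy h.symm
  refine ⟨E.ncard, ?_⟩
  rintro _ ⟨g, h, hF, hne, rfl⟩
  obtain ⟨u, c, b, b', h1, h2, hc1, h3, h4⟩ := lam_split (e ⟨h, hF⟩) (by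
    simpa [Subtype.ext_iff] using hne)
  have hcinf : ¬ IsOfFinOrder c := not_isOfFinOrder_of_isMulTorsionFree hc1
  set v : G := g * (e.symm u : G) with hv
  have hpre := bd_preimage (Γ := cay S hS) (Equiv.mulLeft v⁻¹)
    (fun x y => cay_left S hS v⁻¹ x y) {x | lab F e x = b}
  have hfin := hEf.subset (hsub b)
  refine ⟨(Equiv.mulLeft v⁻¹) ⁻¹' {x | lab F e x = b}, ?_, ?_, ?_⟩
  · rw [hpre]
    exact hfin.preimage (Equiv.injective _).injOn
  · rw [hpre, Set.ncard_preimage_of_injective_subset_range (Equiv.injective _) (by simp)]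
    exact Set.ncard_le_ncard (hsub b) hEf
  · have hmem : ∀ i : ℕ, ∀ d : FreeGroup ι, ∀ h' : G, h' = (e.symm (u * d * u⁻¹) : G) →
        lab F e (v⁻¹ * (g * h' ^ i)) = lam (d ^ i * (u⁻¹ * e (kap F 1))) := by
      intro i d h' hh'
      have : v⁻¹ * (g * h' ^ i) = ((e.symm (d ^ i * u⁻¹) : F) : G) * 1 := by
        rw [hh', ← Subgroup.coe_pow, ← map_pow, conj_pow, hv]
        simp only [map_mul, Subgroup.coe_mul]
        group
      rw [lab, this, kap_left, map_mul, e.apply_symm_apply, mul_assoc]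
    have hev : ∀ d : FreeGroup ι, ¬ IsOfFinOrder d → ∀ w, ∀ᶠ i : ℕ in atTop,
        lam (d ^ i) = lam (d ^ i * w) := by
      intro d hd w
      have hf := (lam_finite w).preimage
        (injective_pow_iff_not_isOfFinOrder.2 hd).injOn
      have := hf.eventually_cofinite_notMem
      rw [Nat.cofinite_eq_atTop] at this
      refine this.mono fun i hi => ?_
      simpa using hi
    left
    constructor
    · show ∀ᶠ i : ℕ in atTop, lab F e (v⁻¹ * (g * h ^ i)) = b
      filter_upwards [hev c hcinf (u⁻¹ * e (kap F 1)), eventually_ge_atTop 1] with i hi hi1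
      rw [hmem i c h (by rw [← h1]; simp), ← hi]
      obtain ⟨j, rfl⟩ := Nat.exists_eq_add_of_le' hi1
      exact h3 j
    · show ∀ᶠ i : ℕ in atTop, ¬ lab F e (v⁻¹ * (g * h⁻¹ ^ i)) = b
      filter_upwards [hev c⁻¹ (by simpa using hcinf) (u⁻¹ * e (kap F 1)),
        eventually_ge_atTop 1] with i hi hi1
      rw [hmem i c⁻¹ h⁻¹ (by
        have : u * c⁻¹ * u⁻¹ = (u * c * u⁻¹)⁻¹ := by group
        rw [this, ← h1]; simp), ← hi]
      obtain ⟨j, rfl⟩ := Nat.exists_eq_add_of_le' hi1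
      rw [h4 j]
      exact fun h => h2 h.symm

theorem cay_std (S : Set G) (hS : ∀ s ∈ S, s⁻¹ ∈ S) (hSf : S.Finite)
    (hgen : Subgroup.closure S = ⊤)
    (F : Subgroup G) [F.FiniteIndex] (e : F ≃* FreeGroup ι) :
    ∃ k : ℕ, Std (cay S hS) (AA F) k := by
  obtain ⟨k, hk⟩ := cut_bound S hS hSf F e
  have htf : ∀ h ∈ F, h ≠ 1 → ¬ IsOfFinOrder h := by
    intro h hF hne hfin
    have : IsOfFinOrder (e ⟨h, hF⟩) := by
      apply MonoidHom.isOfFinOrder e.toMonoidHom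
      rwa [← Submonoid.isOfFinOrder_coe]
    exact not_isOfFinOrder_of_isMulTorsionFree (by simpa [Subtype.ext_iff] using hne) this
  refine ⟨k, cay_conn S hS hgen, ?_, ?_, hk⟩
  · rintro _ ⟨g, h, hF, hne, rfl⟩
    exact pw_dec S hS hgen g h (htf h hF hne)
  · rintro _ ⟨g, h, hF, hne, rfl⟩
    exact pw_dec S hS hgen g h⁻¹ (by simpa using htf h hF hne)

end bound
end VF


namespace VF
open Set Filter

structure Nest {V : Type*} (𝓔 : Set (Set V)) : Prop where
  compl : ∀ C ∈ 𝓔, Cᶜ ∈ 𝓔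
  nested : ∀ C ∈ 𝓔, ∀ D ∈ 𝓔, ¬ Crs C D
  fin : ∀ x y, {C | C ∈ 𝓔 ∧ x ∈ C ∧ y ∉ C}.Finite
  ne : ∀ C ∈ 𝓔, C.Nonempty

/-- Vertex of the dual tree. -/
structure IsVtx {V : Type*} (𝓔 : Set (Set V)) (O : Set (Set V)) : Prop where
  sub : O ⊆ 𝓔
  xor : ∀ C ∈ 𝓔, (Cᶜ ∈ O ↔ C ∉ O)
  up : ∀ C ∈ O, ∀ D ∈ 𝓔, C ⊆ D → D ∈ O
  fin : ∀ x, {C | C ∈ O ∧ x ∉ C}.Finite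

def DT {V : Type*} (𝓔 : Set (Set V)) : Type _ := {O : Set (Set V) // IsVtx 𝓔 O}

theorem flip_diff {V : Type*} {𝓔 : Set (Set V)} {O O' : Set (Set V)}
    (h : IsVtx 𝓔 O) (h' : IsVtx 𝓔 O') {C : Set V} (hC : O \ O' = {C}) : O' \ O = {Cᶜ} := by
  ext D
  have key : D ∈ O' \ O ↔ Dᶜ ∈ O \ O' := by
    constructor
    · rintro ⟨h1, h2⟩
      have hD := h'.sub h1
      refine ⟨(h.xor D hD).2 h2, fun h3 => (h'.xor D hD).1 h3 h1⟩
    · rintro ⟨h1, h2⟩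
      have hD : Dᶜᶜ ∈ 𝓔 ∨ Dᶜᶜ ∉ 𝓔 := em _
      have h3 : Dᶜ ∈ 𝓔 := h.sub h1
      have h5 := (h'.xor _ h3).2 h2
      rw [_root_.compl_compl] at h5
      exact ⟨h5, (h.xor D (h'.sub h5)).1 h1⟩
  rw [key, hC, mem_singleton_iff, mem_singleton_iff]
  constructor
  · rintro rfl; simp
  · rintro rfl; simp

def DTG {V : Type*} (𝓔 : Set (Set V)) : SimpleGraph (DT 𝓔) where
  Adj O O' := ∃ C, O.1 \ O'.1 = {C}
  symm := ⟨by
    rintro O O' ⟨C, hC⟩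
    exact ⟨Cᶜ, flip_diff O.2 O'.2 hC⟩⟩
  loopless := ⟨by
    rintro O ⟨C, hC⟩
    rw [sdiff_self] at hC
    exact (Set.singleton_ne_empty C) hC.symm⟩

theorem DT_diff_finite {V : Type*} {𝓔 : Set (Set V)} {O O' : Set (Set V)} (x : V)
    (h : IsVtx 𝓔 O) (h' : IsVtx 𝓔 O') : (O \ O').Finite := by
  refine ((h.fin x).union ((h'.fin x).preimage (f := compl) compl_injective.injOn)).subset ?_
  rintro C ⟨h1, h2⟩
  by_cases hx : x ∈ C
  · exact Or.inr ⟨(h'.xor C (h.sub h1)).2 h2, by simpa using hx⟩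
  · exact Or.inl ⟨h1, hx⟩

theorem DT_flip {V : Type*} {𝓔 : Set (Set V)} (hN : Nest 𝓔) {O O' : Set (Set V)}
    (h : IsVtx 𝓔 O) (h' : IsVtx 𝓔 O') {C : Set V} (hC : C ∈ O \ O')
    (hmin : ∀ D ∈ O \ O', D ⊆ C → D = C) : IsVtx 𝓔 ((O \ {C}) ∪ {Cᶜ}) := by
  have hCE := h.sub hC.1
  have hCc : Cᶜ ≠ C := by
    intro heq
    obtain ⟨z, hz⟩ := hN.ne C hCE
    have h3 := hz
    rw [← heq] at h3
    exact h3 hz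
  have hCcO : Cᶜ ∉ O := fun h1 => (h.xor C hCE).1 h1 hC.1
  refine ⟨?_, ?_, ?_, ?_⟩
  · rintro D (hD | hD)
    · exact h.sub hD.1
    · rw [mem_singleton_iff.1 hD]; exact hN.compl C hCE
  · intro D hD
    simp only [mem_union, Set.mem_sdiff, mem_singleton_iff, compl_inj_iff]
    have hx := h.xor D hD
    by_cases h1 : D = C
    · subst h1; simp [hCc.symm]
    by_cases h2 : D = Cᶜ
    · subst h2; simpa using hCc
    have h3 : Dᶜ ≠ C := fun h => h2 (by rw [← h]; simp)
    simp only [h1, h2, h3, hx]; tauto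
  · rintro D (⟨hD, hDC⟩ | hD) E hE hsub
    · have hEO := h.up D hD E hE hsub
      refine Or.inl ⟨hEO, ?_⟩
      rintro rfl
      apply hDC
      refine hmin D ⟨hD, fun hD' => hC.2 (h'.up D hD' _ hE hsub)⟩ hsub
    · rw [mem_singleton_iff.1 hD] at hsub
      by_cases hEC : E = Cᶜ
      · exact Or.inr hEC
      left
      constructor
      · by_contra hEO
        have h1 := (h.xor E hE).2 hEO
        have h2 : Eᶜ ⊆ C := compl_subset_comm.1 hsub
        have := hmin Eᶜ ⟨h1, fun hD' => hC.2 (h'.up _ hD' _ hCE h2)⟩ h2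
        exact hEC (by rw [← this]; simp)
      · rintro rfl
        obtain ⟨z, hz⟩ := hN.ne _ (hN.compl _ hE)
        exact hz (hsub hz)
  · intro x
    refine ((h.fin x).union (Set.finite_singleton Cᶜ)).subset ?_
    rintro D ⟨hD | hD, hx⟩
    · exact Or.inl ⟨hD.1, hx⟩
    · exact Or.inr hD

theorem DTG_preconn {V : Type*} [Nonempty V] {𝓔 : Set (Set V)} (hN : Nest 𝓔) :
    (DTG 𝓔).Preconnected := by
  obtain ⟨x⟩ := ‹Nonempty V›
  have key : ∀ n : ℕ, ∀ O O' : DT 𝓔, (O.1 \ O'.1).ncard = n → (DTG 𝓔).Reachable O O' := by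
    intro n
    induction n with
    | zero =>
      intro O O' h0
      rw [Set.ncard_eq_zero (DT_diff_finite x O.2 O'.2), sdiff_eq_empty] at h0
      have : O = O' := by
        apply Subtype.ext
        apply Subset.antisymm h0
        intro C hC
        by_contra hCO
        have hE := O'.2.sub hC
        exact (O'.2.xor C hE).1 (h0 ((O.2.xor C hE).2 hCO)) hC
      rw [this]
    | succ n ih =>
      intro O O' hn
      have hfin := DT_diff_finite x O.2 O'.2
      have hne : (O.1 \ O'.1).Nonempty := by
        rw [← Set.ncard_pos hfin]; omega
      obtain ⟨C, hC⟩ := hfin.exists_minimal hne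
      have hmin : ∀ D ∈ O.1 \ O'.1, D ⊆ C → D = C := fun D hD hs =>
        Subset.antisymm hs (hC.2 hD hs)
      set O1 : DT 𝓔 := ⟨_, DT_flip hN O.2 O'.2 hC.1 hmin⟩ with hO1
      have hCE := O.2.sub hC.1.1
      have hCcO : Cᶜ ∉ O.1 := fun h1 => (O.2.xor C hCE).1 h1 hC.1.1
      have hCcO' : Cᶜ ∈ O'.1 := (O'.2.xor C hCE).2 hC.1.2
      have h1 : (DTG 𝓔).Adj O O1 := by
        refine ⟨C, ?_⟩
        ext D
        simp only [hO1, Set.mem_sdiff, mem_union, mem_singleton_iff]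
        constructor
        · tauto
        · rintro rfl
          refine ⟨hC.1.1, ?_⟩
          rintro (h | h)
          · exact h.2 rfl
          · apply hCcO; rw [← h]; exact hC.1.1
      have h2 : O1.1 \ O'.1 = (O.1 \ O'.1) \ {C} := by
        ext D
        simp only [hO1, Set.mem_sdiff, mem_union, mem_singleton_iff]
        constructor
        · rintro ⟨h | rfl, h'⟩
          · tauto
          · exact absurd hCcO' h'
        · tauto
      have h3 : (O1.1 \ O'.1).ncard = n := by
        rw [h2, Set.ncard_sdiff_singleton_of_mem hC.1, hn]; rfl
      exact h1.reachable.trans (ih O1 O' h3)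
  intro O O'
  exact key _ O O' rfl

theorem DT_unique {V : Type*} {𝓔 : Set (Set V)} (hN : Nest 𝓔) {O O' P P' : Set (Set V)}
    (h : IsVtx 𝓔 O) (h' : IsVtx 𝓔 O') (k : IsVtx 𝓔 P) (k' : IsVtx 𝓔 P') {C : Set V}
    (hC : O \ O' = {C}) (kC : P \ P' = {C}) : P = O := by
  have key : ∀ {O O' P P' : Set (Set V)}, IsVtx 𝓔 O → IsVtx 𝓔 O' → IsVtx 𝓔 P → IsVtx 𝓔 P' →
      (O \ O' = {C}) → (P \ P' = {C}) → P ⊆ O := by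
    intro O O' P P' h h' k k' hC kC D hD
    have hDE := k.sub hD
    have cO : C ∈ O \ O' := by rw [hC]; rfl
    have cP : C ∈ P \ P' := by rw [kC]; rfl
    have hCE := h.sub cO.1
    have kf := flip_diff k k' kC
    have hf := flip_diff h h' hC
    have c1 : Cᶜ ∈ O' \ O := by rw [hf]; rfl
    have c2 : Cᶜ ∈ P' \ P := by rw [kf]; rfl
    have hncr := hN.nested C hCE D hDE
    by_cases a1 : C ⊆ D
    · exact h.up C cO.1 D hDE a1
    by_cases a2 : C ⊆ Dᶜ
    · exact absurd hD ((k.xor D hDE).1 (k.up C cP.1 _ (hN.compl D hDE) a2))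
    by_cases a3 : Cᶜ ⊆ D
    · have h1 := h'.up _ c1.1 D hDE a3
      by_contra hDO
      have h2 : D ∈ O' \ O := ⟨h1, hDO⟩
      rw [hf, mem_singleton_iff] at h2
      exact c2.2 (h2 ▸ hD)
    by_cases a4 : Cᶜ ⊆ Dᶜ
    · have h1 := k'.up _ c2.1 Dᶜ (hN.compl D hDE) a4
      have h2 : D ∈ P \ P' := ⟨hD, (k'.xor D hDE).1 h1⟩
      rw [kC, mem_singleton_iff] at h2
      rw [h2]; exact cO.1
    · exfalso
      apply hncr
      rw [not_subset] at a1 a2 a3 a4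
      obtain ⟨a, ha, ha'⟩ := a1
      obtain ⟨b, hb, hb'⟩ := a2
      obtain ⟨c, hc, hc'⟩ := a3
      obtain ⟨d, hd, hd'⟩ := a4
      exact ⟨⟨b, hb, by simpa using hb'⟩, ⟨a, ha, ha'⟩, ⟨d, hd, by simpa using hd'⟩, ⟨c, hc, hc'⟩⟩
  exact Subset.antisymm (key h h' k k' hC kC) (key k k' h h' kC hC)

theorem DT_unique' {V : Type*} {𝓔 : Set (Set V)} (hN : Nest 𝓔) {O O' P P' : DT 𝓔} {C : Set V}
    (hC : O.1 \ O'.1 = {C}) (kC : P.1 \ P'.1 = {C}) : P = O ∧ P' = O' :=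
  ⟨Subtype.ext (DT_unique hN O.2 O'.2 P.2 P'.2 hC kC),
   Subtype.ext (DT_unique hN O'.2 O.2 P'.2 P.2 (flip_diff O.2 O'.2 hC) (flip_diff P.2 P'.2 kC))⟩

theorem DTG_acyclic {V : Type*} {𝓔 : Set (Set V)} (hN : Nest 𝓔) : (DTG 𝓔).IsAcyclic := by
  rw [SimpleGraph.isAcyclic_iff_forall_adj_isBridge]
  intro O O' hadj
  rw [SimpleGraph.isBridge_iff_forall_walk_mem_edges]
  intro p
  obtain ⟨C, hC⟩ := hadj
  have cO : C ∈ O.1 \ O'.1 := by rw [hC]; rfl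
  obtain ⟨d, hd, h1, h2⟩ := p.exists_boundary_dart {P | C ∈ P.1} cO.1 cO.2
  obtain ⟨D, hD⟩ := d.adj
  have : C ∈ d.fst.1 \ d.snd.1 := ⟨h1, h2⟩
  rw [hD, mem_singleton_iff] at this
  subst this
  obtain ⟨e1, e2⟩ := DT_unique' hN hC hD
  have h3 : s(d.fst, d.snd) ∈ p.edges := List.mem_map_of_mem (f := SimpleGraph.Dart.edge) hd
  rwa [e1, e2] at h3

theorem DT_base {V : Type*} {𝓔 : Set (Set V)} (hN : Nest 𝓔) (x : V) :
    IsVtx 𝓔 {C | C ∈ 𝓔 ∧ x ∈ C} := by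
  refine ⟨fun C h => h.1, ?_, ?_, ?_⟩
  · intro C hC
    simp only [mem_ofPred_eq, hN.compl C hC, hC, mem_compl_iff, true_and]
  · rintro C ⟨h1, h2⟩ D hD hs
    exact ⟨hD, hs h2⟩
  · intro y
    refine (hN.fin x y).subset ?_
    rintro C ⟨⟨h1, h2⟩, h3⟩
    exact ⟨h1, h2, h3⟩

theorem DTG_tree {V : Type*} [Nonempty V] {𝓔 : Set (Set V)} (hN : Nest 𝓔) : (DTG 𝓔).IsTree := by
  obtain ⟨x⟩ := ‹Nonempty V›
  have : Nonempty (DT 𝓔) := ⟨⟨_, DT_base hN x⟩⟩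
  have : Nonempty V := ⟨x⟩
  exact ⟨⟨DTG_preconn hN⟩, DTG_acyclic hN⟩

section action
variable {G : Type*} [Group G] {𝓔 : Set (Set G)}

/-- Translate by `g⁻¹`. -/
def sm (g : G) (C : Set G) : Set G := {x | g * x ∈ C}

theorem sm_compl (g : G) (C : Set G) : sm g Cᶜ = (sm g C)ᶜ := rfl

theorem sm_mul (g h : G) (C : Set G) : sm (g * h) C = sm h (sm g C) := by
  ext x; simp [sm, mul_assoc]

theorem sm_one (C : Set G) : sm 1 C = C := by
  ext x; simp [sm]

theorem sm_inv (g : G) (C : Set G) : sm g⁻¹ (sm g C) = C := by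
  rw [← sm_mul, mul_inv_cancel, sm_one]

theorem sm_inv' (g : G) (C : Set G) : sm g (sm g⁻¹ C) = C := by
  rw [← sm_mul, inv_mul_cancel, sm_one]

theorem sm_inj (g : G) : Function.Injective (sm g) :=
  Function.LeftInverse.injective (g := sm g⁻¹) (fun C => sm_inv g C)

theorem sm_mono (g : G) {C D : Set G} (h : C ⊆ D) : sm g C ⊆ sm g D := fun _ hx => h hx

theorem sm_vtx (hinv : ∀ g, ∀ C ∈ 𝓔, sm g C ∈ 𝓔) (g : G) {O : Set (Set G)} (h : IsVtx 𝓔 O) :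
    IsVtx 𝓔 {C | sm g C ∈ O} := by
  refine ⟨?_, ?_, ?_, ?_⟩
  · intro C hC
    have := hinv g⁻¹ _ (h.sub hC)
    rwa [sm_inv] at this
  · intro C hC
    simp only [mem_ofPred_eq, sm_compl]
    exact h.xor _ (hinv g C hC)
  · intro C hC D hD hs
    exact h.up _ hC _ (hinv g D hD) (sm_mono g hs)
  · intro x
    refine ((h.fin (g⁻¹ * x)).preimage (sm_inj g).injOn).subset ?_
    rintro C ⟨h1, h2⟩
    exact ⟨h1, by simpa [sm] using h2⟩

/-- Action on the dual tree. -/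
@[reducible] def DTact (hinv : ∀ g, ∀ C ∈ 𝓔, sm g C ∈ 𝓔) : MulAction G (DT 𝓔) where
  smul g O := ⟨{C | sm g C ∈ O.1}, sm_vtx hinv g O.2⟩
  one_smul O := by
    apply Subtype.ext
    show {C | sm 1 C ∈ O.1} = O.1
    simp [sm_one]
  mul_smul g h O := by
    apply Subtype.ext
    show {C | sm (g * h) C ∈ O.1} = {C | sm h (sm g C) ∈ O.1}
    simp [sm_mul]

end action

universe u

theorem exists_tree {G : Type u} [Group G] [hfg : Group.FG G] (F : Subgroup G) [F.FiniteIndex]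
    {ι : Type u} (e : F ≃* FreeGroup ι) :
    ∃ (T : Type u) (_ : MulAction G T) (Γ : SimpleGraph T), Γ.IsTree ∧
      (∀ (g : G) (x y : T), Γ.Adj x y → Γ.Adj (g • x) (g • y)) ∧
      (∀ h ∈ F, ∀ x : T, h • x = x → h = 1) ∧
      (∃ D : Set (T × T), D.Finite ∧ ∀ x y, Γ.Adj x y → ∃ g : G, (g • x, g • y) ∈ D) ∧
      (∃ W : Set T, W.Finite ∧ ∀ x : T, ∃ g : G, g • x ∈ W) := by
  classical
  obtain ⟨S0, hS0⟩ := hfg.out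
  set S : Set G := {s | s ∈ S0 ∨ s⁻¹ ∈ S0} with hSdef
  have hS : ∀ s ∈ S, s⁻¹ ∈ S := by
    intro s hs
    simp only [hSdef, mem_ofPred_eq, inv_inv] at hs ⊢
    tauto
  have hSf : S.Finite := by
    refine (S0.finite_toSet.union (S0.finite_toSet.preimage (f := fun x => x⁻¹)
      inv_injective.injOn)).subset ?_
    intro s hs; exact hs
  have hgen : Subgroup.closure S = ⊤ := by
    rw [eq_top_iff, ← hS0]
    exact Subgroup.closure_mono (fun s hs => Or.inl hs)
  obtain ⟨k, hstd⟩ := cay_std S hS hSf hgen F e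
  set 𝓔 := EE (cay S hS) (AA F) with h𝓔
  have hN : Nest 𝓔 := by
    refine ⟨fun C hC => EE_compl hC, ?_, ?_, fun C hC => EE_nonempty hstd hC⟩
    · rintro C ⟨α, hα, hC⟩ D ⟨β, hβ, hD⟩
      exact nested hstd hα hβ hC hD
    · intro x y
      refine (CU_finite hstd x y).subset ?_
      rintro C ⟨h1, h2⟩
      exact ⟨EE_sub h1, h2⟩
  have hinv : ∀ g, ∀ C ∈ 𝓔, sm g C ∈ 𝓔 := by
    intro g C hC
    exact EE_preimage (Equiv.mulLeft g) (fun x y => cay_left S hS g x y)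
      (fun α => AA_left F g α) hC
  letI act := DTact hinv
  have smul_def : ∀ (g : G) (O : DT 𝓔), (g • O).1 = {C | sm g C ∈ O.1} := fun _ _ => rfl
  -- finitely many orbits of cuts
  have horb : ∃ 𝓔0 : Set (Set G), 𝓔0.Finite ∧ ∀ C ∈ 𝓔, ∃ g, sm g C ∈ 𝓔0 := by
    refine ⟨⋃ s ∈ S, {C | C ∈ 𝓔 ∧ (1 : G) ∈ C ∧ s ∉ C}, hSf.biUnion (fun s _ => hN.fin 1 s), ?_⟩
    intro C hC
    obtain ⟨a, ha⟩ := hN.ne C hC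
    obtain ⟨b, hb⟩ := hN.ne _ (hN.compl C hC)
    obtain ⟨x, y, hxy, hx, hy⟩ := bd_nonempty hstd.conn ha hb
    refine ⟨x, ?_⟩
    simp only [mem_iUnion]
    exact ⟨x⁻¹ * y, hxy.2, hinv x C hC, by simpa [sm] using hx, by simpa [sm] using hy⟩
  have hdiff : ∀ (g : G) (O O' : DT 𝓔) (C : Set G), O.1 \ O'.1 = {C} →
      (g • O).1 \ (g • O').1 = {sm g⁻¹ C} := by
    intro g O O' C hC
    ext D
    rw [smul_def, smul_def]
    have : (D ∈ {C | sm g C ∈ O.1} \ {C | sm g C ∈ O'.1}) ↔ sm g D ∈ O.1 \ O'.1 := Iff.rfl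
    rw [this, hC, mem_singleton_iff, mem_singleton_iff]
    constructor
    · rintro rfl; rw [sm_inv]
    · rintro rfl; rw [sm_inv']
  have hD : ∃ D : Set (DT 𝓔 × DT 𝓔), D.Finite ∧
      ∀ x y, (DTG 𝓔).Adj x y → ∃ g : G, (g • x, g • y) ∈ D := by
    obtain ⟨𝓔0, hf, horb⟩ := horb
    refine ⟨{d | ∃ C ∈ 𝓔0, d.1.1 \ d.2.1 = {C}}, ?_, ?_⟩
    · refine Set.Finite.of_finite_image (f := fun d => d.1.1 \ d.2.1)
        ((hf.image (fun C => ({C} : Set (Set G)))).subset ?_) ?_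
      · rintro _ ⟨d, ⟨C, hC, h⟩, rfl⟩
        exact ⟨C, hC, h.symm⟩
      · rintro ⟨O, O'⟩ ⟨C, hC, h⟩ ⟨P, P'⟩ ⟨C', hC', h'⟩ heq
        simp only at heq h h'
        rw [h] at heq
        obtain ⟨h5, h6⟩ := DT_unique' hN h heq.symm
        rw [h5, h6]
    · rintro x y ⟨C, hC⟩
      have cO : C ∈ x.1 \ y.1 := by rw [hC]; rfl
      obtain ⟨g, hg⟩ := horb C (x.2.sub cO.1)
      refine ⟨g⁻¹, sm g C, hg, ?_⟩
      have := hdiff g⁻¹ x y C hC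
      rwa [inv_inv] at this
  refine ⟨DT 𝓔, act, DTG 𝓔, DTG_tree hN, ?_, ?_, hD, ?_⟩
  · rintro g x y ⟨C, hC⟩
    exact ⟨_, hdiff g x y C hC⟩
  · intro h hF O hO
    by_contra hne
    obtain ⟨C0, hC0, hs0⟩ := EE_split hstd (α := (pw 1 h, pw 1 h⁻¹)) ⟨1, h, hF, hne, rfl⟩
    have hfix : ∀ (j : ℕ) (C : Set G), C ∈ O.1 → sm (h ^ j) C ∈ O.1 := by
      intro j
      induction j with
      | zero => intro C hC; simpa [sm_one] using hC
      | succ j ih =>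
        intro C hC
        rw [pow_succ, sm_mul]
        have := ih C hC
        have h2 : sm (h ^ j) C ∈ (h • O).1 := by rw [hO]; exact this
        exact h2
    have hfix' : ∀ (j : ℕ) (C : Set G), C ∈ O.1 → sm (h⁻¹ ^ j) C ∈ O.1 := by
      intro j C hC
      by_contra hcon
      have hE : sm (h⁻¹ ^ j) C ∈ 𝓔 := hinv _ _ (O.2.sub hC)
      have h1 := (O.2.xor _ hE).2 hcon
      have h2 := hfix j _ h1
      rw [sm_compl, ← sm_mul] at h2
      have h3 : h⁻¹ ^ j * h ^ j = 1 := by simp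
      rw [h3, sm_one] at h2
      exact (O.2.xor C (O.2.sub hC)).1 h2 hC
    have main : ∀ h : G, (∀ (j : ℕ) (C : Set G), C ∈ O.1 → sm (h ^ j) C ∈ O.1) →
        ∀ C ∈ O.1, (∀ᶠ i : ℕ in atTop, h ^ i ∉ C) → (∀ᶠ i : ℕ in atTop, h⁻¹ ^ i ∈ C) → False := by
      intro h hfix C hC h1 h2
      have hinj : ∀ m : ℕ, 1 ≤ m → sm (h ^ m) C ≠ C := by
        intro m hm heq
        have hit : ∀ N : ℕ, sm (h ^ (m * N)) C = C := by
          intro N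
          induction N with
          | zero => simp [sm_one]
          | succ N ih => rw [mul_add, pow_add, sm_mul, ih, mul_one, heq]
        have hit1 : ∀ N : ℕ, ∀ x, (h ^ (m * N) * x ∈ C ↔ x ∈ C) := by
          intro N x
          conv_rhs => rw [← hit N]
          rfl
        rw [eventually_atTop] at h1 h2
        obtain ⟨a, ha⟩ := h1
        obtain ⟨b, hb⟩ := h2
        have e1 := ha (m * (a + b)) (by nlinarith)
        have e2 := hb (m * (a + b)) (by nlinarith)
        have e3 := hit1 (a + b) 1
        have e4 := hit1 (a + b) (h⁻¹ ^ (m * (a + b)))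
        simp only [mul_one, inv_pow, mul_inv_cancel] at e2 e3 e4
        tauto
      have hinj' : Function.Injective (fun j : ℕ => sm (h ^ j) C) := by
        have : ∀ a b : ℕ, a < b → sm (h ^ a) C ≠ sm (h ^ b) C := by
          intro a b hab heq
          obtain ⟨m, rfl⟩ := Nat.exists_eq_add_of_lt hab
          rw [show a + m + 1 = (m + 1) + a by ring, pow_add, sm_mul] at heq
          exact hinj (m + 1) (by omega) (sm_inj _ heq).symm
        intro a b hab
        rcases lt_trichotomy a b with hl | hl | hl
        · exact absurd hab (this a b hl)
        · exact hl
        · exact absurd hab.symm (this b a hl)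
      have hfin := (O.2.fin 1).preimage hinj'.injOn
      rw [eventually_atTop] at h1
      obtain ⟨a, ha⟩ := h1
      refine (Set.Ici_infinite a) (hfin.subset ?_)
      intro j hj
      exact ⟨hfix j C hC, by simpa [sm] using ha j hj⟩
    have hs : ∃ C ∈ O.1, Spl C (pw 1 h, pw 1 h⁻¹) := by
      by_cases hc : C0 ∈ O.1
      · exact ⟨C0, hc, hs0⟩
      · exact ⟨C0ᶜ, (O.2.xor C0 hC0).2 hc, hs0.compl⟩
    obtain ⟨C, hC, hs⟩ := hs
    have hpw : ∀ (k : G) (C : Set G), C ∈ pw 1 k ↔ ∀ᶠ i : ℕ in atTop, k ^ i ∈ C := by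
      intro k C
      unfold pw
      rw [mem_map]
      simp only [one_mul]; rfl
    rcases hs with ⟨h1, h2⟩ | ⟨h1, h2⟩
    · rw [hpw] at h1 h2
      exact main h⁻¹ hfix' C hC h2 (by simpa using h1)
    · rw [hpw] at h1 h2
      exact main h hfix C hC h1 h2
  · obtain ⟨D, hDf, hD⟩ := hD
    have hT := DTG_tree hN
    obtain ⟨o⟩ := hT.1.nonempty
    refine ⟨(Prod.fst '' D) ∪ {o}, (hDf.image _).union (finite_singleton o), fun x => ?_⟩
    by_cases hx : x = o
    · exact ⟨1, Or.inr (by simp [hx])⟩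
    · obtain ⟨p⟩ := hT.1.preconnected x o
      cases p with
      | nil => exact absurd rfl hx
      | cons hadj p =>
        obtain ⟨g, hg⟩ := hD _ _ hadj
        exact ⟨g, Or.inl ⟨_, hg, rfl⟩⟩

end VF


namespace VF
open Set

/-- Triviality of the first cohomology with coefficients in `H`. -/
def TrivCoh {V : Type*} (Γ : SimpleGraph V) (H : Type*) [Group H] : Prop :=
  ∀ c : V → V → H, (∀ u v, Γ.Adj u v → c u v * c v u = 1) →
    ∃ ψ : V → H, ∀ u v, Γ.Adj u v → ψ v = ψ u * c u v

/-- Trees with an action of `G` such that `F` acts freely and cofinitely. -/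
structure GT {G : Type*} [Group G] (F : Subgroup G) {V : Type*} [MulAction G V]
    (Γ : SimpleGraph V) : Prop where
  inv : ∀ (g : G) (x y : V), Γ.Adj x y → Γ.Adj (g • x) (g • y)
  conn : Γ.Connected
  coh2 : TrivCoh Γ (Multiplicative (ZMod 2))
  free : ∀ h ∈ F, ∀ x : V, h • x = x → h = 1
  fin : ∃ W : Set V, W.Finite ∧ ∀ x : V, ∃ h ∈ F, h • x ∈ W

/-- Connected transversal. -/
structure Tv {G : Type*} [Group G] (F : Subgroup G) {V : Type*} [MulAction G V]
    (Γ : SimpleGraph V) (Y : Set V) : Prop where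
  ne : Y.Nonempty
  cc : CC Γ Y
  fin : Y.Finite
  cov : ∀ v : V, ∃ h ∈ F, h • v ∈ Y
  uniq : ∀ y ∈ Y, ∀ h ∈ F, h • y ∈ Y → h = 1

section
variable {G : Type*} [Group G] {F : Subgroup G} {V : Type*} [MulAction G V] {Γ : SimpleGraph V}

theorem GT.adj_iff (h : GT F Γ) (g : G) (x y : V) : Γ.Adj (g • x) (g • y) ↔ Γ.Adj x y :=
  ⟨fun h' => by simpa using h.inv g⁻¹ _ _ h', h.inv g x y⟩

theorem CC_insert {A : Set V} (hA : CC Γ A) {a v : V} (ha : a ∈ A) (hav : Γ.Adj a v) :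
    CC Γ (insert v A) := by
  intro B hB hne hcl
  by_cases hBA : (B ∩ A).Nonempty
  · have h1 := hA (B ∩ A) inter_subset_right hBA (by
      rintro x ⟨hx, hxA⟩ y hy hxy
      exact ⟨hcl x hx y (Or.inr hy) hxy, hy⟩)
    have haB : a ∈ B := by rw [← h1] at ha; exact ha.1
    apply Subset.antisymm hB
    rintro x (rfl | hx)
    · exact hcl a haB _ (Or.inl rfl) hav
    · rw [← h1] at hx; exact hx.1
  · exfalso
    obtain ⟨b, hb⟩ := hne
    have hbv : b = v := by
      rcases hB hb with h | h
      · exact h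
      · exact absurd ⟨b, hb, h⟩ hBA
    subst hbv
    exact hBA ⟨a, hcl b hb a (Or.inr ha) hav.symm, ha⟩

theorem GT.exists_Tv (h : GT F Γ) : ∃ Y : Set V, Tv F Γ Y := by
  obtain ⟨W, hWf, hW⟩ := h.fin
  choose w hwF hwW using hW
  let Good : Set V → Prop := fun A => A.Nonempty ∧ CC Γ A ∧
    ∀ y ∈ A, ∀ h ∈ F, h • y ∈ A → h = 1
  have hinj : ∀ A, Good A → InjOn (fun v => w v • v) A := by
    intro A hA a ha b hb hab
    simp only at hab
    have h1 : ((w b)⁻¹ * w a) • a = b := by rw [mul_smul, hab, inv_smul_smul]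
    have := hA.2.2 a ha _ (F.mul_mem (F.inv_mem (hwF b)) (hwF a)) (by rw [h1]; exact hb)
    rw [this, one_smul] at h1
    exact h1
  have hfin : ∀ A, Good A → A.Finite := fun A hA =>
    Set.Finite.of_finite_image (hWf.subset (by rintro _ ⟨v, _, rfl⟩; exact hwW v)) (hinj A hA)
  have hle : ∀ A, Good A → A.ncard ≤ W.ncard := fun A hA =>
    Set.ncard_le_ncard_of_injOn _ (fun v _ => hwW v) (hinj A hA) hWf
  obtain ⟨o⟩ := h.conn.nonempty
  have hbase : Good {o} := by
    refine ⟨⟨o, rfl⟩, ?_, ?_⟩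
    · intro B hB hne _
      exact Set.Nonempty.subset_singleton_iff hne |>.1 hB
    · rintro y hy k hk hky
      rw [mem_singleton_iff] at hy hky
      exact h.free k hk o (by rw [hy] at hky; exact hky)
  obtain ⟨A, hA, hmax⟩ := exists_minimalFor_of_wellFoundedLT Good
    (fun A => W.ncard - A.ncard) ⟨_, hbase⟩
  refine ⟨A, hA.1, hA.2.1, hfin A hA, ?_, hA.2.2⟩
  by_contra hcon
  push Not at hcon
  obtain ⟨v0, hv0⟩ := hcon
  obtain ⟨a0, ha0⟩ := hA.1
  obtain ⟨u, v, huv, ⟨k, hk, hku⟩, hv⟩ := bd_nonempty h.conn.preconnected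
    (S := {v | ∃ k ∈ F, k • v ∈ A}) (x := a0) (y := v0) ⟨1, F.one_mem, by simpa using ha0⟩
    (by rintro ⟨k, hk, hk'⟩; exact hv0 k hk hk')
  have hv' : ∀ l ∈ F, l • v ∉ A := fun l hl hl' => hv ⟨l, hl, hl'⟩
  have hnew : Good (insert (k • v) A) := by
    refine ⟨⟨_, Or.inl rfl⟩, CC_insert hA.2.1 hku (h.inv k _ _ huv), ?_⟩
    rintro y (rfl | hy) l hl (hl' | hl')
    · exact h.free l hl _ hl'
    · rw [← mul_smul] at hl'
      exact absurd hl' (hv' _ (F.mul_mem hl hk))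
    · exfalso
      have : (l⁻¹ * k) • v = y := by rw [mul_smul, ← hl', inv_smul_smul]
      exact hv' _ (F.mul_mem (F.inv_mem hl) hk) (by rw [this]; exact hy)
    · exact hA.2.2 y hy l hl hl'
  have h1 : (insert (k • v) A).ncard = A.ncard + 1 :=
    Set.ncard_insert_of_notMem (hv' k hk) (hfin A hA)
  have h2 := hle _ hnew
  have := hmax hnew (by simp only; omega)
  simp only at this
  omega

/-- Set of elements `x` such that `Y` and `xY` touch. -/
def XX (G : Type*) [Group G] {V : Type*} [MulAction G V] (Γ : SimpleGraph V) (Y : Set V) : Set G :=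
  {x | ∃ y ∈ Y, ∃ y' ∈ Y, y' = x • y ∨ Γ.Adj y' (x • y)}

theorem XX_of (h : GT F Γ) {Y : Set V} {g g' : G} {u v : V} (hu : g⁻¹ • u ∈ Y) (hv : g'⁻¹ • v ∈ Y)
    (huv : u = v ∨ Γ.Adj u v) : g⁻¹ * g' ∈ XX G Γ Y := by
  refine ⟨_, hv, _, hu, ?_⟩
  have : (g⁻¹ * g') • g'⁻¹ • v = g⁻¹ • v := by simp [mul_smul]
  rw [this]
  rcases huv with rfl | huv
  · exact Or.inl rfl
  · exact Or.inr (h.inv _ _ _ huv)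

theorem XX_one {Y : Set V} (hY : Y.Nonempty) : (1 : G) ∈ XX G Γ Y := by
  obtain ⟨y, hy⟩ := hY
  exact ⟨y, hy, y, hy, Or.inl (by simp)⟩

theorem XX_inv (h : GT F Γ) {Y : Set V} {x : G} (hx : x ∈ XX G Γ Y) : x⁻¹ ∈ XX G Γ Y := by
  obtain ⟨y, hy, y', hy', hh⟩ := hx
  refine ⟨y', hy', y, hy, ?_⟩
  rcases hh with rfl | hh
  · simp
  · right
    have := h.inv x⁻¹ _ _ hh.symm
    simpa using this

theorem XX_gen (h : GT F Γ) {Y : Set V} (hY : Tv F Γ Y) : Subgroup.closure (XX G Γ Y) = ⊤ := by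
  rw [eq_top_iff]
  rintro g -
  set K := Subgroup.closure (XX G Γ Y)
  obtain ⟨y, hy⟩ := hY.ne
  have hall : ∀ v : V, ∃ k ∈ K, k⁻¹ • v ∈ Y := by
    by_contra hcon
    push Not at hcon
    obtain ⟨v0, hv0⟩ := hcon
    obtain ⟨u, v, huv, ⟨k, hk, hku⟩, hv⟩ := bd_nonempty h.conn.preconnected
      (S := {v | ∃ k ∈ K, k⁻¹ • v ∈ Y}) (x := y) (y := v0) ⟨1, K.one_mem, by simpa using hy⟩
      (by rintro ⟨k, hk, hk'⟩; exact hv0 k hk hk')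
    apply hv
    obtain ⟨l, hl, hlv⟩ := hY.cov v
    refine ⟨l⁻¹, ?_, by simpa using hlv⟩
    have : k⁻¹ * l⁻¹ ∈ XX G Γ Y := XX_of h hku (by simpa using hlv) (Or.inr huv)
    have := K.mul_mem hk (Subgroup.subset_closure this)
    simpa using this
  obtain ⟨k, hk, hky⟩ := hall (g • y)
  have : k⁻¹ * g ∈ XX G Γ Y := XX_of h hky (v := g • y) (by simpa using hy) (Or.inl rfl)
  have := K.mul_mem hk (Subgroup.subset_closure this)
  simpa using this

/-- Universal property of a partial multiplication table. -/
def UP (X : Set G) (H : Type*) [Group H] : Prop :=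
  ∀ j : G → H, (∀ a ∈ X, ∀ b ∈ X, a * b ∈ X → j (a * b) = j a * j b) →
    ∃ φ : G →* H, ∀ x ∈ X, φ x = j x

theorem XX_UP (h : GT F Γ) {Y : Set V} (hY : Tv F Γ Y) {H : Type*} [Group H]
    (hc : TrivCoh Γ H) : UP (XX G Γ Y) H := by
  intro j hj
  set X := XX G Γ Y with hX
  have hgv : ∀ v : V, ∃ g : G, g⁻¹ • v ∈ Y := by
    intro v
    obtain ⟨l, hl, hlv⟩ := hY.cov v
    exact ⟨l⁻¹, by simpa using hlv⟩
  choose gv hgv using hgv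
  have h1X : (1 : G) ∈ X := XX_one hY.ne
  have j1 : j 1 = 1 := by
    have := hj 1 h1X 1 h1X (by simpa using h1X)
    simpa using this
  obtain ⟨ψ, hψ⟩ := hc (fun u v => j ((gv u)⁻¹ * gv v)) (by
    intro u v huv
    have a := XX_of h (hgv u) (hgv v) (Or.inr huv)
    have b := XX_of h (hgv v) (hgv u) (Or.inr huv.symm)
    have e : (gv u)⁻¹ * gv v * ((gv v)⁻¹ * gv u) = 1 := by group
    rw [← hj _ a _ b (by rw [e]; exact h1X), e, j1])
  obtain ⟨y0, hy0⟩ := hY.ne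
  let val : G → V → H := fun g v => ψ v * j ((gv v)⁻¹ * g)
  let s : G → H := fun g => val g (g • y0)
  have hval : ∀ g v, g⁻¹ • v ∈ Y → val g v = s g := by
    intro g v hv
    have := hY.cc {y | y ∈ Y ∧ val g (g • y) = s g} (fun y hy => hy.1) ⟨y0, hy0, rfl⟩ (by
      rintro a ⟨ha, hav⟩ b hb hab
      refine ⟨hb, ?_⟩
      rw [← hav]
      show ψ (g • b) * j ((gv (g • b))⁻¹ * g) = ψ (g • a) * j ((gv (g • a))⁻¹ * g)
      have hadj := h.inv g _ _ hab
      have m1 := XX_of h (hgv (g • a)) (hgv (g • b)) (Or.inr hadj)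
      have m2 := XX_of h (g' := g) (hgv (g • b)) (v := g • b) (by simpa using hb) (Or.inl rfl)
      have m3 := XX_of h (g' := g) (hgv (g • a)) (v := g • a) (by simpa using ha) (Or.inl rfl)
      have e : (gv (g • a))⁻¹ * gv (g • b) * ((gv (g • b))⁻¹ * g) = (gv (g • a))⁻¹ * g := by group
      rw [hψ _ _ hadj, mul_assoc, ← hj _ m1 _ m2 (by rw [e]; exact m3), e])
    have h2 : g⁻¹ • v ∈ {y | y ∈ Y ∧ val g (g • y) = s g} := by rw [this]; exact hv
    have := h2.2
    rwa [smul_inv_smul] at this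
  have hs : ∀ g, ∀ x ∈ X, s (g * x) = s g * j x := by
    intro g x hx
    obtain ⟨y, hy, y', hy', hh⟩ := id hx
    have hu : g⁻¹ • (g • y') ∈ Y := by simpa using hy'
    have hv : (g * x)⁻¹ • ((g * x) • y) ∈ Y := by rw [inv_smul_smul]; exact hy
    set u := g • y'
    set v := (g * x) • y with hvdef
    rw [← hval g u hu, ← hval (g * x) v hv]
    show ψ v * j ((gv v)⁻¹ * (g * x)) = ψ u * j ((gv u)⁻¹ * g) * j x
    have huv : u = v ∨ Γ.Adj u v := by
      rw [hvdef, mul_smul]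
      rcases hh with rfl | hh
      · exact Or.inl rfl
      · exact Or.inr (h.inv _ _ _ hh)
    have m1 := XX_of h (hgv u) (g' := g) hu (Or.inl rfl)
    have m2 := XX_of h (hgv u) (g' := g * x) hv huv
    have m3 := XX_of h (hgv v) (g' := g * x) hv (Or.inl rfl)
    rw [mul_assoc (ψ u), ← hj _ m1 _ hx (by rw [mul_assoc]; exact m2), mul_assoc]
    rcases huv with huv | huv
    · rw [huv]
    · have m4 := XX_of h (hgv u) (hgv v) (Or.inr huv)
      have e : (gv u)⁻¹ * gv v * ((gv v)⁻¹ * (g * x)) = (gv u)⁻¹ * (g * x) := by group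
      rw [hψ _ _ huv, mul_assoc, ← hj _ m4 _ m3 (by rw [e]; exact m2), e]
  let φ : G → H := fun g => (s 1)⁻¹ * s g
  have hφx : ∀ x ∈ X, φ x = j x := by
    intro x hx
    have := hs 1 x hx
    rw [one_mul] at this
    simp only [φ, this]; group
  have hφ1 : φ 1 = 1 := by simp [φ]
  have hmul : ∀ k g, φ (g * k) = φ g * φ k := by
    intro k
    have hk : k ∈ Subgroup.closure X := by rw [hX, XX_gen h hY]; trivial
    induction hk using Subgroup.closure_induction with
    | mem x hx =>
      intro g
      rw [hφx x hx]
      show (s 1)⁻¹ * s (g * x) = (s 1)⁻¹ * s g * j x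
      rw [hs g x hx, ← mul_assoc]
    | one => intro g; rw [hφ1]; simp
    | mul a b _ _ ha hb => intro g; rw [← mul_assoc, hb, ha, hb a, mul_assoc]
    | inv a _ ha =>
      have e : ∀ g, φ (g * a⁻¹) = φ g * (φ a)⁻¹ := by
        intro g
        have := ha (g * a⁻¹)
        rw [inv_mul_cancel_right] at this
        rw [this]; group
      intro g
      have := e 1
      rw [hφ1, one_mul, one_mul] at this
      rw [e g, this]
  exact ⟨⟨⟨φ, hφ1⟩, fun a b => hmul b a⟩, hφx⟩

end
end VF


namespace VF
open Set

theorem ncard_le_of_subset_range {α β : Type*} [Finite α] (f : α → β) {s : Set β}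
    (h : s ⊆ range f) : s.Finite ∧ s.ncard ≤ Nat.card α := by
  have hf : (range f).Finite := Set.finite_range f
  refine ⟨hf.subset h, (Set.ncard_le_ncard h hf).trans ?_⟩
  rw [← Set.image_univ]
  exact (Set.ncard_image_le (Set.toFinite _)).trans (by rw [Set.ncard_univ])

theorem finite_hom (K H : Type*) [Group K] [Group.FG K] [Group H] [Finite H] : Finite (K →* H) := by
  obtain ⟨S, hS⟩ := Group.FG.out (G := K)
  apply Finite.of_injective (fun (φ : K →* H) (s : S) => φ s)
  intro φ ψ hφ
  apply MonoidHom.eq_of_eqOn_dense hS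
  intro s hs
  exact congrFun hφ ⟨s, hs⟩

section
variable {G : Type*} [Group G] {F : Subgroup G} {V : Type*} [MulAction G V] {Γ : SimpleGraph V}

theorem exists_tau {Y : Set V} (hY : Tv F Γ Y) : ∃ τ : V → F,
    (∀ v, (τ v)⁻¹ • v ∈ Y) ∧ (∀ v, ∀ f : F, f⁻¹ • v ∈ Y → f = τ v) ∧
    ∀ (f : F) v, τ (f • v) = f * τ v := by
  have hex : ∀ v, ∃ f : F, f⁻¹ • v ∈ Y := by
    intro v
    obtain ⟨l, hl, hlv⟩ := hY.cov v
    exact ⟨⟨l, hl⟩⁻¹, by simpa using hlv⟩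
  choose τ hτ using hex
  have hu : ∀ v, ∀ f : F, f⁻¹ • v ∈ Y → f = τ v := by
    intro v f hf
    have := hY.uniq _ hf (((τ v)⁻¹ * f : F) : G) (Subtype.property _) (by
      have := hτ v
      show ((τ v)⁻¹ * f) • f⁻¹ • v ∈ Y
      rw [mul_smul, smul_inv_smul]; exact this)
    have h2 : (τ v)⁻¹ * f = 1 := Subtype.ext this
    exact (inv_mul_eq_one.1 h2).symm
  refine ⟨τ, hτ, hu, fun f v => (hu _ _ ?_).symm⟩
  rw [mul_inv_rev, mul_smul, inv_smul_smul]
  exact hτ v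

theorem exists_rho (h : GT F Γ) {Y : Set V} (hY : Tv F Γ Y) {τ : V → F}
    (hτ : ∀ v, (τ v)⁻¹ • v ∈ Y) (hu : ∀ v, ∀ f : F, f⁻¹ • v ∈ Y → f = τ v)
    (c : V → V → Multiplicative (ZMod 2))
    (hsym : ∀ u v, c u v = c v u) (hinv : ∀ (f : F) u v, c (f • u) (f • v) = c u v)
    (h1 : ∀ u v, Γ.Adj u v → τ u = τ v → c u v = 1) :
    ∃ ρ : F →* Multiplicative (ZMod 2), ∀ u v, Γ.Adj u v → ρ ((τ u)⁻¹ * τ v) = c u v := by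
  have hsq : ∀ a : Multiplicative (ZMod 2), a * a = 1 := by decide
  obtain ⟨χ, hχ⟩ := h.coh2 c (by intro u v _; rw [hsym v u]; exact hsq _)
  obtain ⟨y0, hy0⟩ := hY.ne
  have hconst : ∀ (f : F) v, χ (f • v) * (χ v)⁻¹ = χ (f • y0) * (χ y0)⁻¹ := by
    intro f v
    by_contra hcon
    obtain ⟨u, v, huv, h1, h2⟩ := bd_nonempty h.conn.preconnected
      (S := {v | χ (f • v) * (χ v)⁻¹ = χ (f • y0) * (χ y0)⁻¹}) (x := y0) (y := v) rfl hcon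
    apply h2
    simp only [mem_ofPred_eq] at h1 ⊢
    rw [← h1, hχ u v huv, hχ (f • u) (f • v) (h.inv (f : G) _ _ huv), hinv]
    rw [mul_inv_rev, mul_assoc, mul_inv_cancel_left]
  have hYc : ∀ y ∈ Y, χ y = χ y0 := by
    intro y hy
    have := hY.cc {y | y ∈ Y ∧ χ y = χ y0} (fun y hy => hy.1) ⟨y0, hy0, rfl⟩ (by
      rintro a ⟨ha, hav⟩ b hb hab
      refine ⟨hb, ?_⟩
      rw [hχ a b hab, h1 a b hab, hav, mul_one]
      rw [← hu a 1 (by simpa using ha), ← hu b 1 (by simpa using hb)])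
    rw [← this] at hy
    exact hy.2
  refine ⟨⟨⟨fun f => χ (f • y0) * (χ y0)⁻¹, by simp⟩, ?_⟩, ?_⟩
  · intro a b
    simp only
    rw [← hconst a (b • y0), mul_smul]
    group
  · intro u v huv
    show χ (((τ u)⁻¹ * τ v) • y0) * (χ y0)⁻¹ = _
    rw [← hconst _ ((τ v)⁻¹ • v), mul_smul, smul_inv_smul, hYc _ (hτ v), ← hYc _ (hτ u),
      hχ ((τ u)⁻¹ • u) ((τ u)⁻¹ • v) (h.inv ((τ u)⁻¹ : F) _ _ huv), hinv]
    rw [mul_comm (χ _), mul_inv_cancel_right]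

/-- Crossing edges starting in `Y`. -/
def EX (Γ : SimpleGraph V) (Y : Set V) : Set (V × V) := {e | Γ.Adj e.1 e.2 ∧ e.1 ∈ Y ∧ e.2 ∉ Y}

theorem EX_bound (h : GT F Γ) {Y : Set V} (hY : Tv F Γ Y) [Finite (F →* Multiplicative (ZMod 2))] :
    (EX Γ Y).Finite ∧ (EX Γ Y).ncard ≤ Nat.card ((F →* Multiplicative (ZMod 2)) × Bool) := by
  classical
  obtain ⟨τ, hτ, hu, hτf⟩ := exists_tau hY
  have hτ1 : ∀ y ∈ Y, τ y = 1 := fun y hy => (hu y 1 (by simpa using hy)).symm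
  have hτ1' : ∀ y, τ y = 1 → y ∈ Y := fun y hy => by have := hτ y; rw [hy] at this; simpa using this
  let a : Multiplicative (ZMod 2) := Multiplicative.ofAdd 1
  have ha : a ≠ 1 := by decide
  let P : V × V → V → V → Prop := fun e u v => ∃ f : F, (f • e.1 = u ∧ f • e.2 = v) ∨
    (f • e.1 = v ∧ f • e.2 = u)
  have hρ : ∀ e ∈ EX Γ Y, ∃ ρ : F →* Multiplicative (ZMod 2), ∀ u v, Γ.Adj u v →
      ρ ((τ u)⁻¹ * τ v) = if P e u v then a else 1 := by
    intro e he
    apply exists_rho h hY hτ hu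
    · intro u v
      have : P e u v ↔ P e v u := by
        constructor <;> (rintro ⟨f, hf⟩; exact ⟨f, hf.symm⟩)
      simp only [this]
    · intro f u v
      have : P e (f • u) (f • v) ↔ P e u v := by
        constructor
        · rintro ⟨k, hk⟩
          refine ⟨f⁻¹ * k, ?_⟩
          simpa [mul_smul, inv_smul_eq_iff] using hk
        · rintro ⟨k, hk⟩
          refine ⟨f * k, ?_⟩
          simpa [mul_smul] using hk
      simp only [this]
    · intro u v huv hτuv
      rw [if_neg]
      have he2 : τ e.2 ≠ 1 := fun h' => he.2.2 (hτ1' _ h')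
      rintro ⟨f, ⟨rfl, rfl⟩ | ⟨rfl, rfl⟩⟩ <;>
      · rw [hτf, hτf, hτ1 _ he.2.1] at hτuv
        simp at hτuv
        exact he2 (by first | exact hτuv | exact hτuv.symm)
  choose! ρ hρ using hρ
  let f : (F →* Multiplicative (ZMod 2)) × Bool → V × V := fun p =>
    if hp : ∃ e ∈ EX Γ Y, ρ e = p.1 then
      (if p.2 then hp.choose else ((τ hp.choose.2)⁻¹ • hp.choose.2, (τ hp.choose.2)⁻¹ • hp.choose.1))
    else (hY.ne.choose, hY.ne.choose)
  apply ncard_le_of_subset_range f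
  intro e he
  have hp : ∃ e' ∈ EX Γ Y, ρ e' = ρ e := ⟨e, he, rfl⟩
  have hc := hp.choose_spec
  set e0 := hp.choose with he0
  have h1 := hρ e he e.1 e.2 he.1
  rw [if_pos ⟨1, Or.inl ⟨one_smul _ _, one_smul _ _⟩⟩, ← hc.2, hρ e0 hc.1 _ _ he.1] at h1
  have hP : P e0 e.1 e.2 := by
    by_contra hcon
    rw [if_neg hcon] at h1
    exact ha h1.symm
  obtain ⟨k, ⟨hk1, hk2⟩ | ⟨hk1, hk2⟩⟩ := hP
  · refine ⟨(ρ e, true), ?_⟩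
    have hk : k = 1 := by
      have := hτf k e0.1
      rw [hk1, hτ1 _ he.2.1, hτ1 _ hc.1.2.1, mul_one] at this
      exact this.symm
    rw [hk, one_smul] at hk1 hk2
    simp only [f]
    rw [dif_pos hp, if_pos trivial]
    exact Prod.ext hk1 hk2
  · refine ⟨(ρ e, false), ?_⟩
    have hk : k = (τ e0.2)⁻¹ := by
      have := hτf k e0.2
      rw [hk2, hτ1 _ he.2.1] at this
      exact eq_inv_of_mul_eq_one_left this.symm
    rw [hk] at hk1 hk2
    simp only [f]
    rw [dif_pos hp, if_neg (by simp)]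
    exact Prod.ext hk2 hk1

theorem XX_bound (h : GT F Γ) [F.Normal] {Y : Set V} (hY : Tv F Γ Y)
    [Finite (F →* Multiplicative (ZMod 2))] [Finite (G ⧸ F)] :
    (XX G Γ Y).Finite ∧ (XX G Γ Y).ncard ≤ Nat.card (G ⧸ F) *
      (Nat.card ((F →* Multiplicative (ZMod 2)) × Bool) + 1) ^ 2 := by
  classical
  obtain ⟨τ, hτ, hu, hτf⟩ := exists_tau hY
  have hτ1 : ∀ y ∈ Y, τ y = 1 := fun y hy => (hu y 1 (by simpa using hy)).symm
  obtain ⟨hEf, hEc⟩ := EX_bound h hY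
  obtain ⟨y0, hy0⟩ := hY.ne
  have : Finite (EX Γ Y) := hEf
  let Q : G → V × V → V × V → Prop := fun g e p => Γ.Adj p.1 p.2 ∧ g⁻¹ • p.1 ∈ Y ∧ g⁻¹ • p.2 ∈ Y ∧
    e = ((τ p.1)⁻¹ • p.1, (τ p.1)⁻¹ • p.2)
  have hQu : ∀ g e p q, Q g e p → Q g e q → p = q := by
    rintro g e ⟨p1, p2⟩ ⟨q1, q2⟩ ⟨-, hp1, -, rfl⟩ ⟨-, hq1, -, hq⟩
    simp only [Prod.mk.injEq] at hq hp1 hq1 ⊢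
    have hk : ((τ q1) * (τ p1)⁻¹) • p1 = q1 := by rw [mul_smul, hq.1, smul_inv_smul]
    have hk2 : ((τ q1) * (τ p1)⁻¹) • p2 = q2 := by rw [mul_smul, hq.2, smul_inv_smul]
    set k := (τ q1) * (τ p1)⁻¹
    have h1 : (g⁻¹ * (k : G) * g) • g⁻¹ • p1 = g⁻¹ • q1 := by
      rw [← hk, mul_smul, smul_inv_smul, mul_smul]; rfl
    have h2 := hY.uniq _ hp1 (g⁻¹ * (k : G) * g)
      (by simpa using (inferInstance : F.Normal).conj_mem k k.2 g⁻¹) (by rw [h1]; exact hq1)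
    have h3 : (k : G) = 1 := by
      have : (k : G) = g * (g⁻¹ * (k : G) * g) * g⁻¹ := by group
      rw [this, h2]; group
    have h4 : k = 1 := Subtype.ext h3
    rw [h4, one_smul] at hk hk2
    exact ⟨hk, hk2⟩
  let β : Option (EX Γ Y) → F := fun o => o.elim 1 (fun e => τ e.1.2)
  let δ : G → Option (EX Γ Y) → F := fun g o => o.elim (τ (g • y0))
    (fun e => if hp : ∃ p, Q g e.1 p then τ hp.choose.2 else 1)
  have hδ : ∀ g, ∀ y ∈ Y, ∃ o, δ g o = τ (g • y) := by
    intro g y hy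
    by_cases hc : τ (g • y0) = τ (g • y)
    · exact ⟨none, hc⟩
    · have := hY.cc {z | z ∈ Y ∧ τ (g • z) = τ (g • y)} (fun z hz => hz.1) ⟨y, hy, rfl⟩
      by_cases hcl : ∀ x ∈ {z | z ∈ Y ∧ τ (g • z) = τ (g • y)}, ∀ z ∈ Y, Γ.Adj x z →
          z ∈ {z | z ∈ Y ∧ τ (g • z) = τ (g • y)}
      · rw [← this hcl] at hy0
        exact absurd hy0.2 hc
      · push Not at hcl
        obtain ⟨x, ⟨hx, hxτ⟩, z, hz, hxz, hzn⟩ := hcl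
        have hzτ : τ (g • z) ≠ τ (g • y) := fun h' => hzn ⟨hz, h'⟩
        have hQ : Q g ((τ (g • z))⁻¹ • g • z, (τ (g • z))⁻¹ • g • x) (g • z, g • x) :=
          ⟨h.inv g _ _ hxz.symm, by simpa using hz, by simpa using hx, rfl⟩
        have he : ((τ (g • z))⁻¹ • g • z, (τ (g • z))⁻¹ • g • x) ∈ EX Γ Y := by
          refine ⟨h.inv ((τ (g • z))⁻¹ : F) _ _ (h.inv g _ _ hxz.symm), hτ _, ?_⟩
          intro hm
          exact hzτ ((hu _ _ hm).trans hxτ)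
        refine ⟨some ⟨_, he⟩, ?_⟩
        have hp : ∃ p, Q g ((τ (g • z))⁻¹ • g • z, (τ (g • z))⁻¹ • g • x) p := ⟨_, hQ⟩
        simp only [δ, Option.elim]
        rw [dif_pos hp, hQu _ _ _ _ hp.choose_spec hQ]
        exact hxτ
  let f : (G ⧸ F) × Option (EX Γ Y) × Option (EX Γ Y) → G := fun p =>
    (β p.2.1 : G) * (δ p.1.out p.2.2 : G)⁻¹ * p.1.out
  obtain ⟨hfin, hcard⟩ := ncard_le_of_subset_range f (s := XX G Γ Y) (by
    rintro x ⟨y, hy, y', hy', hh⟩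
    have hb : ∃ o, β o = τ (x • y) := by
      rcases hh with hh | hh
      · exact ⟨none, by rw [← hh, hτ1 _ hy']; rfl⟩
      · by_cases hxy : x • y ∈ Y
        · exact ⟨none, by rw [hτ1 _ hxy]; rfl⟩
        · exact ⟨some ⟨(y', x • y), hh, hy', hxy⟩, rfl⟩
    obtain ⟨o, ho⟩ := hb
    set g : G := (QuotientGroup.mk x : G ⧸ F).out with hg
    obtain ⟨o', ho'⟩ := hδ g y hy
    refine ⟨(QuotientGroup.mk x, o, o'), ?_⟩
    have hk : x * g⁻¹ ∈ F := by
      have h1 : (QuotientGroup.mk g : G ⧸ F) = QuotientGroup.mk x := Quotient.out_eq _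
      have h2 := QuotientGroup.eq.1 h1
      have := (inferInstance : F.Normal).conj_mem _ h2 g
      simpa using this
    have h3 : x • y = (⟨x * g⁻¹, hk⟩ : F) • g • y := by
      show x • y = (x * g⁻¹) • g • y
      rw [mul_smul, inv_smul_smul]
    simp only [f]
    rw [ho, ← hg, ho', h3, hτf]
    simp)
  refine ⟨hfin, hcard.trans ?_⟩
  rw [Nat.card_prod, Nat.card_prod, Finite.card_option, ← pow_two]
  apply Nat.mul_le_mul_left
  apply Nat.pow_le_pow_left
  exact Nat.add_le_add_right hEc 1

end
end VF


namespace VF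
open Set
open scoped Pointwise

section
variable {G : Type*} [Group G]

theorem finite_pow {X : Set G} (hX : X.Finite) (L : ℕ) : (X ^ L).Finite := by
  induction L with
  | zero => rw [pow_zero]; exact Set.finite_one
  | succ n ih => rw [pow_succ]; exact ih.mul hX

/-- Good generating tuples. -/
def GoodTup {N : ℕ} (x : Fin N → G) : Prop :=
  Subgroup.closure (range x) = ⊤ ∧ UP (range x) G

/-- Multiplication pattern of a tuple. -/
def pat {N : ℕ} (x : Fin N → G) : Set (Fin N × Fin N) × Set (Fin N × Fin N × Fin N) :=
  ({p | x p.1 = x p.2}, {p | x p.1 * x p.2.1 = x p.2.2})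

theorem exists_hom_of_pat {N : ℕ} {x x' : Fin N → G} (hx : GoodTup x) (hp : pat x = pat x') :
    ∃ φ : G →* G, ∀ i, φ (x i) = x' i := by
  classical
  have h1 : ∀ i j, x i = x j → x' i = x' j := by
    intro i j hij
    have : (i, j) ∈ (pat x).1 := hij
    rw [hp] at this; exact this
  have h2 : ∀ i j k, x i * x j = x k → x' i * x' j = x' k := by
    intro i j k hij
    have : (i, j, k) ∈ (pat x).2 := hij
    rw [hp] at this; exact this
  let j : G → G := fun g => if h : ∃ i, x i = g then x' h.choose else 1
  have hj : ∀ i, j (x i) = x' i := by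
    intro i
    have h : ∃ k, x k = x i := ⟨i, rfl⟩
    simp only [j]
    rw [dif_pos h]
    exact h1 _ _ h.choose_spec
  obtain ⟨φ, hφ⟩ := hx.2 j (by
    rintro _ ⟨a, rfl⟩ _ ⟨b, rfl⟩ ⟨c, hc⟩
    rw [← hc, hj, hj, hj, h2 _ _ _ hc.symm])
  exact ⟨φ, fun i => by rw [hφ _ ⟨i, rfl⟩, hj]⟩

theorem exists_aut_of_pat {N : ℕ} {x x' : Fin N → G} (hx : GoodTup x) (hx' : GoodTup x')
    (hp : pat x = pat x') : ∃ φ : MulAut G, ∀ i, φ (x i) = x' i := by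
  obtain ⟨φ, hφ⟩ := exists_hom_of_pat hx hp
  obtain ⟨ψ, hψ⟩ := exists_hom_of_pat hx' hp.symm
  have e1 : ψ.comp φ = MonoidHom.id G := by
    apply MonoidHom.eq_of_eqOn_dense hx.1
    rintro _ ⟨i, rfl⟩
    simp [hφ, hψ]
  have e2 : φ.comp ψ = MonoidHom.id G := by
    apply MonoidHom.eq_of_eqOn_dense hx'.1
    rintro _ ⟨i, rfl⟩
    simp [hφ, hψ]
  exact ⟨MonoidHom.toMulEquiv φ ψ e1 e2, hφ⟩

theorem exists_tuple {X : Set G} {N : ℕ} (hX : X.Finite) (hne : X.Nonempty) (hc : X.ncard ≤ N) :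
    ∃ x : Fin N → G, range x = X := by
  obtain ⟨a, ha⟩ := hne
  have hf : Finite X := hX
  have e := Finite.equivFin X
  have hc' : Nat.card X ≤ N := hc
  refine ⟨fun i => if h : i.1 < Nat.card X then (e.symm ⟨i.1, h⟩ : G) else a, ?_⟩
  ext g
  constructor
  · rintro ⟨i, rfl⟩
    simp only
    split_ifs
    · exact Subtype.property _
    · exact ha
  · intro hg
    refine ⟨⟨(e ⟨g, hg⟩).1, lt_of_lt_of_le (e ⟨g, hg⟩).2 hc'⟩, ?_⟩
    simp only [(e ⟨g, hg⟩).2, dite_true, Fin.eta, Equiv.symm_apply_apply]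

theorem exists_F0 (hout : (MulAut.conj : G →* MulAut G).range.FiniteIndex) (N L : ℕ) :
    ∃ F0 : Set G, F0.Finite ∧ 1 ∉ F0 ∧ ∀ θ : G →* G, (∀ f ∈ F0, θ f ≠ 1) →
      ∀ X : Set G, X.Finite → X.Nonempty → X.ncard ≤ N → Subgroup.closure X = ⊤ → UP X G →
        ∀ z ∈ X ^ L, θ z = 1 → z = 1 := by
  classical
  let P := Set (Fin N × Fin N) × Set (Fin N × Fin N × Fin N)
  let rep : P → Fin N → G := fun p =>
    if h : ∃ x : Fin N → G, GoodTup x ∧ pat x = p then h.choose else fun _ => 1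
  let Q := MulAut G ⧸ (MulAut.conj : G →* MulAut G).range
  have : Finite Q := inferInstance
  refine ⟨(⋃ p : P, ⋃ q : Q, q.out '' ((range (rep p)) ^ L)) \ {1}, ?_, by simp, ?_⟩
  · apply Set.Finite.sdiff
    apply Set.finite_iUnion
    intro p
    apply Set.finite_iUnion
    intro q
    apply Set.Finite.image
    exact finite_pow (Set.finite_range _) L
  · intro θ hθ X hXf hXn hXc hXg hXU z hz hz1
    obtain ⟨x', rfl⟩ := exists_tuple hXf hXn hXc
    have hex : ∃ x : Fin N → G, GoodTup x ∧ pat x = pat x' := ⟨x', ⟨hXg, hXU⟩, rfl⟩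
    have hrep : GoodTup (rep (pat x')) ∧ pat (rep (pat x')) = pat x' := by
      simp only [rep]
      rw [dif_pos hex]
      exact hex.choose_spec
    obtain ⟨α, hα⟩ := exists_aut_of_pat hrep.1 ⟨hXg, hXU⟩ hrep.2
    set x := rep (pat x') with hxdef
    have himg : range x' = α '' range x := by
      rw [← Set.range_comp]; congr 1; ext i; exact (hα i).symm
    rw [himg, ← Set.image_pow] at hz
    obtain ⟨w, hw, rfl⟩ := hz
    have hq : (QuotientGroup.mk (QuotientGroup.mk α : Q).out : Q) = QuotientGroup.mk α :=
      Quotient.out_eq _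
    obtain ⟨g, hg⟩ := QuotientGroup.eq.1 hq
    set a := (QuotientGroup.mk α : Q).out with ha
    have hαw : α w = a g * a w * (a g)⁻¹ := by
      have : α = a * MulAut.conj g := by rw [hg]; group
      rw [this]
      simp
    by_contra hne
    apply hθ (a w)
    · refine ⟨mem_iUnion.2 ⟨pat x', mem_iUnion.2 ⟨QuotientGroup.mk α, w, hw, rfl⟩⟩, ?_⟩
      intro h1
      rw [mem_singleton_iff] at h1
      apply hne
      rw [hαw, h1]; simp
    · rw [hαw] at hz1
      simpa using hz1

end
end VF


namespace VF
open Set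
open scoped Pointwise

section
variable {G : Type*} [Group G]

theorem finite_closure {A : Set G} (hA : A.Finite) (h1 : (1 : G) ∈ A) (hinv : ∀ a ∈ A, a⁻¹ ∈ A)
    {H : Type*} [Group H] (θ : G →* H) {T : Set H} (hT : T.Finite) {n : ℕ} (hn : T.ncard ≤ n)
    (hθ : ∀ k ∈ Subgroup.closure A, θ k ∈ T) (hNK : ∀ z ∈ A ^ (2 * n), θ z = 1 → z = 1) :
    (Subgroup.closure A : Set G).Finite := by
  have hsub : ∀ m, A ^ m ⊆ Subgroup.closure A := by
    intro m
    induction m with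
    | zero => rw [pow_zero]; rintro _ rfl; exact one_mem _
    | succ m ih =>
      rw [pow_succ]; rintro _ ⟨a, ha, b, hb, rfl⟩
      exact mul_mem (ih ha) (Subgroup.subset_closure hb)
  have hinvp : ∀ m, ∀ a ∈ A ^ m, a⁻¹ ∈ A ^ m := by
    intro m
    induction m with
    | zero => rw [pow_zero]; rintro _ rfl; simp
    | succ m ih =>
      rintro _ ha
      rw [pow_succ] at ha
      obtain ⟨a, ha, b, hb, rfl⟩ := ha
      rw [pow_succ']
      exact ⟨b⁻¹, hinv b hb, a⁻¹, ih a ha, by simp⟩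
  have hmono : ∀ m, A ^ m ⊆ A ^ (m + 1) := by
    intro m a ha
    rw [pow_succ]
    exact ⟨a, ha, 1, h1, by simp⟩
  have hbd : (A ^ n).ncard ≤ n := by
    refine le_trans (Set.ncard_le_ncard_of_injOn θ (fun a ha => hθ a (hsub n ha)) ?_ hT) hn
    intro a ha b hb hab
    have : a⁻¹ * b = 1 := by
      apply hNK
      · rw [two_mul, pow_add]
        exact ⟨_, hinvp n a ha, b, hb, rfl⟩
      · simp [hab]
    exact inv_mul_eq_one.1 this
  have hex : ∃ m, A ^ m = A ^ (m + 1) := by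
    by_contra hcon
    push Not at hcon
    have : ∀ m, m + 1 ≤ (A ^ m).ncard := by
      intro m
      induction m with
      | zero => rw [pow_zero, ← Set.singleton_one, Set.ncard_singleton]
      | succ m ih =>
        have := Set.ncard_lt_ncard (ssubset_of_subset_of_ne (hmono m) (hcon m)) (finite_pow hA _)
        omega
    have := this n
    omega
  obtain ⟨m, hm⟩ := hex
  apply (finite_pow hA m).subset
  intro k hk
  have hk' : k ∈ Subgroup.closure A := hk
  have h1m : ∀ m, (1 : G) ∈ A ^ m := by
    intro m
    induction m with
    | zero => simp
    | succ m ih => exact hmono _ ih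
  induction hk' using Subgroup.closure_induction_right with
  | one => exact h1m m
  | mul_right x hx y hy ih =>
    rw [hm, pow_succ]
    exact ⟨x, ih hx, y, hy, rfl⟩
  | mul_inv_cancel x hx y hy ih =>
    rw [hm, pow_succ]
    exact ⟨x, ih hx, y⁻¹, hinv y hy, rfl⟩

end

section
variable {V U : Type*} {Γ : SimpleGraph V} {Δ : SimpleGraph U}

theorem inj_of_locinj (hΓ : Γ.Connected) (hΔ : Δ.IsAcyclic) (f : V → U)
    (hf : ∀ a b, Γ.Adj a b → f a = f b ∨ Δ.Adj (f a) (f b))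
    (hno : ∀ v w1 w2, (v = w1 ∨ Γ.Adj v w1) → (v = w2 ∨ Γ.Adj v w2) → f w1 = f w2 → w1 = w2) :
    Function.Injective f := by
  classical
  have hadj : ∀ {a b}, Γ.Adj a b → Δ.Adj (f a) (f b) := by
    intro a b hab
    rcases hf a b hab with h | h
    · exact absurd (hno a a b (Or.inl rfl) (Or.inr hab) h) hab.ne
    · exact h
  let φ : Γ →g Δ := ⟨f, fun h => hadj h⟩
  have key : ∀ {a b} (p : Γ.Walk a b), p.IsPath → List.IsChain (· ≠ ·) (p.map φ).edges := by
    intro a b p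
    induction p with
    | nil => intro _; simp
    | @cons a b c hab q ih =>
      intro hp
      rw [SimpleGraph.Walk.cons_isPath_iff] at hp
      have hq := ih hp.1
      cases q with
      | nil => simp
      | @cons _ d _ hbd q =>
        rw [SimpleGraph.Walk.map_cons, SimpleGraph.Walk.edges_cons, SimpleGraph.Walk.map_cons,
          SimpleGraph.Walk.edges_cons]
        rw [SimpleGraph.Walk.map_cons, SimpleGraph.Walk.edges_cons] at hq
        refine List.IsChain.cons_cons ?_ hq
        intro he
        have : f a = f d := by
          have h1 := (hadj hab).ne
          have h2 := (hadj hbd).ne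
          rw [Sym2.eq_iff] at he
          rcases he with ⟨h3, _⟩ | ⟨h3, _⟩
          · exact absurd h3 h1
          · exact h3
        have := hno b a d (Or.inr hab.symm) (Or.inr hbd) this
        apply hp.2
        subst this
        simp
  intro a b hab
  obtain ⟨p, hp⟩ := (hΓ.preconnected a b).exists_isPath
  have h2 := (hΔ.isPath_iff_isChain _).2 (key p hp)
  by_contra hne
  cases p with
  | nil => exact hne rfl
  | cons h q =>
    rw [SimpleGraph.Walk.map_cons, SimpleGraph.Walk.cons_isPath_iff] at h2
    apply h2.2
    have : φ a = φ b := hab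
    rw [this]
    exact SimpleGraph.Walk.end_mem_support _

end

section
variable {G : Type*} [Group G] {V : Type*} [MulAction G V] 

/-- Folding relation. -/
def fr (G : Type*) [Group G] {V : Type*} [MulAction G V] (w1 w2 : V) : V → V → Prop :=
  fun a b => ∃ g : G, a = g • w1 ∧ b = g • w2

/-- Folded vertex set. -/
abbrev FV (G : Type*) [Group G] {V : Type*} [MulAction G V] (w1 w2 : V) := Quot (fr G w1 w2)

instance instFV (w1 w2 : V) : MulAction G (FV G w1 w2) where
  smul g := Quot.map (fun x => g • x) (by
    rintro a b ⟨k, rfl, rfl⟩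
    exact ⟨g * k, by rw [mul_smul], by rw [mul_smul]⟩)
  one_smul := by
    rintro ⟨x⟩
    show Quot.mk _ ((1 : G) • x) = Quot.mk _ x
    rw [one_smul]
  mul_smul := by
    rintro a b ⟨x⟩
    show Quot.mk _ ((a * b) • x) = Quot.mk _ (a • b • x)
    rw [mul_smul]

theorem FV_smul_mk (w1 w2 : V) (g : G) (x : V) :
    g • (Quot.mk _ x : FV G w1 w2) = Quot.mk _ (g • x) := rfl

theorem FV_eq (w1 w2 : V) (g : G) :
    (Quot.mk _ (g • w1) : FV G w1 w2) = Quot.mk _ (g • w2) := Quot.sound ⟨g, rfl, rfl⟩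

/-- Folded graph. -/
def FoG (G : Type*) [Group G] {V : Type*} [MulAction G V] (Γ : SimpleGraph V) (w1 w2 : V) :
    SimpleGraph (FV G w1 w2) where
  Adj p q := p ≠ q ∧ ∃ a b, Quot.mk _ a = p ∧ Quot.mk _ b = q ∧ Γ.Adj a b
  symm := ⟨fun _ _ ⟨h, a, b, ha, hb, hab⟩ => ⟨h.symm, b, a, hb, ha, hab.symm⟩⟩
  loopless := ⟨fun _ h => h.1 rfl⟩

variable {Γ : SimpleGraph V}

theorem FoG_conn (hΓ : Γ.Connected) (w1 w2 : V) : (FoG G Γ w1 w2).Connected := by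
  have := hΓ.nonempty
  obtain ⟨o⟩ := this
  have hne : Nonempty (FV G w1 w2) := ⟨Quot.mk _ o⟩
  refine ⟨?_⟩
  rintro ⟨a⟩ ⟨b⟩
  have h := hΓ.preconnected a b
  rw [SimpleGraph.reachable_iff_reflTransGen] at h
  induction h with
  | refl => exact SimpleGraph.Reachable.refl _
  | @tail b c _ hbc ih =>
    refine ih.trans ?_
    by_cases he : (Quot.mk _ b : FV G w1 w2) = Quot.mk _ c
    · rw [he]
    · exact SimpleGraph.Adj.reachable ⟨he, b, c, rfl, rfl, hbc⟩

theorem FoG_inv (hinv : ∀ (g : G) (x y : V), Γ.Adj x y → Γ.Adj (g • x) (g • y)) (w1 w2 : V)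
    (g : G) (x y : FV G w1 w2) (h : (FoG G Γ w1 w2).Adj x y) :
    (FoG G Γ w1 w2).Adj (g • x) (g • y) := by
  obtain ⟨hne, a, b, rfl, rfl, hab⟩ := h
  exact ⟨fun h => hne (smul_left_cancel g h), g • a, g • b, rfl, rfl, hinv g a b hab⟩

theorem FoG_coh (hinv : ∀ (g : G) (x y : V), Γ.Adj x y → Γ.Adj (g • x) (g • y)) {v w1 w2 : V}
    (h1 : v = w1 ∨ Γ.Adj v w1) (h2 : v = w2 ∨ Γ.Adj v w2) {H : Type*} [Group H]
    (hc : TrivCoh Γ H) : TrivCoh (FoG G Γ w1 w2) H := by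
  classical
  intro c hcc
  let m : V → FV G w1 w2 := Quot.mk _
  let c' : V → V → H := fun u v => if m u = m v then 1 else c (m u) (m v)
  obtain ⟨ψ, hψ⟩ := hc c' (by
    intro u v huv
    simp only [c']
    by_cases h : m u = m v
    · simp [h]
    · rw [if_neg h, if_neg (fun h' => h h'.symm)]
      exact hcc _ _ ⟨h, u, v, rfl, rfl, huv⟩)
  have hN : ∀ a b, (a = b ∨ Γ.Adj a b) → ψ b = ψ a * c' a b := by
    rintro a b (rfl | h)
    · simp [c']
    · exact hψ _ _ h
  have hgN : ∀ (g : G) (a b : V), (a = b ∨ Γ.Adj a b) → (g • a = g • b ∨ Γ.Adj (g • a) (g • b)) := by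
    rintro g a b (rfl | h)
    · exact Or.inl rfl
    · exact Or.inr (hinv g _ _ h)
  refine ⟨Quot.lift ψ ?_, ?_⟩
  · rintro _ _ ⟨g, rfl, rfl⟩
    rw [hN _ _ (hgN g _ _ h1), hN _ _ (hgN g _ _ h2)]
    have : m (g • w1) = m (g • w2) := FV_eq w1 w2 g
    simp only [c', this]
  · rintro _ _ ⟨hne, a, b, rfl, rfl, hab⟩
    show ψ b = ψ a * c (m a) (m b)
    have := hψ a b hab
    simp only [c'] at this
    rw [if_neg hne] at this
    exact this

/-- If `x` is not in the orbits of `w1, w2` its class is a singleton. -/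
theorem FV_exact {w1 w2 a b : V} (h : (Quot.mk _ a : FV G w1 w2) = Quot.mk _ b) :
    a = b ∨ ∃ g : G, b = g • w1 ∨ b = g • w2 := by
  have := Quot.eqvGen_exact h
  have key : ∀ a b, Relation.EqvGen (fr G w1 w2) a b → a = b ∨
      ((∃ g : G, a = g • w1 ∨ a = g • w2) ∧ (∃ g : G, b = g • w1 ∨ b = g • w2)) := by
    intro a b h
    induction h with
    | rel a b h =>
      obtain ⟨g, rfl, rfl⟩ := h
      exact Or.inr ⟨⟨g, Or.inl rfl⟩, ⟨g, Or.inr rfl⟩⟩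
    | refl => exact Or.inl rfl
    | symm a b _ ih =>
      rcases ih with rfl | ⟨h1, h2⟩
      · exact Or.inl rfl
      · exact Or.inr ⟨h2, h1⟩
    | trans a b c _ _ ih1 ih2 =>
      rcases ih1 with rfl | ⟨h1, h2⟩
      · exact ih2
      · rcases ih2 with rfl | ⟨h3, h4⟩
        · exact Or.inr ⟨h1, h2⟩
        · exact Or.inr ⟨h1, h4⟩
  rcases key a b this with h | h
  · exact Or.inl h
  · exact Or.inr h.2

end
end VF


namespace VF
open Set
open scoped Pointwise

section
variable {G : Type*} [Group G] {F : Subgroup G} {V : Type*} [MulAction G V] {Γ : SimpleGraph V}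

theorem step2 (h : GT F Γ) {Y : Set V} (hY : Tv F Γ Y) {a b c : V} {k k' : G}
    (hac : a = c ∨ Γ.Adj a c) (hcb : c = b ∨ Γ.Adj c b) (ha : k⁻¹ • a ∈ Y) (hb : k'⁻¹ • b ∈ Y) :
    k⁻¹ * k' ∈ (XX G Γ Y) ^ 2 := by
  obtain ⟨l, hl, hlc⟩ := hY.cov c
  have h1 := XX_of h ha (g' := l⁻¹) (by simpa using hlc) hac
  have h2 := XX_of h (g := l⁻¹) (by simpa using hlc) hb hcb
  rw [pow_two]
  exact ⟨_, h1, _, h2, by simp⟩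

theorem step4 (h : GT F Γ) {Y : Set V} (hY : Tv F Γ Y) {a b c d e : V} {k k' : G}
    (hac : a = c ∨ Γ.Adj a c) (hcd : c = d ∨ Γ.Adj c d) (hde : d = e ∨ Γ.Adj d e)
    (heb : e = b ∨ Γ.Adj e b) (ha : k⁻¹ • a ∈ Y) (hb : k'⁻¹ • b ∈ Y) :
    k⁻¹ * k' ∈ (XX G Γ Y) ^ 4 := by
  obtain ⟨l, hl, hld⟩ := hY.cov d
  have h1 := step2 h hY (k' := l⁻¹) hac hcd ha (by simpa using hld)
  have h2 := step2 h hY (k := l⁻¹) hde heb (by simpa using hld) hb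
  have : (4 : ℕ) = 2 + 2 := rfl
  rw [this, pow_add]
  exact ⟨_, h1, _, h2, by simp⟩

theorem pow_inv_mem {X : Set G} (hX : ∀ x ∈ X, x⁻¹ ∈ X) : ∀ m, ∀ a ∈ X ^ m, a⁻¹ ∈ X ^ m := by
  intro m
  induction m with
  | zero => rw [pow_zero]; rintro _ rfl; simp
  | succ m ih =>
    rintro _ ha
    rw [pow_succ] at ha
    obtain ⟨a, ha, b, hb, rfl⟩ := ha
    rw [pow_succ']
    exact ⟨b⁻¹, hX b hb, a⁻¹, ih a ha, by simp⟩

theorem one_mem_pow {X : Set G} (hX : (1 : G) ∈ X) (m : ℕ) : (1 : G) ∈ X ^ m := by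
  induction m with
  | zero => simp
  | succ m ih => rw [pow_succ]; exact ⟨1, ih, 1, hX, by simp⟩

theorem fold_K (h : GT F Γ) {Y : Set V} (hY : Tv F Γ Y) {v w1 w2 : V}
    (h1 : v = w1 ∨ Γ.Adj v w1) (h2 : v = w2 ∨ Γ.Adj v w2) (hXf : (XX G Γ Y).Finite)
    (θ : G →* G) {U : Type*} [MulAction G U] (f : V → U) (hf : ∀ (g : G) x, f (g • x) = θ g • f x)
    (hff : f w1 = f w2) {n : ℕ}
    (hst : ∀ u : U, {g : G | g • u = u}.Finite ∧ {g : G | g • u = u}.ncard ≤ n)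
    (hNK : ∀ z ∈ (XX G Γ Y) ^ (8 * n), θ z = 1 → z = 1) :
    {g : G | g • (Quot.mk _ w1 : FV G w1 w2) = Quot.mk _ w1}.Finite := by
  set X := XX G Γ Y with hX
  have hXi : ∀ x ∈ X, x⁻¹ ∈ X := fun x hx => XX_inv h hx
  have hX1 : (1 : G) ∈ X := XX_one hY.ne
  let K := MulAction.stabilizer G (Quot.mk _ w1 : FV G w1 w2)
  have hKd : ∀ g, g ∈ K ↔ (Quot.mk _ (g • w1) : FV G w1 w2) = Quot.mk _ w1 := fun g => Iff.rfl
  have hsymm : ∀ {a b : V}, (a = b ∨ Γ.Adj a b) → (b = a ∨ Γ.Adj b a) := by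
    rintro a b (rfl | h)
    · exact Or.inl rfl
    · exact Or.inr h.symm
  have hgN : ∀ (g : G) {a b : V}, (a = b ∨ Γ.Adj a b) → (g • a = g • b ∨ Γ.Adj (g • a) (g • b)) := by
    rintro g a b (rfl | h')
    · exact Or.inl rfl
    · exact Or.inr (h.inv g _ _ h')
  obtain ⟨l, hl, hlw⟩ := hY.cov w1
  obtain ⟨k0, hk0⟩ : ∃ k0 : G, k0⁻¹ • w1 ∈ Y := ⟨l⁻¹, by simpa using hlw⟩
  let A : Set G := {t | t ∈ K ∧ k0⁻¹ * (t * k0) ∈ X ^ 4}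
  have hdisp : ∀ t c d e, (w1 = c ∨ Γ.Adj w1 c) → (c = d ∨ Γ.Adj c d) → (d = e ∨ Γ.Adj d e) →
      (e = t • w1 ∨ Γ.Adj e (t • w1)) → t ∈ K → t ∈ A := by
    intro t c d e e1 e2 e3 e4 ht
    refine ⟨ht, step4 h hY e1 e2 e3 e4 hk0 ?_⟩
    rw [mul_inv_rev, mul_smul, inv_smul_smul]
    exact hk0
  have hw12 : (Quot.mk _ w1 : FV G w1 w2) = Quot.mk _ w2 := by
    have := FV_eq (G := G) w1 w2 1; rwa [one_smul, one_smul] at this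
  have c1 : ∀ t : G, t • w1 = w1 → t ∈ A := by
    intro t ht
    exact hdisp t w1 w1 w1 (Or.inl rfl) (Or.inl rfl) (Or.inl rfl) (Or.inl ht.symm)
      (by rw [hKd, ht])
  have c2 : ∀ t : G, t • w1 = w2 → t ∈ A := by
    intro t ht
    exact hdisp t v w2 w2 (hsymm h1) h2 (Or.inl rfl) (Or.inl ht.symm) (by rw [hKd, ht, hw12])
  have c3 : ∀ t : G, t • w2 = w1 → t ∈ A := by
    intro t ht
    refine hdisp t (t • v) (t • w1) (t • w1) ?_ (hgN t h1) (Or.inl rfl) (Or.inl rfl) ?_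
    · have := hsymm (hgN t h2)
      rwa [ht] at this
    · rw [hKd, FV_eq, ht]
  have c4 : ∀ t : G, t • w2 = w2 → t ∈ A := by
    intro t ht
    refine hdisp t v w2 (t • v) (hsymm h1) h2 ?_ (hgN t h1) ?_
    · have := hsymm (hgN t h2)
      rwa [ht] at this
    · rw [hKd, FV_eq, ht, hw12]
  set K0 := Subgroup.closure A with hK0
  let C : Set V := {x | ∃ k ∈ K0, x = k • w1 ∨ x = k • w2}
  have hcl1 : ∀ g : G, g • w1 ∈ C → g ∈ K0 := by
    rintro g ⟨k, hk, hg | hg⟩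
    · have : k⁻¹ * g ∈ A := c1 _ (by rw [mul_smul, hg, inv_smul_smul])
      have := mul_mem hk (Subgroup.subset_closure this)
      simpa using this
    · have : k⁻¹ * g ∈ A := c2 _ (by rw [mul_smul, hg, inv_smul_smul])
      have := mul_mem hk (Subgroup.subset_closure this)
      simpa using this
  have hcl2 : ∀ g : G, g • w2 ∈ C → g ∈ K0 := by
    rintro g ⟨k, hk, hg | hg⟩
    · have : k⁻¹ * g ∈ A := c3 _ (by rw [mul_smul, hg, inv_smul_smul])
      have := mul_mem hk (Subgroup.subset_closure this)
      simpa using this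
    · have : k⁻¹ * g ∈ A := c4 _ (by rw [mul_smul, hg, inv_smul_smul])
      have := mul_mem hk (Subgroup.subset_closure this)
      simpa using this
  have hC : ∀ a b, Relation.EqvGen (fr G w1 w2) a b → (a ∈ C ↔ b ∈ C) := by
    intro a b hab
    induction hab with
    | rel a b h =>
      obtain ⟨g, rfl, rfl⟩ := h
      exact ⟨fun h => ⟨g, hcl1 g h, Or.inr rfl⟩, fun h => ⟨g, hcl2 g h, Or.inl rfl⟩⟩
    | refl => exact Iff.rfl
    | symm a b _ ih => exact ih.symm
    | trans a b c _ _ ih1 ih2 => exact ih1.trans ih2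
  have hKK : K ≤ K0 := by
    intro k hk
    rw [hKd] at hk
    exact hcl1 k ((hC _ _ (Quot.eqvGen_exact hk)).2 ⟨1, one_mem _, Or.inl (by simp)⟩)
  have hKK' : K0 ≤ K := by
    rw [hK0, Subgroup.closure_le]
    exact fun t ht => ht.1
  have hfK : ∀ k ∈ K, θ k • f w1 = f w1 := by
    intro k hk
    rw [hKd] at hk
    have hl : ∀ a b, fr G w1 w2 a b → f a = f b := by
      rintro _ _ ⟨g, rfl, rfl⟩
      rw [hf, hf, hff]
    have := congrArg (Quot.lift f hl) hk
    rw [← hf]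
    exact this
  have hpow : ∀ m, ∀ z ∈ A ^ m, k0⁻¹ * (z * k0) ∈ X ^ (4 * m) := by
    intro m
    induction m with
    | zero => rw [pow_zero]; rintro _ rfl; simp
    | succ m ih =>
      intro z hz
      rw [pow_succ] at hz
      obtain ⟨a, ha, b, hb, rfl⟩ := hz
      rw [mul_add, pow_add]
      exact ⟨_, ih a ha, _, hb.2, by group⟩
  have hfin : (K0 : Set G).Finite := by
    refine finite_closure (A := A) ?_ ?_ ?_ θ (hst (f w1)).1 (hst (f w1)).2 ?_ ?_
    · refine Set.Finite.of_finite_image (f := fun t => k0⁻¹ * (t * k0))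
        ((finite_pow hXf 4).subset ?_) ?_
      · rintro _ ⟨t, ht, rfl⟩; exact ht.2
      · intro a _ b _ hab
        simpa using hab
    · exact c1 1 (one_smul _ _)
    · rintro a ⟨ha, ha'⟩
      refine ⟨inv_mem ha, ?_⟩
      have := pow_inv_mem hXi 4 _ ha'
      have e : (k0⁻¹ * (a * k0))⁻¹ = k0⁻¹ * (a⁻¹ * k0) := by group
      rwa [e] at this
    · intro k hk
      exact hfK k (hKK' hk)
    · intro z hz hz1
      have := hpow _ z hz
      rw [← mul_assoc, (by norm_num : 4 * 2 = 8)] at this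
      have := hNK _ this (by simp [hz1])
      have e : z = k0 * (k0⁻¹ * (z * k0)) * k0⁻¹ := by group
      rw [e, this]; group
  exact hfin.subset hKK

/-- Main induction. -/
theorem fold_main.{u,w} {G : Type*} [Group G] {F : Subgroup G} [F.Normal]
    [Finite (F →* Multiplicative (ZMod 2))] [Finite (G ⧸ F)]
    (htf : ∀ x ∈ F, IsOfFinOrder x → x = 1) (θ : G →* G)
    {U : Type w} [MulAction G U] {Δ : SimpleGraph U} (hΔ : Δ.IsAcyclic) {n : ℕ}
    (hst : ∀ u : U, {g : G | g • u = u}.Finite ∧ {g : G | g • u = u}.ncard ≤ n)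
    (hNK : ∀ X : Set G, X.Finite → X.Nonempty → X.ncard ≤ Nat.card (G ⧸ F) *
      (Nat.card ((F →* Multiplicative (ZMod 2)) × Bool) + 1) ^ 2 → Subgroup.closure X = ⊤ → UP X G →
        ∀ z ∈ X ^ (8 * (n + 1)), θ z = 1 → z = 1) (k : ℕ) :
    ∀ (V : Type u) [MulAction G V] (Γ : SimpleGraph V), GT F Γ → TrivCoh Γ G →
      (∃ W : Set V, W.Finite ∧ W.ncard ≤ k ∧ ∀ x : V, ∃ h ∈ F, h • x ∈ W) →
      ∀ f : V → U, (∀ (g : G) x, f (g • x) = θ g • f x) →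
        (∀ a b, Γ.Adj a b → f a = f b ∨ Δ.Adj (f a) (f b)) → Function.Injective θ := by
  induction k with
  | zero =>
    rintro V _ Γ h hc ⟨W, hWf, hW0, hW⟩
    exfalso
    obtain ⟨o⟩ := h.conn.nonempty
    obtain ⟨l, _, hl⟩ := hW o
    have : W = ∅ := (Set.ncard_eq_zero hWf).1 (Nat.le_zero.1 hW0)
    rw [this] at hl
    exact hl
  | succ k ih =>
    rintro V _ Γ h hc ⟨W, hWf, hWk, hW⟩ f hfe hfw
    obtain ⟨Y, hY⟩ := h.exists_Tv
    obtain ⟨hXf, hXc⟩ := XX_bound h hY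
    have hNK' := hNK _ hXf ⟨1, XX_one hY.ne⟩ hXc (XX_gen h hY) (XX_UP h hY hc)
    by_cases hno : ∀ v w1 w2, (v = w1 ∨ Γ.Adj v w1) → (v = w2 ∨ Γ.Adj v w2) → f w1 = f w2 → w1 = w2
    · have hinj := inj_of_locinj h.conn hΔ f hfw hno
      rw [injective_iff_map_eq_one]
      intro g hg
      obtain ⟨y, hy⟩ := hY.ne
      have hgy : g • y = y := hinj (by rw [hfe, hg, one_smul])
      apply hNK' g _ hg
      have : g ∈ XX G Γ Y := ⟨y, hy, y, hy, Or.inl hgy.symm⟩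
      rw [(by ring : 8 * (n + 1) = (8 * n + 7) + 1), pow_succ]
      exact ⟨1, one_mem_pow (XX_one hY.ne) _, g, this, by simp⟩
    · push Not at hno
      obtain ⟨v, w1, w2, h1, h2, hff, hne⟩ := hno
      have hfin := fold_K h hY h1 h2 hXf θ f hfe hff (n := n + 1)
        (fun u => ⟨(hst u).1, (hst u).2.trans (Nat.le_succ n)⟩) hNK'
      have hKF : ∀ g ∈ F, g • (Quot.mk _ w1 : FV G w1 w2) = Quot.mk _ w1 → g = 1 := by
        intro g hg hgw
        apply htf g hg
        have hfi : Finite (MulAction.stabilizer G (Quot.mk _ w1 : FV G w1 w2)) := hfin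
        have := isOfFinOrder_of_finite
          (⟨g, hgw⟩ : MulAction.stabilizer G (Quot.mk _ w1 : FV G w1 w2))
        exact Submonoid.isOfFinOrder_coe.2 this
      have hw12 : (Quot.mk _ w1 : FV G w1 w2) = Quot.mk _ w2 := by
        have := FV_eq (G := G) w1 w2 1; rwa [one_smul, one_smul] at this
      have hKF' : ∀ (l : G), ∀ g ∈ F, g • (Quot.mk _ (l • w1) : FV G w1 w2) = Quot.mk _ (l • w1) →
          g = 1 := by
        intro l g hg hgw
        have h3 := hKF (l⁻¹ * g * l) (by
          simpa using (inferInstance : F.Normal).conj_mem g hg l⁻¹) (by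
          have := congrArg (fun q => l⁻¹ • q) hgw
          simp only [FV_smul_mk, smul_smul] at this ⊢
          simpa [mul_assoc] using this)
        have e : g = l * (l⁻¹ * g * l) * l⁻¹ := by group
        rw [e, h3]; group
      -- cover
      obtain ⟨l1, hl1, hlW1⟩ := hW w1
      obtain ⟨l2, hl2, hlW2⟩ := hW w2
      have hne12 : l1 • w1 ≠ l2 • w2 := by
        intro he
        have hh : (l2⁻¹ * l1) • w1 = w2 := by rw [mul_smul, he, inv_smul_smul]
        have := hKF (l2⁻¹ * l1) (mul_mem (inv_mem hl2) hl1) (by rw [FV_smul_mk, hh, hw12])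
        rw [this, one_smul] at hh
        exact hne hh
      let m : V → FV G w1 w2 := Quot.mk _
      have hcov : ∃ W' : Set (FV G w1 w2), W'.Finite ∧ W'.ncard ≤ k ∧
          ∀ x : FV G w1 w2, ∃ h ∈ F, h • x ∈ W' := by
        refine ⟨m '' (W \ {l2 • w2}), (hWf.subset Set.sdiff_subset).image _, ?_, ?_⟩
        · refine (Set.ncard_image_le (hWf.subset Set.sdiff_subset)).trans ?_
          rw [Set.ncard_sdiff_singleton_of_mem hlW2]
          omega
        · rintro ⟨x⟩
          obtain ⟨l, hl, hlx⟩ := hW x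
          by_cases hlx2 : l • x = l2 • w2
          · refine ⟨l1 * l2⁻¹ * l, mul_mem (mul_mem hl1 (inv_mem hl2)) hl, l1 • w1,
              ⟨hlW1, hne12⟩, ?_⟩
            show m (l1 • w1) = m ((l1 * l2⁻¹ * l) • x)
            rw [mul_smul, hlx2, mul_smul, inv_smul_smul]
            exact FV_eq w1 w2 l1
          · exact ⟨l, hl, l • x, ⟨hlx, hlx2⟩, rfl⟩
      have hGT : GT F (FoG G Γ w1 w2) := by
        refine ⟨FoG_inv h.inv w1 w2, FoG_conn h.conn w1 w2, FoG_coh h.inv h1 h2 h.coh2, ?_, ?_⟩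
        · rintro g hg ⟨x⟩ hgx
          change g • (Quot.mk _ x : FV G w1 w2) = Quot.mk _ x at hgx
          have hgx' := hgx
          rw [FV_smul_mk] at hgx
          rcases FV_exact hgx with he | ⟨l, he | he⟩
          · exact h.free g hg x he
          · subst he
            exact hKF' l g hg hgx'
          · subst he
            rw [← FV_eq] at hgx'
            exact hKF' l g hg hgx'
        · obtain ⟨W', hW', _, hW''⟩ := hcov
          exact ⟨W', hW', hW''⟩
      refine ih _ (FoG G Γ w1 w2) hGT (FoG_coh h.inv h1 h2 hc) hcov (Quot.lift f ?_) ?_ ?_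
      · rintro _ _ ⟨g, rfl, rfl⟩
        rw [hfe, hfe, hff]
      · rintro g ⟨x⟩
        exact hfe g x
      · rintro _ _ ⟨_, a, b, rfl, rfl, hab⟩
        exact hfw a b hab

end
end VF


namespace VF
open Set
open scoped Pointwise

section
variable {V : Type*} {Γ : SimpleGraph V} {H : Type*} [Group H]

/-- Product along a walk. -/
def wprod (c : V → V → H) : ∀ {a b : V}, Γ.Walk a b → H
  | _, _, .nil => 1
  | a, _, .cons (v := b) _ p => c a b * wprod c p

theorem wprod_append (c : V → V → H) {a b d : V} (p : Γ.Walk a b) (q : Γ.Walk b d) :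
    wprod c (p.append q) = wprod c p * wprod c q := by
  induction p with
  | nil => simp [wprod]
  | cons h p ih => simp [wprod, ih, mul_assoc]

theorem wprod_concat (c : V → V → H) {a b d : V} (p : Γ.Walk a b) (h : Γ.Adj b d) :
    wprod c (p.concat h) = wprod c p * c b d := by
  rw [SimpleGraph.Walk.concat_eq_append, wprod_append]
  simp [wprod]

theorem tree_triv (hT : Γ.IsTree) : TrivCoh Γ H := by
  classical
  intro c hc
  obtain ⟨o⟩ := hT.connected.nonempty
  have hP := hT.existsUnique_path
  choose P hP hPu using hP
  simp only at hP hPu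
  have key : ∀ u v, Γ.Adj u v → v ∉ (P o u).support →
      wprod c (P o v) = wprod c (P o u) * c u v := by
    intro u v huv hv
    rw [← wprod_concat c (P o u) huv]
    congr 1
    symm
    apply hPu
    exact (hP o u).concat hv huv
  refine ⟨fun v => wprod c (P o v), ?_⟩
  intro u v huv
  by_cases hv : v ∈ (P o u).support
  · by_cases hu : u ∈ (P o v).support
    · exfalso
      have h1 := (P o u).takeUntil v hv
      have h2 : (P o u).takeUntil v hv = P o v := hPu _ _ _ ((hP o u).takeUntil hv)
      rw [← h2] at hu
      have h3 := SimpleGraph.Walk.endpoint_notMem_support_takeUntil (hP o u) hv huv.ne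
      exact h3 hu
    · have := key v u huv.symm hu
      simp only
      rw [this, mul_assoc, hc v u huv.symm, mul_one]
  · exact key u v huv hv

theorem tree_of_coh (hΓ : Γ.Connected) (hc : TrivCoh Γ (Multiplicative (ZMod 2))) : Γ.IsTree := by
  classical
  refine ⟨hΓ, ?_⟩
  rw [SimpleGraph.isAcyclic_iff_forall_adj_isBridge]
  intro a b hab
  rw [SimpleGraph.isBridge_iff]
  intro hr
  obtain ⟨ψ, hψ⟩ := hc (fun u v => if s(u, v) = s(a, b) then Multiplicative.ofAdd 1 else 1) (by
    intro u v huv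
    rw [Sym2.eq_swap (a := v)]
    split_ifs
    · decide
    · simp)
  have h1 := hψ a b hab
  rw [if_pos rfl] at h1
  have h2 : ψ b = ψ a := by
    rw [SimpleGraph.reachable_iff_reflTransGen] at hr
    have hall : ∀ x, Relation.ReflTransGen (Γ.deleteEdges {s(a, b)}).Adj a x → ψ x = ψ a := by
     intro x hr
     induction hr with
     | refl => rfl
     | @tail x y _ hxy ih =>
       rw [SimpleGraph.deleteEdges_adj] at hxy
       have := hψ x y hxy.1
       rw [if_neg (by simpa using hxy.2), mul_one] at this
       rw [this, ih]
    exact hall b hr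
  rw [h2] at h1
  have : (1 : Multiplicative (ZMod 2)) = Multiplicative.ofAdd 1 := by
    have := mul_left_cancel (a := ψ a) ((mul_one _).trans h1)
    exact this
  exact absurd this (by decide)

end
end VF


namespace VF
open Set
open scoped Pointwise

section
variable {T : Type*} {Γ : SimpleGraph T}

/-- Nonempty cliques: vertices of the barycentric subdivision. -/
def T2 (Γ : SimpleGraph T) : Type _ :=
  {A : Set T // A.Nonempty ∧ ∀ x ∈ A, ∀ y ∈ A, x ≠ y → Γ.Adj x y}

/-- Subdivided graph. -/
def G2 (Γ : SimpleGraph T) : SimpleGraph (T2 Γ) where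
  Adj A B := A.1 ⊂ B.1 ∨ B.1 ⊂ A.1
  symm := ⟨fun _ _ h => h.symm⟩
  loopless := ⟨fun _ h => h.elim (fun h => h.ne rfl) (fun h => h.ne rfl)⟩

/-- Singleton clique. -/
def sv (Γ : SimpleGraph T) (u : T) : T2 Γ := ⟨{u}, ⟨u, rfl⟩, by
  rintro x rfl y rfl h; exact absurd rfl h⟩

/-- Edge clique. -/
def ev {u v : T} (h : Γ.Adj u v) : T2 Γ := ⟨{u, v}, ⟨u, Or.inl rfl⟩, by
  rintro x (rfl | rfl) y (rfl | rfl) hne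
  · exact absurd rfl hne
  · exact h
  · exact h.symm
  · exact absurd rfl hne⟩

theorem no_triangle (hT : Γ.IsTree) {a b c : T} (h1 : Γ.Adj a b) (h2 : Γ.Adj b c) (h3 : Γ.Adj a c) :
    False := by
  let p : Γ.Walk a c := .cons h3 .nil
  let q : Γ.Walk a c := .cons h1 (.cons h2 .nil)
  have hp : p.IsPath := by simp [p, h3.ne]
  have hq : q.IsPath := by simp [q, h3.ne, h1.ne, h2.ne]
  have := (hT.existsUnique_path a c).unique hp hq
  have := congrArg SimpleGraph.Walk.length this
  simp [p, q] at this

theorem T2_cases (hT : Γ.IsTree) (A : T2 Γ) {u : T} (hu : u ∈ A.1) :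
    A = sv Γ u ∨ ∃ v, ∃ h : Γ.Adj u v, A = ev h := by
  by_cases h : ∀ v ∈ A.1, v = u
  · left
    apply Subtype.ext
    ext v
    exact ⟨fun hv => h v hv, fun hv => by rw [show v = u from hv]; exact hu⟩
  · push Not at h
    obtain ⟨v, hv, hvu⟩ := h
    have huv := A.2.2 u hu v hv hvu.symm
    refine Or.inr ⟨v, huv, ?_⟩
    apply Subtype.ext
    ext w
    constructor
    · intro hw
      by_contra hcon
      simp only [ev, mem_insert_iff, mem_singleton_iff, not_or] at hcon
      exact no_triangle hT huv (A.2.2 v hv w hw (Ne.symm hcon.2)) (A.2.2 u hu w hw (Ne.symm hcon.1))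
    · rintro (rfl | rfl)
      · exact hu
      · exact hv

theorem sv_ssubset {u : T} {B : T2 Γ} (hu : u ∈ B.1) (hB : B ≠ sv Γ u) : (sv Γ u).1 ⊂ B.1 := by
  refine ssubset_of_subset_of_ne ?_ (fun h => hB (Subtype.ext h.symm))
  rintro _ rfl
  exact hu

theorem ssubset_sv (hT : Γ.IsTree) {A B : T2 Γ} (h : A.1 ⊂ B.1) : ∃ u ∈ B.1, A = sv Γ u := by
  obtain ⟨u, hu⟩ := A.2.1
  refine ⟨u, h.1 hu, ?_⟩
  rcases T2_cases hT A hu with h1 | ⟨v, huv, rfl⟩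
  · exact h1
  · exfalso
    rcases T2_cases hT B (h.1 hu) with rfl | ⟨w, huw, rfl⟩
    · have : v ∈ (sv Γ u).1 := h.1 (Or.inr rfl)
      exact huv.ne (show v = u from this).symm
    · have : v ∈ (ev huw).1 := h.1 (Or.inr rfl)
      rcases this with h' | h'
      · exact huv.ne h'.symm
      · rw [mem_singleton_iff] at h'
        subst h'
        exact h.ne rfl

theorem ev_ne {u v : T} (h : Γ.Adj u v) (w : T) : ev h ≠ sv Γ w := by
  intro he
  have h1 : u ∈ (sv Γ w).1 := by rw [← he]; exact Or.inl rfl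
  have h2 : v ∈ (sv Γ w).1 := by rw [← he]; exact Or.inr rfl
  exact h.ne ((show u = w from h1).trans (show v = w from h2).symm)

theorem ev_symm {u v : T} (h : Γ.Adj u v) : ev h.symm = ev h := by
  apply Subtype.ext
  exact Set.pair_comm _ _

theorem adj_sv_ev {u v : T} (h : Γ.Adj u v) : (G2 Γ).Adj (sv Γ u) (ev h) :=
  Or.inl (sv_ssubset (Or.inl rfl) (ev_ne h u))

theorem adj_ev_sv {u v : T} (h : Γ.Adj u v) : (G2 Γ).Adj (ev h) (sv Γ v) :=
  Or.inr (sv_ssubset (Or.inr rfl) (ev_ne h v))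

theorem G2_conn (hT : Γ.IsTree) : (G2 Γ).Connected := by
  obtain ⟨o⟩ := hT.connected.nonempty
  have : Nonempty (T2 Γ) := ⟨sv Γ o⟩
  have h1 : ∀ A : T2 Γ, ∃ u, (G2 Γ).Reachable (sv Γ u) A := by
    intro A
    obtain ⟨u, hu⟩ := A.2.1
    refine ⟨u, ?_⟩
    rcases T2_cases hT A hu with rfl | ⟨v, huv, rfl⟩
    · exact SimpleGraph.Reachable.refl _
    · exact (adj_sv_ev huv).reachable
  have h2 : ∀ u v : T, (G2 Γ).Reachable (sv Γ u) (sv Γ v) := by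
    intro u v
    have h := hT.connected.preconnected u v
    rw [SimpleGraph.reachable_iff_reflTransGen] at h
    induction h with
    | refl => exact SimpleGraph.Reachable.refl _
    | tail _ hbc ih => exact ih.trans ((adj_sv_ev hbc).reachable.trans (adj_ev_sv hbc).reachable)
  refine ⟨?_⟩
  intro A B
  obtain ⟨u, hu⟩ := h1 A
  obtain ⟨v, hv⟩ := h1 B
  exact hu.symm.trans ((h2 u v).trans hv)

theorem G2_coh (hT : Γ.IsTree) {H : Type*} [Group H] : TrivCoh (G2 Γ) H := by
  classical
  intro c hc
  let C : T → T → H := fun u v => if h : Γ.Adj u v then c (sv Γ u) (ev h) * c (ev h) (sv Γ v) else 1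
  obtain ⟨Ψ, hΨ⟩ := tree_triv (H := H) hT C (by
    intro u v huv
    simp only [C]
    rw [dif_pos huv, dif_pos huv.symm, ev_symm huv, mul_assoc, ← mul_assoc (c (ev huv) (sv Γ v)),
      hc _ _ (adj_ev_sv huv), one_mul, hc _ _ (adj_sv_ev huv)])
  let r : T2 Γ → T := fun A => A.2.1.choose
  have hr : ∀ A : T2 Γ, r A ∈ A.1 := fun A => A.2.1.choose_spec
  let ψ : T2 Γ → H := fun A => if A = sv Γ (r A) then Ψ (r A) else Ψ (r A) * c (sv Γ (r A)) A
  have hs : ∀ u, ψ (sv Γ u) = Ψ u := by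
    intro u
    have : r (sv Γ u) = u := hr (sv Γ u)
    simp only [ψ, this]
    simp
  have he : ∀ A : T2 Γ, ∀ u ∈ A.1, A ≠ sv Γ u → ψ A = Ψ u * c (sv Γ u) A := by
    intro A u hu hA
    rcases T2_cases hT A hu with h | ⟨v, huv, rfl⟩
    · exact absurd h hA
    · simp only [ψ]
      rw [if_neg (ev_ne huv _)]
      rcases hr (ev huv) with h | h
      · rw [h]
      · rw [mem_singleton_iff] at h
        rw [h, hΨ u v huv]
        simp only [C]
        rw [dif_pos huv, mul_assoc, mul_assoc, hc _ _ (adj_ev_sv huv), mul_one]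
  refine ⟨ψ, ?_⟩
  have key : ∀ A B : T2 Γ, A.1 ⊂ B.1 → ψ B = ψ A * c A B := by
    intro A B hAB
    obtain ⟨u, hu, rfl⟩ := ssubset_sv hT hAB
    rw [hs, he B u hu]
    rintro rfl
    exact hAB.ne rfl
  rintro A B (h | h)
  · exact key A B h
  · rw [key B A h, mul_assoc, hc B A (Or.inl h), mul_one]

theorem G2_tree (hT : Γ.IsTree) : (G2 Γ).IsTree := tree_of_coh (G2_conn hT) (G2_coh hT)

/-- Center of a finite set. -/
theorem center_clique (hT : Γ.IsTree) (Q : Finset T) (hQ : Q.Nonempty) :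
    ∃ M : T2 Γ, M.1 = {x | ∀ y, Q.sup' hQ (fun q => Γ.dist x q) ≤ Q.sup' hQ (fun q => Γ.dist y q)} := by
  classical
  let ecc : T → ℕ := fun x => Q.sup' hQ (fun q => Γ.dist x q)
  have hdist : ∀ x y z q, (∀ p : Γ.Walk x y, z ∈ p.support) → z ≠ x → z ≠ y →
      Γ.dist z q < max (Γ.dist x q) (Γ.dist y q) := by
    intro x y z q hz hzx hzy
    obtain ⟨p1, hp1⟩ := hT.connected.exists_walk_length_eq_dist x q
    obtain ⟨p2, hp2⟩ := hT.connected.exists_walk_length_eq_dist y q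
    have := hz (p1.append p2.reverse)
    rw [SimpleGraph.Walk.mem_support_append_iff] at this
    have aux : ∀ (x : T) (p1 : Γ.Walk x q), p1.length = Γ.dist x q → z ≠ x → z ∈ p1.support →
        Γ.dist z q < Γ.dist x q := by
      intro x p1 hp1 hzx hz1
      have h1 := congrArg SimpleGraph.Walk.length (p1.take_spec hz1)
      rw [SimpleGraph.Walk.length_append] at h1
      have h2 : 0 < (p1.takeUntil z hz1).length := by
        rw [Nat.pos_iff_ne_zero]
        intro h0
        exact hzx (SimpleGraph.Walk.eq_of_length_eq_zero h0).symm
      have h3 := SimpleGraph.dist_le (p1.dropUntil z hz1)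
      omega
    rcases this with h | h
    · exact lt_max_of_lt_left (aux x p1 hp1 hzx h)
    · rw [SimpleGraph.Walk.support_reverse, List.mem_reverse] at h
      exact lt_max_of_lt_right (aux y p2 hp2 hzy h)
  refine ⟨⟨{x | ∀ y, ecc x ≤ ecc y}, ?_, ?_⟩, rfl⟩
  · obtain ⟨o⟩ := hT.connected.nonempty
    obtain ⟨x, _, hx⟩ := exists_minimalFor_of_wellFoundedLT (fun _ : T => True) ecc ⟨o, trivial⟩
    refine ⟨x, fun y => ?_⟩
    rcases le_total (ecc x) (ecc y) with h | h
    · exact h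
    · exact hx (j := y) trivial h
  · intro x hx y hy hxy
    by_contra hadj
    obtain ⟨P, hP, hPu⟩ := hT.existsUnique_path x y
    cases P with
    | nil => exact hxy rfl
    | @cons _ z _ hxz P' =>
      have hzy : z ≠ y := by
        rintro rfl; exact hadj hxz
      have hz : ∀ p : Γ.Walk x y, z ∈ p.support := by
        intro p
        have := hPu p.bypass p.bypass_isPath
        apply p.support_bypass_subset_support
        rw [this]
        simp
      have hlt : ecc z < ecc x := by
        simp only [ecc]
        rw [Finset.sup'_lt_iff]
        intro q hq
        have h1 := hdist x y z q hz hxz.ne.symm hzy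
        have h2 : Γ.dist x q ≤ ecc x := Finset.le_sup' (fun q => Γ.dist x q) hq
        have h3 : Γ.dist y q ≤ ecc y := Finset.le_sup' (fun q => Γ.dist y q) hq
        have h4 := hy x
        have : max (Γ.dist x q) (Γ.dist y q) ≤ ecc x := max_le h2 (h3.trans h4)
        exact lt_of_lt_of_le h1 this
      exact absurd (hx z) (not_le.2 hlt)

end
end VF


namespace VF
open Set
open scoped Pointwise

section
universe u
variable {G : Type u} [Group G] {F : Subgroup G}

theorem cover_F [F.FiniteIndex] {U : Type*} [MulAction G U] {W : Set U} (hW : W.Finite)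
    (hc : ∀ x : U, ∃ g : G, g • x ∈ W) :
    ∃ W' : Set U, W'.Finite ∧ ∀ x : U, ∃ h ∈ F, h • x ∈ W' := by
  refine ⟨⋃ q : G ⧸ F, q.out⁻¹ • W, Set.finite_iUnion fun q => hW.smul_set, ?_⟩
  intro x
  obtain ⟨g, hg⟩ := hc x
  have hq : (QuotientGroup.mk (QuotientGroup.mk g : G ⧸ F).out : G ⧸ F) = QuotientGroup.mk g :=
    Quotient.out_eq _
  refine ⟨_, QuotientGroup.eq.1 hq, mem_iUnion.2 ⟨QuotientGroup.mk g, ?_⟩⟩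
  rw [mul_smul]
  exact Set.smul_mem_smul_set hg

theorem stab_bound [F.Normal] [Finite (G ⧸ F)] {U : Type*} [MulAction G U]
    (hfree : ∀ h ∈ F, ∀ x : U, h • x = x → h = 1) (u : U) :
    {g : G | g • u = u}.Finite ∧ {g : G | g • u = u}.ncard ≤ Nat.card (G ⧸ F) := by
  have hinj : InjOn (QuotientGroup.mk : G → G ⧸ F) {g : G | g • u = u} := by
    intro a ha b hb hab
    have h1 := QuotientGroup.eq.1 hab
    have h2 := hfree _ h1 u (by
      rw [mul_smul, show b • u = u from hb, inv_smul_eq_iff, show a • u = u from ha])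
    exact inv_mul_eq_one.1 h2
  refine ⟨Set.Finite.of_finite_image (Set.toFinite _) hinj, ?_⟩
  have := Set.ncard_le_ncard_of_injOn _ (fun a _ => Set.mem_univ _) hinj Set.finite_univ
  rwa [Set.ncard_univ] at this

variable {T : Type u} [MulAction G T] {Γ : SimpleGraph T}

theorem dist_smul' (hT : Γ.IsTree)
    (hinv : ∀ (g : G) (x y : T), Γ.Adj x y → Γ.Adj (g • x) (g • y)) (g : G) (x y : T) :
    Γ.dist (g • x) (g • y) ≤ Γ.dist x y := by
  obtain ⟨p, hp⟩ := hT.connected.exists_walk_length_eq_dist x y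
  let φ : Γ →g Γ := ⟨fun x => g • x, fun h => hinv g _ _ h⟩
  rw [← hp, ← SimpleGraph.Walk.length_map φ p]
  exact SimpleGraph.dist_le (p.map φ)

/-- Action on the subdivision. -/
@[reducible] def act2 (hinv : ∀ (g : G) (x y : T), Γ.Adj x y → Γ.Adj (g • x) (g • y)) :
    MulAction G (T2 Γ) where
  smul g A := ⟨g • A.1, A.2.1.smul_set, by
    rintro _ ⟨x, hx, rfl⟩ _ ⟨y, hy, rfl⟩ hne
    exact hinv g _ _ (A.2.2 x hx y hy (fun h => hne (by rw [h])))⟩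
  one_smul A := Subtype.ext (one_smul G A.1)
  mul_smul a b A := Subtype.ext (mul_smul a b A.1)

theorem exists_T2 [F.FiniteIndex] (htf : ∀ x ∈ F, IsOfFinOrder x → x = 1) (hT : Γ.IsTree)
    (hinv : ∀ (g : G) (x y : T), Γ.Adj x y → Γ.Adj (g • x) (g • y))
    (hfree : ∀ h ∈ F, ∀ x : T, h • x = x → h = 1)
    (hD : ∃ D : Set (T × T), D.Finite ∧ ∀ x y, Γ.Adj x y → ∃ g : G, (g • x, g • y) ∈ D)
    (hW : ∃ W : Set T, W.Finite ∧ ∀ x : T, ∃ g : G, g • x ∈ W) :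
    ∃ (U : Type u) (_ : MulAction G U) (Δ : SimpleGraph U) (o : U → U → Prop), Δ.IsTree ∧
      (∀ a b, Δ.Adj a b ↔ o a b ∨ o b a) ∧ (∀ a b, o a b → ¬ o b a) ∧
      (∀ (g : G) a b, o a b → o (g • a) (g • b)) ∧ GT F Δ ∧ (∀ b, {a | o a b}.Finite) ∧
      ∀ P : Subgroup G, Finite P → ∃ u : U, ∀ p ∈ P, p • u = u := by
  classical
  let act := act2 hinv
  have hsm : ∀ (g : G) (A : T2 Γ), (g • A).1 = g • A.1 := fun g A => rfl
  have hval : Function.Injective (Subtype.val : T2 Γ → Set T) := Subtype.val_injective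
  have hoinv : ∀ (g : G) (a b : T2 Γ), a.1 ⊂ b.1 → (g • a).1 ⊂ (g • b).1 := by
    intro g a b h
    rw [hsm, hsm]
    exact ⟨Set.smul_set_mono h.1, fun h' => h.2 (Set.smul_set_subset_smul_set_iff.1 h')⟩
  refine ⟨T2 Γ, act, G2 Γ, fun A B => A.1 ⊂ B.1, G2_tree hT, fun a b => Iff.rfl,
    fun a b h h' => h.2 h'.1, hoinv, ⟨?_, G2_conn hT, G2_coh hT, ?_, ?_⟩, ?_, ?_⟩
  · rintro g a b (h | h)
    · exact Or.inl (hoinv g _ _ h)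
    · exact Or.inr (hoinv g _ _ h)
  · intro h hF A hA
    have hA' : h • A.1 = A.1 := congrArg Subtype.val hA
    have hmem : ∀ x ∈ A.1, h • x ∈ A.1 := by
      intro x hx
      rw [← hA']
      exact Set.smul_mem_smul_set hx
    obtain ⟨u, hu⟩ := A.2.1
    rcases T2_cases hT A hu with rfl | ⟨v, huv, rfl⟩
    · exact hfree h hF u (hmem u hu)
    · rcases hmem u (Or.inl rfl) with h1 | h1
      · exact hfree h hF u h1
      · rw [mem_singleton_iff] at h1
        rcases hmem v (Or.inr rfl) with h2 | h2
        · have h3 : h ^ 2 = 1 := hfree _ (pow_mem hF 2) u (by rw [pow_two, mul_smul, h1, h2])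
          exact htf h hF (isOfFinOrder_iff_pow_eq_one.2 ⟨2, by norm_num, h3⟩)
        · exact hfree h hF v h2
  · obtain ⟨D, hDf, hD⟩ := hD
    obtain ⟨W, hWf, hW⟩ := hW
    have hfin : {A : T2 Γ | A.1 ∈ (fun w => ({w} : Set T)) '' W ∪
        (fun p : T × T => ({p.1, p.2} : Set T)) '' D}.Finite :=
      Set.Finite.preimage hval.injOn ((hWf.image _).union (hDf.image _))
    apply cover_F hfin
    intro A
    obtain ⟨u, hu⟩ := A.2.1
    rcases T2_cases hT A hu with rfl | ⟨v, huv, rfl⟩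
    · obtain ⟨g, hg⟩ := hW u
      refine ⟨g, Or.inl ⟨_, hg, ?_⟩⟩
      rw [hsm]
      exact (Set.smul_set_singleton (a := g) (b := u)).symm
    · obtain ⟨g, hg⟩ := hD u v huv
      refine ⟨g, Or.inr ⟨_, hg, ?_⟩⟩
      rw [hsm]
      simp only [ev]
      rw [Set.smul_set_insert, Set.smul_set_singleton]
  · intro B
    have hB : B.1.Finite := by
      obtain ⟨u, hu⟩ := B.2.1
      rcases T2_cases hT B hu with rfl | ⟨v, huv, rfl⟩
      · exact Set.finite_singleton _
      · show ({u, v} : Set T).Finite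
        exact Set.toFinite _
    exact (Set.Finite.preimage hval.injOn hB.finite_subsets).subset (fun A hA => hA.1)
  · intro P hP
    have : Fintype P := Fintype.ofFinite P
    obtain ⟨o⟩ := hT.connected.nonempty
    let Q : Finset T := Finset.univ.image (fun p : P => (p : G) • o)
    have hQ : Q.Nonempty := ⟨(1 : G) • o, Finset.mem_image.2 ⟨1, Finset.mem_univ _, rfl⟩⟩
    obtain ⟨M, hM⟩ := center_clique hT Q hQ
    have hecc : ∀ p ∈ P, ∀ x, Q.sup' hQ (fun q => Γ.dist (p • x) q) ≤
        Q.sup' hQ (fun q => Γ.dist x q) := by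
      intro p hp x
      apply Finset.sup'_le
      intro q hq
      obtain ⟨⟨r, hr⟩, _, rfl⟩ := Finset.mem_image.1 hq
      have h1 : (p⁻¹ * r) • o ∈ Q :=
        Finset.mem_image.2 ⟨⟨p⁻¹ * r, mul_mem (inv_mem hp) hr⟩, Finset.mem_univ _, rfl⟩
      have h2 := dist_smul' hT hinv p x ((p⁻¹ * r) • o)
      rw [smul_smul p, mul_inv_cancel_left] at h2
      exact h2.trans (Finset.le_sup' (fun q => Γ.dist x q) h1)
    have hsub : ∀ p ∈ P, p • M.1 ⊆ M.1 := by
      rintro p hp _ ⟨x, hx, rfl⟩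
      rw [hM] at hx ⊢
      intro y
      exact (hecc p hp x).trans (hx y)
    refine ⟨M, fun p hp => ?_⟩
    apply Subtype.ext
    rw [hsm]
    apply Subset.antisymm (hsub p hp)
    have := hsub p⁻¹ (inv_mem hp)
    exact Set.subset_smul_set_iff.2 this

end
end VF


namespace VF
open Set
open scoped Pointwise

section
universe u
variable {G : Type u} [Group G] {F : Subgroup G}

theorem exists_equiv_map {U : Type*} [MulAction G U] (θ : G →* G)
    (hst : ∀ u : U, {g : G | g • u = u}.Finite)
    (hfix : ∀ P : Subgroup G, Finite P → ∃ u : U, ∀ p ∈ P, p • u = u) :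
    ∃ f : U → U, ∀ (g : G) x, f (g • x) = θ g • f x := by
  let r : U → U := fun x => (Quotient.mk (MulAction.orbitRel G U) x).out
  have hr : ∀ x, ∃ g : G, g • r x = x := by
    intro x
    have h1 : (MulAction.orbitRel G U).r (r x) x := Quotient.exact (Quotient.out_eq _)
    have h2 := (MulAction.orbitRel G U).symm h1
    exact h2
  have hrg : ∀ (g : G) x, r (g • x) = r x := by
    intro g x
    simp only [r]
    congr 1
    apply Quotient.sound
    exact ⟨g, rfl⟩
  choose k hk using hr
  have hp : ∀ x : U, ∃ y : U, ∀ g : G, g • x = x → θ g • y = y := by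
    intro x
    have hfin : Finite (MulAction.stabilizer G x) := hst x
    have : Finite ((MulAction.stabilizer G x).map θ) := by
      have : ((MulAction.stabilizer G x).map θ : Set G).Finite := by
        rw [Subgroup.coe_map]
        exact Set.Finite.image _ (hst x)
      exact this
    obtain ⟨y, hy⟩ := hfix _ this
    exact ⟨y, fun g hg => hy _ ⟨g, hg, rfl⟩⟩
  choose p hp using hp
  refine ⟨fun x => θ (k x) • p (r x), ?_⟩
  intro g x
  simp only
  rw [hrg]
  have h1 : ((k (g • x))⁻¹ * (g * k x)) • r x = r x := by
    rw [mul_smul, mul_smul, hk, inv_smul_eq_iff]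
    have := hk (g • x)
    rw [hrg] at this
    exact this.symm
  have h2 := hp _ _ h1
  rw [map_mul, mul_smul, map_inv, inv_smul_eq_iff, map_mul, mul_smul] at h2
  exact h2.symm

/-- Interval between two points. -/
def IV {U : Type*} (Δ : SimpleGraph U) (a b : U) : Set U := {x | ∀ p : Δ.Walk a b, x ∈ p.support}

section
variable {U : Type*} {Δ : SimpleGraph U}

theorem IV_left (a b : U) : a ∈ IV Δ a b := fun p => p.start_mem_support
theorem IV_right (a b : U) : b ∈ IV Δ a b := fun p => p.end_mem_support

theorem IV_finite (hΔ : Δ.IsTree) (a b : U) : (IV Δ a b).Finite := by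
  obtain ⟨p⟩ := hΔ.connected.preconnected a b
  exact (List.finite_toSet p.support).subset (fun x hx => hx p)

theorem IV_ind (hΔ : Δ.IsTree) {a b x : U} (hx : x ∈ IV Δ a b) (S : U → Prop) (ha : S a)
    (hS : ∀ y z, y ∈ IV Δ a b → z ∈ IV Δ a b → Δ.Adj y z → S y → S z) : S x := by
  classical
  obtain ⟨P, hP, hPu⟩ := hΔ.existsUnique_path a b
  have hPI : ∀ y ∈ P.support, y ∈ IV Δ a b := by
    intro y hy p
    have := hPu p.bypass p.bypass_isPath
    apply p.support_bypass_subset_support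
    rw [this]
    exact hy
  have key : ∀ (c d : U) (p : Δ.Walk c d), (∀ y ∈ p.support, y ∈ IV Δ a b) → S c →
      ∀ y ∈ p.support, S y := by
    intro c d p
    induction p with
    | nil => intro _ hc y hy; simp at hy; rw [hy]; exact hc
    | @cons c e d h p ih =>
      intro hI hc y hy
      rw [SimpleGraph.Walk.support_cons] at hy hI
      rcases List.mem_cons.1 hy with rfl | hy
      · exact hc
      · refine ih (fun z hz => hI z (List.mem_cons_of_mem _ hz)) ?_ y hy
        exact hS c e (hI c List.mem_cons_self)
          (hI e (List.mem_cons_of_mem _ p.start_mem_support)) h hc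
  exact key a b P hPI ha x (hx P)

theorem IV_smul [MulAction G U] (hinv : ∀ (g : G) (x y : U), Δ.Adj x y → Δ.Adj (g • x) (g • y))
    (g : G) {a b x : U} (hx : x ∈ IV Δ a b) : g • x ∈ IV Δ (g • a) (g • b) := by
  intro p
  let φ : Δ →g Δ := ⟨fun x => g⁻¹ • x, fun h => hinv g⁻¹ _ _ h⟩
  have h1 := hx ((p.map φ).copy (inv_smul_smul g a) (inv_smul_smul g b))
  rw [SimpleGraph.Walk.support_copy, SimpleGraph.Walk.support_map, List.mem_map] at h1
  obtain ⟨y, hy, hyx⟩ := h1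
  have : g • x = y := by rw [← hyx]; exact smul_inv_smul g y
  rw [this]; exact hy

end

/-- The long subdivision. -/
def SS {U : Type*} (Δ : SimpleGraph U) (o : U → U → Prop) (f : U → U) : Type _ :=
  {p : U × U × U // (p.1 = p.2.1 ∧ p.2.2 = f p.1) ∨ (o p.1 p.2.1 ∧ p.2.2 ∈ IV Δ (f p.1) (f p.2.1))}

section
variable {U : Type*} {Δ : SimpleGraph U} {o : U → U → Prop} {f : U → U}

/-- Vertex point. -/
def vv (Δ : SimpleGraph U) (o : U → U → Prop) (f : U → U) (u : U) : SS Δ o f :=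
  ⟨(u, u, f u), Or.inl ⟨rfl, rfl⟩⟩

/-- Edge point. -/
def ee {u v x : U} (h : o u v) (hx : x ∈ IV Δ (f u) (f v)) : SS Δ o f := ⟨(u, v, x), Or.inr ⟨h, hx⟩⟩

/-- Edges of the long subdivision. -/
inductive SE : SS Δ o f → SS Δ o f → Prop
  | mid {u v x y : U} (h : o u v) (hx : x ∈ IV Δ (f u) (f v)) (hy : y ∈ IV Δ (f u) (f v))
      (hxy : Δ.Adj x y) : SE (ee h hx) (ee h hy)
  | left {u v : U} (h : o u v) : SE (vv Δ o f u) (ee h (IV_left _ _))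
  | right {u v : U} (h : o u v) : SE (ee h (IV_right _ _)) (vv Δ o f v)

theorem ee_ne_vv (hirr : ∀ a b, o a b → ¬ o b a) {u v x : U} (h : o u v)
    (hx : x ∈ IV Δ (f u) (f v)) (w : U) : ee h hx ≠ vv Δ o f w := by
  intro he
  have h1 := congrArg Subtype.val he
  simp only [ee, vv, Prod.mk.injEq] at h1
  obtain ⟨rfl, rfl, _⟩ := h1
  exact hirr _ _ h h

/-- Long subdivision as a graph. -/
def SG (Δ : SimpleGraph U) (o : U → U → Prop) (f : U → U) : SimpleGraph (SS Δ o f) where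
  Adj a b := a ≠ b ∧ (SE a b ∨ SE b a)
  symm := ⟨fun _ _ h => ⟨h.1.symm, h.2.symm⟩⟩
  loopless := ⟨fun _ h => h.1 rfl⟩

theorem SG_adj {a b : SS Δ o f} (hirr : ∀ a b, o a b → ¬ o b a) (h : SE a b) :
    (SG Δ o f).Adj a b := by
  refine ⟨?_, Or.inl h⟩
  cases h with
  | mid h hx hy hxy =>
    intro he
    have h1 := congrArg Subtype.val he
    simp only [ee, Prod.mk.injEq] at h1
    exact hxy.ne h1.2.2
  | left h => exact (ee_ne_vv hirr h _ _).symm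
  | right h => exact ee_ne_vv hirr h _ _

theorem SS_cases (p : SS Δ o f) : (∃ u, p = vv Δ o f u) ∨
    ∃ (u v x : U) (h : o u v) (hx : x ∈ IV Δ (f u) (f v)), p = ee h hx := by
  obtain ⟨⟨u, v, x⟩, h | h⟩ := p
  · left
    obtain ⟨h1, h2⟩ := h
    simp only at h1 h2
    subst h1 h2
    exact ⟨u, rfl⟩
  · exact Or.inr ⟨u, v, x, h.1, h.2, rfl⟩

theorem SG_conn (hΔ : Δ.IsTree) (hadj : ∀ a b, Δ.Adj a b ↔ o a b ∨ o b a)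
    (hirr : ∀ a b, o a b → ¬ o b a) : (SG Δ o f).Connected := by
  obtain ⟨z⟩ := hΔ.connected.nonempty
  have : Nonempty (SS Δ o f) := ⟨vv Δ o f z⟩
  have h1 : ∀ {u v x : U} (h : o u v) (hx : x ∈ IV Δ (f u) (f v)),
      (SG Δ o f).Reachable (vv Δ o f u) (ee h hx) := by
    intro u v x h hx
    have h2 := IV_ind hΔ hx (fun x => ∀ hx : x ∈ IV Δ (f u) (f v),
      (SG Δ o f).Reachable (vv Δ o f u) (ee h hx))
      (fun _ => (SG_adj hirr (SE.left h)).reachable)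
      (fun y z hy hz hyz ih hz' =>
        (ih hy).trans (SG_adj hirr (SE.mid h hy hz' hyz)).reachable)
    exact h2 hx
  have h2 : ∀ u v, o u v → (SG Δ o f).Reachable (vv Δ o f u) (vv Δ o f v) := fun u v h =>
    (h1 h (IV_right _ _)).trans (SG_adj hirr (SE.right h)).reachable
  have h3 : ∀ u v, (SG Δ o f).Reachable (vv Δ o f u) (vv Δ o f v) := by
    intro u v
    have h := hΔ.connected.preconnected u v
    rw [SimpleGraph.reachable_iff_reflTransGen] at h
    induction h with
    | refl => exact SimpleGraph.Reachable.refl _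
    | tail _ hbc ih =>
      refine ih.trans ?_
      rcases (hadj _ _).1 hbc with h | h
      · exact h2 _ _ h
      · exact (h2 _ _ h).symm
  have h4 : ∀ p : SS Δ o f, ∃ u, (SG Δ o f).Reachable (vv Δ o f u) p := by
    intro p
    rcases SS_cases p with ⟨u, rfl⟩ | ⟨u, v, x, h, hx, rfl⟩
    · exact ⟨u, SimpleGraph.Reachable.refl _⟩
    · exact ⟨u, h1 h hx⟩
  refine ⟨?_⟩
  intro A B
  obtain ⟨u, hu⟩ := h4 A
  obtain ⟨v, hv⟩ := h4 B
  exact hu.symm.trans ((h3 u v).trans hv)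

theorem SG_coh (hΔ : Δ.IsTree) (hadj : ∀ a b, Δ.Adj a b ↔ o a b ∨ o b a)
    (hirr : ∀ a b, o a b → ¬ o b a) {H : Type*} [Group H] : TrivCoh (SG Δ o f) H := by
  classical
  intro c hc
  have h1 : ∀ u v, ∃ ψ : U → H, ∀ h : o u v, ∀ x y (hx : x ∈ IV Δ (f u) (f v))
      (hy : y ∈ IV Δ (f u) (f v)), Δ.Adj x y → ψ y = ψ x * c (ee h hx) (ee h hy) := by
    intro u v
    by_cases h : o u v
    · obtain ⟨ψ, hψ⟩ := tree_triv (H := H) hΔ (fun x y =>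
        if hh : x ∈ IV Δ (f u) (f v) ∧ y ∈ IV Δ (f u) (f v) then c (ee h hh.1) (ee h hh.2) else 1) (by
        intro x y hxy
        by_cases hh : x ∈ IV Δ (f u) (f v) ∧ y ∈ IV Δ (f u) (f v)
        · rw [dif_pos hh, dif_pos hh.symm]
          exact hc _ _ (SG_adj hirr (SE.mid h hh.1 hh.2 hxy))
        · rw [dif_neg hh, dif_neg (fun h' => hh h'.symm), mul_one])
      refine ⟨ψ, fun _ x y hx hy hxy => ?_⟩
      have := hψ x y hxy
      rw [dif_pos ⟨hx, hy⟩] at this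
      exact this
    · exact ⟨fun _ => 1, fun h' => absurd h' h⟩
  choose ψ hψ using h1
  let D : U → U → H := fun u v => if h : o u v then
    c (vv Δ o f u) (ee h (IV_left _ _)) * (ψ u v (f u))⁻¹ * ψ u v (f v) *
      c (ee h (IV_right _ _)) (vv Δ o f v) else 1
  obtain ⟨Ψ, hΨ⟩ := tree_triv (H := H) hΔ (fun u v => if o u v then D u v else (D v u)⁻¹) (by
    intro u v huv
    rcases (hadj _ _).1 huv with h | h
    · rw [if_pos h, if_neg (hirr _ _ h), mul_inv_cancel]
    · rw [if_pos h, if_neg (hirr _ _ h), inv_mul_cancel])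
  let φ : SS Δ o f → H := fun p => if h : o p.1.1 p.1.2.1 then
    Ψ p.1.1 * c (vv Δ o f p.1.1) (ee h (IV_left _ _)) * (ψ p.1.1 p.1.2.1 (f p.1.1))⁻¹ *
      ψ p.1.1 p.1.2.1 p.1.2.2 else Ψ p.1.1
  have hφv : ∀ u, φ (vv Δ o f u) = Ψ u := by
    intro u
    have : ¬ o u u := fun h => hirr _ _ h h
    simp only [φ, vv]
    rw [dif_neg this]
  have hφe : ∀ {u v x : U} (h : o u v) (hx : x ∈ IV Δ (f u) (f v)), φ (ee h hx) =
      Ψ u * c (vv Δ o f u) (ee h (IV_left _ _)) * (ψ u v (f u))⁻¹ * ψ u v x := by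
    intro u v x h hx
    simp only [φ, ee]
    rw [dif_pos h]
  have key : ∀ p q, SE p q → φ q = φ p * c p q := by
    intro p q hpq
    cases hpq with
    | mid h hx hy hxy =>
      rw [hφe, hφe, hψ _ _ h _ _ hx hy hxy, ← mul_assoc]
    | left h =>
      rw [hφv, hφe, inv_mul_cancel_right]
    | @right u v h =>
      rw [hφv, hφe, hΨ u v ((hadj _ _).2 (Or.inl h)), if_pos h]
      simp only [D]
      rw [dif_pos h]
      simp only [mul_assoc]
  refine ⟨φ, ?_⟩
  rintro p q ⟨hne, h | h⟩
  · exact key p q h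
  · rw [key q p h, mul_assoc, hc q p (SG_adj hirr h), mul_one]

end

theorem exists_S0 {U : Type u} [MulAction G U] {Δ : SimpleGraph U} {o : U → U → Prop}
    (hΔ : Δ.IsTree) (hadj : ∀ a b, Δ.Adj a b ↔ o a b ∨ o b a) (hirr : ∀ a b, o a b → ¬ o b a)
    (hoinv : ∀ (g : G) a b, o a b → o (g • a) (g • b)) (hGT : GT F Δ)
    (hof : ∀ b, {a | o a b}.Finite) (θ : G →* G) (f : U → U)
    (hf : ∀ (g : G) x, f (g • x) = θ g • f x) :
    ∃ (S : Type u) (_ : MulAction G S) (Λ : SimpleGraph S), GT F Λ ∧ TrivCoh Λ G ∧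
      ∃ Φ : S → U, (∀ (g : G) x, Φ (g • x) = θ g • Φ x) ∧
        ∀ a b, Λ.Adj a b → Φ a = Φ b ∨ Δ.Adj (Φ a) (Φ b) := by
  let act : MulAction G (SS Δ o f) :=
    { smul := fun g p => ⟨(g • p.1.1, g • p.1.2.1, θ g • p.1.2.2), by
        rcases p.2 with h | h
        · exact Or.inl ⟨by rw [h.1], by rw [h.2, hf]⟩
        · refine Or.inr ⟨hoinv g _ _ h.1, ?_⟩
          rw [hf, hf]
          exact IV_smul hGT.inv _ h.2⟩
      one_smul := fun p => Subtype.ext (by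
        show ((1 : G) • p.1.1, (1 : G) • p.1.2.1, θ 1 • p.1.2.2) = p.1
        rw [map_one, one_smul, one_smul, one_smul])
      mul_smul := fun a b p => Subtype.ext (by
        show ((a * b) • p.1.1, (a * b) • p.1.2.1, θ (a * b) • p.1.2.2) =
          (a • b • p.1.1, a • b • p.1.2.1, θ a • θ b • p.1.2.2)
        rw [map_mul, mul_smul, mul_smul, mul_smul]) }
  have hsv : ∀ (g : G) u, g • vv Δ o f u = vv Δ o f (g • u) := by
    intro g u
    apply Subtype.ext
    show (g • u, g • u, θ g • f u) = (g • u, g • u, f (g • u))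
    rw [hf]
  have hse : ∀ (g : G) {u v x : U} (h : o u v) (hx : x ∈ IV Δ (f u) (f v)),
      ∃ hx', g • (ee h hx : SS Δ o f) = ee (x := θ g • x) (hoinv g _ _ h) hx' := by
    intro g u v x h hx
    refine ⟨?_, rfl⟩
    rw [hf, hf]
    exact IV_smul hGT.inv _ hx
  have hSE : ∀ (g : G) (p q : SS Δ o f), SE p q → SE (g • p) (g • q) := by
    intro g p q h
    cases h with
    | mid h hx hy hxy =>
      obtain ⟨hx', ex⟩ := hse g h hx
      obtain ⟨hy', ey⟩ := hse g h hy
      rw [ex, ey]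
      exact SE.mid _ _ _ (hGT.inv _ _ _ hxy)
    | @left u v h =>
      obtain ⟨hx', ex⟩ := hse g h (IV_left (f u) (f v))
      rw [ex, hsv]
      have e : ee (hoinv g _ _ h) hx' = ee (Δ := Δ) (f := f) (hoinv g _ _ h) (IV_left _ _) := by
        apply Subtype.ext
        simp only [ee, hf]
      rw [e]
      exact SE.left _
    | @right u v h =>
      obtain ⟨hx', ex⟩ := hse g h (IV_right (f u) (f v))
      rw [ex, hsv]
      have e : ee (hoinv g _ _ h) hx' = ee (Δ := Δ) (f := f) (hoinv g _ _ h) (IV_right _ _) := by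
        apply Subtype.ext
        simp only [ee, hf]
      rw [e]
      exact SE.right _
  refine ⟨SS Δ o f, act, SG Δ o f, ⟨?_, SG_conn hΔ hadj hirr, SG_coh hΔ hadj hirr, ?_, ?_⟩,
    SG_coh hΔ hadj hirr, fun p => p.1.2.2, fun _ _ => rfl, ?_⟩
  · rintro g a b ⟨hne, h | h⟩
    · exact SG_adj hirr (hSE g _ _ h)
    · exact (SG_adj hirr (hSE g _ _ h)).symm
  · intro h hF p hp
    exact hGT.free h hF p.1.1 (congrArg (fun q => q.1.1) hp)
  · obtain ⟨W, hWf, hW⟩ := hGT.fin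
    have hfin : ((⋃ v ∈ W, {(v, v, f v)}) ∪
        ⋃ v ∈ W, ⋃ u ∈ {a | o a v}, (fun x => (u, v, x)) '' IV Δ (f u) (f v) : Set (U × U × U)).Finite := by
      refine (hWf.biUnion fun v _ => Set.finite_singleton _).union
        (hWf.biUnion fun v _ => (hof v).biUnion fun u _ => (IV_finite hΔ _ _).image _)
    refine ⟨_, Set.Finite.preimage (Subtype.val_injective.injOn) hfin, ?_⟩
    intro p
    rcases SS_cases p with ⟨u, rfl⟩ | ⟨u, v, x, h, hx, rfl⟩
    · obtain ⟨l, hl, hlW⟩ := hW u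
      refine ⟨l, hl, ?_⟩
      rw [hsv]
      left
      exact mem_biUnion hlW rfl
    · obtain ⟨l, hl, hlW⟩ := hW v
      refine ⟨l, hl, ?_⟩
      obtain ⟨hx', ex⟩ := hse l h hx
      rw [ex]
      right
      exact mem_biUnion hlW (mem_biUnion (hoinv l _ _ h) ⟨_, hx', rfl⟩)
  · have key : ∀ a b : SS Δ o f, SE a b → a.1.2.2 = b.1.2.2 ∨ Δ.Adj a.1.2.2 b.1.2.2 := by
      intro a b h
      cases h with
      | mid h hx hy hxy => exact Or.inr hxy
      | left h => exact Or.inl rfl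
      | right h => exact Or.inl rfl
    rintro a b ⟨_, h | h⟩
    · exact key a b h
    · rcases key b a h with h | h
      · exact Or.inl h.symm
      · exact Or.inr h.symm

end
end VF


namespace VF
open Set
open scoped Pointwise

section
universe u w

theorem vf_setup {G : Type u} [Group G]
    (hvf : ∃ H : Subgroup G, H.FiniteIndex ∧ Nonempty (IsFreeGroup H)) :
    ∃ F : Subgroup G, F.Normal ∧ F.FiniteIndex ∧ (∀ x ∈ F, IsOfFinOrder x → x = 1) ∧
      ∃ ι : Type u, Nonempty (F ≃* FreeGroup ι) := by
  obtain ⟨H, hHf, ⟨hH⟩⟩ := hvf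
  have hle : H.normalCore ≤ H := H.normalCore_le
  have e1 : H.normalCore.subgroupOf H ≃* H.normalCore := Subgroup.subgroupOfEquivOfLe hle
  have hfree : IsFreeGroup (H.normalCore.subgroupOf H) := inferInstance
  let e := e1.symm.trans (IsFreeGroup.toFreeGroup (H.normalCore.subgroupOf H))
  refine ⟨H.normalCore, inferInstance, inferInstance, ?_, _, ⟨e⟩⟩
  intro x hx hfin
  have h1 : IsOfFinOrder (⟨x, hx⟩ : H.normalCore) := by
    exact Submonoid.isOfFinOrder_coe.1 hfin
  have h2 : IsOfFinOrder (e ⟨x, hx⟩) := e.toMonoidHom.isOfFinOrder h1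
  have h3 := h2.eq_one'
  have h4 : (⟨x, hx⟩ : H.normalCore) = 1 := e.injective (by rw [h3, map_one])
  exact congrArg Subtype.val h4

theorem key_claim {G : Type u} [Group G] [Group.FG G]
    (hvf : ∃ H : Subgroup G, H.FiniteIndex ∧ Nonempty (IsFreeGroup H))
    (hout : (MulAut.conj : G →* MulAut G).range.FiniteIndex) :
    ∃ F0 : Set G, F0.Finite ∧ 1 ∉ F0 ∧ ∀ θ : G →* G, (∀ f ∈ F0, θ f ≠ 1) →
      Function.Injective θ := by
  obtain ⟨F, hN, hFI, htf, ι, ⟨e⟩⟩ := vf_setup hvf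
  obtain ⟨T, actT, Γ, hT, hinv, hfree, hD, hW⟩ := exists_tree F e
  obtain ⟨U, actU, Δ, o, hΔ, hadj, hirr, hoinv, hGT, hof, hfix⟩ :=
    exists_T2 htf hT hinv hfree hD hW
  have : Finite (F →* Multiplicative (ZMod 2)) :=
    finite_hom F (Multiplicative (ZMod 2))
  obtain ⟨F0, hF0, h1, hF⟩ := exists_F0 hout (Nat.card (G ⧸ F) *
      (Nat.card ((F →* Multiplicative (ZMod 2)) × Bool) + 1) ^ 2) (8 * (Nat.card (G ⧸ F) + 1))
  refine ⟨F0, hF0, h1, fun θ hθ => ?_⟩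
  have hst := stab_bound (F := F) (U := U) hGT.free
  obtain ⟨f, hf⟩ := exists_equiv_map θ (fun u => (hst u).1) hfix
  obtain ⟨S, actS, Λ, hS, hc, Φ, hΦ, hΦ'⟩ := exists_S0 hΔ hadj hirr hoinv hGT hof θ f hf
  obtain ⟨W, hWf, hWc⟩ := hS.fin
  exact fold_main htf θ hΔ.isAcyclic hst (hF θ hθ) W.ncard S Λ hS hc ⟨W, hWf, le_rfl, hWc⟩ Φ hΦ hΦ'

theorem good_gen {G : Type u} [Group G] [Group.FG G]
    (hvf : ∃ H : Subgroup G, H.FiniteIndex ∧ Nonempty (IsFreeGroup H)) :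
    ∃ X : Set G, X.Finite ∧ 1 ∈ X ∧ (∀ x ∈ X, x⁻¹ ∈ X) ∧ Subgroup.closure X = ⊤ ∧
      ∀ (H : Type w) [Group H], UP X H := by
  obtain ⟨F, hN, hFI, htf, ι, ⟨e⟩⟩ := vf_setup hvf
  obtain ⟨T, actT, Γ, hT, hinv, hfree, hD, W, hWf, hW⟩ := exists_tree F e
  have hGT : GT F Γ := ⟨hinv, hT.connected, tree_triv hT, hfree, cover_F hWf hW⟩
  have : Finite (F →* Multiplicative (ZMod 2)) :=
    finite_hom F (Multiplicative (ZMod 2))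
  obtain ⟨Y, hY⟩ := hGT.exists_Tv
  exact ⟨XX G Γ Y, (XX_bound hGT hY).1, XX_one hY.ne, fun x hx => XX_inv hGT hx, XX_gen hGT hY,
    fun H _ => XX_UP hGT hY (tree_triv hT)⟩

/-- Extending a partial map on a power of the generating set. -/
theorem exists_Z {G : Type u} [Group G] [Group.FG G]
    (hvf : ∃ H : Subgroup G, H.FiniteIndex ∧ Nonempty (IsFreeGroup H))
    (Z0 : Set G) (hZ0 : Z0.Finite) :
    ∃ Z : Set G, Z.Finite ∧ Z0 ⊆ Z ∧ ∀ (H : Type w) [Group H] (j : G → H),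
      (∀ a ∈ Z, ∀ b ∈ Z, a * b ∈ Z → j (a * b) = j a * j b) →
        ∃ φ : G →* H, ∀ z ∈ Z, φ z = j z := by
  classical
  obtain ⟨X, hXf, hX1, hXi, hXc, hUP⟩ := good_gen.{u, w} hvf
  have mono : ∀ {m n : ℕ}, m ≤ n → X ^ m ⊆ X ^ n := fun h => Set.pow_subset_pow_right hX1 h
  have hex : ∀ g : G, ∃ m : ℕ, g ∈ X ^ m := by
    intro g
    have hg : g ∈ Subgroup.closure X := by rw [hXc]; trivial
    induction hg using Subgroup.closure_induction'' with
    | mem x hx => exact ⟨1, by simpa using hx⟩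
    | inv_mem x hx => exact ⟨1, by simpa using hXi x hx⟩
    | one => exact ⟨0, by simp⟩
    | mul x y _ _ hx hy =>
      obtain ⟨m, hm⟩ := hx
      obtain ⟨n, hn⟩ := hy
      exact ⟨m + n, by rw [pow_add]; exact Set.mul_mem_mul hm hn⟩
  choose m hm using hex
  obtain ⟨M, hM⟩ := (hZ0.image m).bddAbove
  refine ⟨X ^ (M + 1), finite_pow hXf _, ?_, ?_⟩
  · intro z hz
    exact mono (Nat.le_succ_of_le (hM ⟨z, hz, rfl⟩)) (hm z)
  · intro H _ j hj
    have hX : X ⊆ X ^ (M + 1) := by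
      have := mono (m := 1) (n := M + 1) (by omega)
      rwa [pow_one] at this
    obtain ⟨φ, hφ⟩ := hUP H j (fun a ha b hb hab => hj a (hX ha) b (hX hb) (hX hab))
    refine ⟨φ, ?_⟩
    have key : ∀ k ≤ M + 1, ∀ z ∈ X ^ k, φ z = j z := by
      intro k
      induction k with
      | zero =>
        intro _ z hz
        have : z = 1 := by simpa using hz
        rw [this]
        exact hφ 1 hX1
      | succ k ih =>
        intro hk z hz
        have hz' := mono hk hz
        rw [pow_succ] at hz
        obtain ⟨a, ha, b, hb, rfl⟩ := hz
        have ha' := mono (show k ≤ M + 1 by omega) ha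
        show φ (a * b) = j (a * b)
        rw [hj a ha' b (hX hb) hz', map_mul, ih (by omega) a ha, hφ b hb]
    exact key _ le_rfl

end
end VF

namespace VF
open Set
universe u w

/-- The term for a product of two bound variables. -/
def mulT {N : ℕ} (a b : Fin N) : groupLang.Term (Empty ⊕ Fin N) :=
  FirstOrder.Language.Term.func (L := groupLang) (l := 2) GroupFunc.mul
    ![FirstOrder.Language.Term.var (Sum.inr a), FirstOrder.Language.Term.var (Sum.inr b)]

/-- The identity term. -/
def oneT {N : ℕ} : groupLang.Term (Empty ⊕ Fin N) :=
  FirstOrder.Language.Term.func (L := groupLang) (l := 0) GroupFunc.one ![]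

theorem isQF_foldr {N : ℕ} (l : List (groupLang.BoundedFormula Empty N))
    (h : ∀ φ ∈ l, φ.IsQF) : (l.foldr (· ⊓ ·) ⊤).IsQF := by
  induction l with
  | nil => exact FirstOrder.Language.BoundedFormula.IsQF.top
  | cons φ l ih =>
    exact (h φ (by simp)).inf (ih fun ψ hψ => h ψ (by simp [hψ]))

theorem exs_existential {α : Type*} : ∀ {N : ℕ} (φ : groupLang.BoundedFormula α N),
    IsExistentialQF φ → IsExistentialQF φ.exs
  | 0, _, h => h
  | _ + 1, φ, h => exs_existential φ.ex (IsExistentialQF.ex h)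

/-- The conjuncts. -/
def sentC {N : ℕ} (R : Set (Fin N × Fin N × Fin N)) (P : Set (Fin N)) :
    (R ⊕ P) → groupLang.BoundedFormula Empty N
  | Sum.inl r => (mulT r.1.1 r.1.2.1).bdEqual (FirstOrder.Language.Term.var (Sum.inr r.1.2.2))
  | Sum.inr p => ((FirstOrder.Language.Term.var (Sum.inr p.1)).bdEqual oneT).not

/-- The existential sentence. -/
noncomputable def sentF {N : ℕ} (R : Set (Fin N × Fin N × Fin N)) (P : Set (Fin N)) :
    groupLang.Sentence :=
  (FirstOrder.Language.BoundedFormula.iInf (sentC R P)).exs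

theorem sentF_ex {N : ℕ} (R : Set (Fin N × Fin N × Fin N)) (P : Set (Fin N)) :
    IsExistentialQF (sentF R P) := by
  refine exs_existential _ (IsExistentialQF.of_isQF ?_)
  apply isQF_foldr
  intro φ hφ
  rw [List.mem_map] at hφ
  obtain ⟨s, -, rfl⟩ := hφ
  rcases s with r | p
  · exact (FirstOrder.Language.BoundedFormula.IsAtomic.equal _ _).isQF
  · exact (FirstOrder.Language.BoundedFormula.IsAtomic.equal _ _).isQF.not

theorem sentF_iff {N : ℕ} (R : Set (Fin N × Fin N × Fin N)) (P : Set (Fin N)) (H : Type w)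
    [Group H] : H ⊨ sentF R P ↔ ∃ y : Fin N → H,
      (∀ a b c, (a, b, c) ∈ R → y a * y b = y c) ∧ ∀ a ∈ P, y a ≠ 1 := by
  show FirstOrder.Language.Formula.Realize (FirstOrder.Language.BoundedFormula.exs _) _ ↔ _
  rw [FirstOrder.Language.BoundedFormula.realize_exs]
  apply exists_congr
  intro y
  rw [FirstOrder.Language.BoundedFormula.realize_iInf, Sum.forall]
  apply and_congr
  · constructor
    · intro h a b c habc
      have := h ⟨(a, b, c), habc⟩
      rw [sentC, FirstOrder.Language.BoundedFormula.realize_bdEqual] at this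
      exact this
    · rintro h ⟨⟨a, b, c⟩, habc⟩
      rw [sentC, FirstOrder.Language.BoundedFormula.realize_bdEqual]
      exact h a b c habc
  · constructor
    · intro h a ha
      have := h ⟨a, ha⟩
      rw [sentC, FirstOrder.Language.BoundedFormula.realize_not,
        FirstOrder.Language.BoundedFormula.realize_bdEqual] at this
      exact this
    · rintro h ⟨a, ha⟩
      rw [sentC, FirstOrder.Language.BoundedFormula.realize_not,
        FirstOrder.Language.BoundedFormula.realize_bdEqual]
      exact h a ha

theorem exists_hom {G : Type u} {H : Type w} [Group G] [Group H] [Group.FG G]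
    (hvf : VirtuallyFree G)
    (hE : ∀ φ : groupLang.Sentence, IsExistentialQF φ → G ⊨ φ → H ⊨ φ)
    (Z0 : Set G) (hZ0 : Z0.Finite) (h1 : 1 ∉ Z0) :
    ∃ φ : G →* H, ∀ z ∈ Z0, φ z ≠ 1 := by
  classical
  obtain ⟨Z, hZf, hZ, hext⟩ := exists_Z.{u, w} hvf Z0 hZ0
  have : Finite Z := hZf
  obtain ⟨N, ⟨e⟩⟩ := Finite.exists_equiv_fin Z
  let v : Fin N → G := fun i => (e.symm i).1
  have hs := hE (sentF {t : Fin N × Fin N × Fin N | v t.1 * v t.2.1 = v t.2.2} {i | v i ∈ Z0})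
    (sentF_ex _ _) ((sentF_iff _ _ G).2 ⟨v, fun a b c h => h, fun a ha h => h1 (h ▸ ha)⟩)
  obtain ⟨y, hy, hy1⟩ := (sentF_iff _ _ H).1 hs
  let j : G → H := fun g => if h : g ∈ Z then y (e ⟨g, h⟩) else 1
  have hj : ∀ g (h : g ∈ Z), j g = y (e ⟨g, h⟩) := fun g h => dif_pos h
  have hv : ∀ g (h : g ∈ Z), v (e ⟨g, h⟩) = g := by
    intro g h
    simp only [v, Equiv.symm_apply_apply]
  obtain ⟨φ, hφ⟩ := hext H j (by
    intro a ha b hb hab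
    rw [hj _ ha, hj _ hb, hj _ hab]
    refine (hy _ _ _ ?_).symm
    show v _ * v _ = v _
    rw [hv, hv, hv])
  refine ⟨φ, fun z hz => ?_⟩
  rw [hφ z (hZ hz), hj z (hZ hz)]
  apply hy1
  show v _ ∈ Z0
  rwa [hv]

/-- A group isomorphism gives an isomorphism of structures. -/
def langEquiv {G : Type u} {H : Type w} [Group G] [Group H] (e : G ≃* H) :
    FirstOrder.Language.Equiv groupLang G H where
  toEquiv := e.toEquiv
  map_fun' := by
    intro n f x
    cases f with
    | mul => exact map_mul e _ _
    | inv => exact map_inv e _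
    | one => exact map_one e
  map_rel' := by
    intro n r x
    exact r.elim

theorem injective_of_equiv {G : Type u} {H : Type w} [Group G] [Group H] [Group.FG G] [Group.FG H]
    (hG : VirtuallyFree G) (hH : VirtuallyFree H) (hout : OutFinite G)
    (hE : ExistentiallyEquivalent G H) : ∃ φ : G →* H, Function.Injective φ := by
  obtain ⟨F0, hF0, h1, hF⟩ := key_claim hG hout
  obtain ⟨φ, hφ⟩ := exists_hom (H := H) hG (fun ψ h => (hE ψ h).1) F0 hF0 h1
  obtain ⟨ψ, hψ⟩ := exists_hom (H := G) hH (fun χ h => (hE χ h).2) (φ '' F0) (hF0.image _) (by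
    rintro ⟨x, hx, h⟩
    exact hφ x hx h)
  have := hF (ψ.comp φ) (fun f hf => hψ _ ⟨f, hf, rfl⟩)
  exact ⟨φ, Function.Injective.of_comp (f := ψ) this⟩

end VF

/-- Two finitely generated co-Hopfian virtually free groups with finite outer
automorphism groups are ∃-equivalent iff elementarily equivalent iff isomorphic. -/
theorem coHopfian_outFinite_existEquiv_iff_elemEquiv_iff_iso
    (G : Type*) (G' : Type*) [Group G] [Group G']
    (hfg : Group.FG G) (hfg' : Group.FG G')
    (hvf : VirtuallyFree G) (hvf' : VirtuallyFree G')
    (hco : CoHopfian G) (hco' : CoHopfian G')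
    (hout : OutFinite G) (hout' : OutFinite G') :
    List.TFAE [ExistentiallyEquivalent G G', G ≅[groupLang] G', Nonempty (G ≃* G')] := by
  tfae_have 2 → 1 := fun h φ _ => FirstOrder.Language.elementarilyEquivalent_iff.1 h φ
  tfae_have 3 → 2 := by
    rintro ⟨e⟩
    exact FirstOrder.Language.StrongHomClass.elementarilyEquivalent (VF.langEquiv e)
  tfae_have 1 → 3 := by
    intro h
    obtain ⟨φ, hφ⟩ := VF.injective_of_equiv hvf hvf' hout h
    obtain ⟨ψ, hψ⟩ := VF.injective_of_equiv hvf' hvf hout' (fun χ hχ => (h χ hχ).symm)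
    have hs : Function.Surjective (ψ.comp φ) := hco _ (hψ.comp hφ)
    have hs' : Function.Surjective ψ := Function.Surjective.of_comp (g := φ) hs
    exact ⟨(MulEquiv.ofBijective ψ ⟨hψ, hs'⟩).symm⟩
  tfae_finish
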